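/- Let q be a prime power, r ≥ 1, and let t ≥ 2 be an integer. Let f(X) = ∑_{i=0}^{M} A_i X^{q^{k_i}} ∈ F_{q^r}[X] with 0 = k_0 < k_1 < ⋯ < k_M, A_i ≠ 0 for all i, A_M = 1, k_i ≠ t for all i, and k_i ≥ t for all i ≥ 2. Suppose either t divides k_M and k_M ≥ 3t, or t does not divide k_M and k_M ≥ 2t − 1. Then f is not an exceptional scattered polynomial of index t; that is, f is scattered of index t over F_{q^{rm}} for only finitely many positive integers m. -/

import Mathlib

/-!
Let `k = 𝔽_q`, let `n` be the `q`-degree of `f`, and let `F` be an algebraic closure. It suffices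
that the curve `f(x) y^(q^t) = f(y) x^(q^t)` has, over every large field containing the coefficients
of `f`, a point off the lines `y = l x` with `l ∈ k`. Stepanov's method supplies such points as soon
as the curve has an absolutely irreducible component defined over that field. A component of more
than half the degree of the curve is the only one of its degree, so it is fixed by Frobenius.

Over `F(X)`, with `x = X` and `a = f(x) / x^(q^t)`, the solutions of `f(y) = a y^(q^t)` form a
`k`-space `V` with `q^n` elements, and a large component is a Galois orbit on `V` with more than
`q^n / 2` elements. At a place over `X = 0` the solutions of absolute value less than one form a
subspace `U` with `q^t` elements. The decomposition group moves every `w ∈ V \ U` through all of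
`w + U`, and, as `n - t = 1` or `n - t ∤ t`, no Galois-stable subspace lies strictly between `U`
and `V`.

If subspaces `S` and `T` have the property that each `w` outside of them is moved through all of
`w + S`, respectively `w + T`, then so do the conjugates of `S` and the sum `S + T`; moreover, some
orbit contains `(S + T) \ (S ∩ T)` unless one of `S`, `T` contains the other. Hence a maximal proper
such `S ⊇ U`, if it is not Galois-stable, satisfies `S + g S = V` for some `g`, and the resulting
orbit has at least `3/4 q^n` elements.

If `U` itself is Galois-stable, its elements turn out to be constant multiples of `X`. Then `t`
divides all exponents of `f`, hence `3 t ≤ n`, and `U` is replaced by `U + U'`, where `U'` is the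
analogue of `U` at a place over `X = ∞`: it is a proper subspace, its dimension being at most `2 t`.
-/

namespace ScatteredPolynomial

open Polynomial

/-! ### Stepanov's method -/

section WeightedMonomials

variable {F B : Type*} [Field F] [CommRing B] [Algebra F B] {x y z : B} {c d e m n : ℕ}

/-- The span of the monomials `x ^ i * y ^ j * z ^ k` with `j < d` and `k < e` whose weight
`i + c * (j + k)` is at most `m`. -/
def reducedSpan (F : Type*) {B : Type*} [Field F] [CommRing B] [Algebra F B] (x y z : B)
    (c d e m : ℕ) : Submodule F B :=
  Submodule.span F
    {b | ∃ i j k : ℕ, i + c * (j + k) ≤ m ∧ j < d ∧ k < e ∧ b = x ^ i * y ^ j * z ^ k}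

lemma reducedSpan_mono (h : m ≤ n) : reducedSpan F x y z c d e m ≤ reducedSpan F x y z c d e n :=
  Submodule.span_mono fun _ ⟨i, j, k, hw, hrest⟩ => ⟨i, j, k, hw.trans h, hrest⟩

lemma reducedSpan_le_span_range (m : ℕ) : reducedSpan F x y z c d e m ≤ Submodule.span F
    (Set.range fun a : Fin d × Fin e × Fin (m + 1) =>
      x ^ (a.2.2 : ℕ) * y ^ (a.1 : ℕ) * z ^ (a.2.1 : ℕ)) := by
  refine Submodule.span_mono ?_
  rintro _ ⟨i, j, k, hw, hj, hk, rfl⟩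
  exact ⟨(⟨j, hj⟩, ⟨k, hk⟩, ⟨i, by omega⟩), rfl⟩

instance : Module.Finite F (reducedSpan F x y z c d e m) :=
  have := Module.Finite.span_of_finite F (Set.finite_range
    fun a : Fin d × Fin e × Fin (m + 1) => x ^ (a.2.2 : ℕ) * y ^ (a.1 : ℕ) * z ^ (a.2.1 : ℕ))
  Submodule.finiteDimensional_of_le (reducedSpan_le_span_range m)

lemma finrank_reducedSpan_le (m : ℕ) :
    Module.finrank F (reducedSpan F x y z c d e m) ≤ d * e * (m + 1) := by
  have := Module.Finite.span_of_finite F (Set.finite_range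
    fun a : Fin d × Fin e × Fin (m + 1) => x ^ (a.2.2 : ℕ) * y ^ (a.1 : ℕ) * z ^ (a.2.1 : ℕ))
  refine (Submodule.finrank_mono (reducedSpan_le_span_range m)).trans
    ((finrank_range_le_card _).trans ?_)
  simp [mul_assoc]

lemma reducedSpan_le_comap_mulLeft {u : B} {W : Submodule F B}
    (h : ∀ i j k, i + c * (j + k) ≤ m → j < d → k < e → u * (x ^ i * y ^ j * z ^ k) ∈ W) :
    reducedSpan F x y z c d e m ≤ W.comap (LinearMap.mulLeft F u) := by
  refine Submodule.span_le.2 ?_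
  rintro _ ⟨i, j, k, hw, hj, hk, rfl⟩
  exact h i j k hw hj hk

lemma monomial_mem_reducedSpan_of_lt {k : ℕ} (hk : k < e)
    (hy : y ^ d ∈ reducedSpan F x y z c d 1 (c * d)) (i j : ℕ) (hw : i + c * (j + k) ≤ m) :
    x ^ i * y ^ j * z ^ k ∈ reducedSpan F x y z c d e m := by
  induction j using Nat.strong_induction_on generalizing i with
  | _ j ih =>
  by_cases hj : j < d
  · exact Submodule.subset_span ⟨i, j, k, hw, hj, hk, rfl⟩
  obtain ⟨s, rfl⟩ := Nat.exists_eq_add_of_le (not_lt.mp hj)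
  have hmul := reducedSpan_le_comap_mulLeft (u := x ^ i * y ^ s * z ^ k)
    (W := reducedSpan F x y z c d e m) (fun i' j' k' hw' hj' hk' => by
      obtain rfl : k' = 0 := by omega
      have := ih (j' + s) (by omega) (i + i') (by simp only [mul_add] at *; omega)
      convert this using 1; ring) hy
  rw [Submodule.mem_comap, LinearMap.mulLeft_apply] at hmul
  convert hmul using 1; ring

lemma monomial_mem_reducedSpan (hy : y ^ d ∈ reducedSpan F x y z c d 1 (c * d))
    (hz : z ^ e ∈ reducedSpan F x y z c d e (c * e)) (i j k : ℕ) (hw : i + c * (j + k) ≤ m) :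
    x ^ i * y ^ j * z ^ k ∈ reducedSpan F x y z c d e m := by
  induction k using Nat.strong_induction_on generalizing i j with
  | _ k ih =>
  by_cases hk : k < e
  · exact monomial_mem_reducedSpan_of_lt hk hy i j hw
  obtain ⟨s, rfl⟩ := Nat.exists_eq_add_of_le (not_lt.mp hk)
  have hmul := reducedSpan_le_comap_mulLeft (u := x ^ i * y ^ j * z ^ s)
    (W := reducedSpan F x y z c d e m) (fun i' j' k' hw' _ hk' => by
      have := ih (k' + s) (by omega) (i + i') (j + j') (by simp only [mul_add] at *; omega)
      convert this using 1; ring) hz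
  rw [Submodule.mem_comap, LinearMap.mulLeft_apply] at hmul
  convert hmul using 1; ring

lemma aeval_mul_mem {W : Submodule F B} {g : F[X]} {u : B}
    (h : ∀ i ≤ g.natDegree, x ^ i * u ∈ W) : aeval x g * u ∈ W := by
  rw [aeval_eq_sum_range, Finset.sum_mul]
  refine Submodule.sum_mem _ fun i hi => ?_
  rw [smul_mul_assoc]
  exact W.smul_mem _ (h i (Finset.mem_range_succ_iff.1 hi))

lemma aevalAeval_eq_sum_range (H : F[X][X]) (x y : B) :
    aevalAeval x y H = ∑ j ∈ Finset.range (H.natDegree + 1), aeval x (H.coeff j) * y ^ j := by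
  conv_lhs => rw [H.as_sum_range_C_mul_X_pow]
  simp

/-- The divided difference `(H(x, z) - H(x, y)) / (z - y)` of a bivariate polynomial, as an
expression defined without division. -/
noncomputable def dividedDiff (H : F[X][X]) (x y z : B) : B :=
  ∑ j ∈ Finset.range (H.natDegree + 1),
    aeval x (H.coeff j) * ∑ i ∈ Finset.range j, z ^ i * y ^ (j - 1 - i)

lemma dividedDiff_mul_sub (H : F[X][X]) (x y z : B) :
    dividedDiff H x y z * (z - y) = aevalAeval x z H - aevalAeval x y H := by
  rw [aevalAeval_eq_sum_range, aevalAeval_eq_sum_range, ← Finset.sum_sub_distrib, dividedDiff,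
    Finset.sum_mul]
  refine Finset.sum_congr rfl fun j _ => ?_
  rw [mul_assoc, (Commute.all z y).geom_sum₂_mul, mul_sub]

variable {H : F[X][X]}

lemma pow_natDegree_mem_reducedSpan (hm : H.Monic)
    (hc : ∀ j < H.natDegree, (H.coeff j).natDegree ≤ c) (hxy : aevalAeval x y H = 0) :
    y ^ H.natDegree ∈ reducedSpan F x y z c H.natDegree 1 (c * H.natDegree) := by
  rw [aevalAeval_eq_sum_range, Finset.sum_range_succ, hm.coeff_natDegree, map_one, one_mul] at hxy
  rw [eq_neg_of_add_eq_zero_right hxy]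
  refine Submodule.neg_mem _ (Submodule.sum_mem _ fun j hj => aeval_mul_mem fun i hi =>
    Submodule.subset_span ⟨i, j, 0, ?_, Finset.mem_range.1 hj, one_pos, by simp⟩)
  have hcj := hc j (Finset.mem_range.1 hj)
  have hmul : c * (j + 1) ≤ c * H.natDegree := Nat.mul_le_mul_left _ (Finset.mem_range.1 hj)
  simp only [mul_add, add_zero, mul_one] at *
  omega

lemma pow_pred_natDegree_mem_reducedSpan (hm : H.Monic) (hd : 0 < H.natDegree)
    (hc : ∀ j < H.natDegree, (H.coeff j).natDegree ≤ c) (hxyz : dividedDiff H x y z = 0) :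
    z ^ (H.natDegree - 1) ∈
      reducedSpan F x y z c H.natDegree (H.natDegree - 1) (c * (H.natDegree - 1)) := by
  obtain ⟨n, hn⟩ : ∃ n, H.natDegree = n + 1 := ⟨H.natDegree - 1, by omega⟩
  rw [dividedDiff, Finset.sum_range_succ, hm.coeff_natDegree, map_one, one_mul, hn,
    Finset.sum_range_succ (fun i => z ^ i * y ^ (n + 1 - 1 - i))] at hxyz
  rw [hn] at hc ⊢
  simp only [Nat.add_sub_cancel, Nat.sub_self, pow_zero, mul_one, ← add_assoc] at hc hxyz ⊢
  rw [eq_neg_of_add_eq_zero_right hxyz]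
  refine Submodule.neg_mem _ (add_mem (Submodule.sum_mem _ fun j hj => ?_)
    (Submodule.sum_mem _ fun i hi => Submodule.subset_span ?_))
  · rw [Finset.mul_sum]
    refine Submodule.sum_mem _ fun i hi => aeval_mul_mem fun a ha => Submodule.subset_span ?_
    rw [Finset.mem_range] at hi hj
    refine ⟨a, j - 1 - i, i, ?_, by omega, by omega, by ring⟩
    have hcj := hc j hj
    have hmul : c * (j - 1 - i + i + 1) ≤ c * n := Nat.mul_le_mul_left _ (by omega)
    rw [mul_add _ _ 1] at hmul
    omega
  · rw [Finset.mem_range] at hi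
    refine ⟨0, n - i, i, ?_, by omega, hi, by ring⟩
    rw [zero_add]
    exact Nat.mul_le_mul_left _ (by omega)

end WeightedMonomials

section CoordinateRing

variable {F : Type*} [Field F] {H : F[X][X]} {c m n : ℕ}

/-- The elements of weight at most `m` of the coordinate ring `F[X, Y] / (H)`, where the image of
`X` has weight `1` and that of `Y` has weight `c`. -/
noncomputable def weightSpan (H : F[X][X]) (c m : ℕ) : Submodule F (AdjoinRoot H) :=
  reducedSpan F (AdjoinRoot.of H X) (AdjoinRoot.root H) 0 c H.natDegree 1 m

instance : Module.Finite F (weightSpan H c m) :=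
  inferInstanceAs (Module.Finite F (reducedSpan ..))

lemma weightSpan_mono (h : m ≤ n) : weightSpan H c m ≤ weightSpan H c n := reducedSpan_mono h

lemma finrank_weightSpan_le (H : F[X][X]) (c m : ℕ) :
    Module.finrank F (weightSpan H c m) ≤ H.natDegree * (m + 1) := by
  rw [weightSpan]
  simpa only [mul_one] using
    finrank_reducedSpan_le (F := F) (x := AdjoinRoot.of H X) (y := AdjoinRoot.root H) (z := 0)
      (c := c) (d := H.natDegree) (e := 1) m

lemma aevalAeval_of_root (G : F[X][X]) :
    aevalAeval (AdjoinRoot.of H X) (AdjoinRoot.root H) G = AdjoinRoot.mk H G := by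
  have : (aevalAeval (AdjoinRoot.of H X) (AdjoinRoot.root H) : F[X][X] →ₐ[F] _) =
      (AdjoinRoot.mkₐ H).restrictScalars F := by
    ext <;> simp [AdjoinRoot.mkₐ] <;> rfl
  exact DFunLike.congr_fun this G

lemma monomial_mem_weightSpan (hm : H.Monic)
    (hc : ∀ j < H.natDegree, (H.coeff j).natDegree ≤ c) (i j : ℕ) (hw : i + c * j ≤ m) :
    AdjoinRoot.of H X ^ i * AdjoinRoot.root H ^ j ∈ weightSpan H c m := by
  rw [weightSpan]
  simpa using monomial_mem_reducedSpan (z := 0) (e := 1) (m := m)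
    (pow_natDegree_mem_reducedSpan hm hc (by rw [aevalAeval_of_root, AdjoinRoot.mk_self]))
    (by simp) i j 0 (by simpa using hw)

lemma algebraMap_mem_weightSpan (hm : H.Monic)
    (hc : ∀ j < H.natDegree, (H.coeff j).natDegree ≤ c) (a : F) :
    algebraMap F (AdjoinRoot H) a ∈ weightSpan H c m := by
  rw [Algebra.algebraMap_eq_smul_one]
  exact Submodule.smul_mem _ _ (by simpa using monomial_mem_weightSpan hm hc 0 0 (by simp))

lemma mul_mem_weightSpan (hm : H.Monic) (hc : ∀ j < H.natDegree, (H.coeff j).natDegree ≤ c)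
    {u v : AdjoinRoot H} (hu : u ∈ weightSpan H c m) (hv : v ∈ weightSpan H c n) :
    u * v ∈ weightSpan H c (m + n) := by
  have key : weightSpan H c m * weightSpan H c n ≤ weightSpan H c (m + n) := by
    rw [weightSpan, weightSpan, reducedSpan, reducedSpan, Submodule.span_mul_span,
      Submodule.span_le]
    rintro _ ⟨_, ⟨i, j, k, hw, -, hk, rfl⟩, _, ⟨i', j', k', hw', -, hk', rfl⟩, rfl⟩
    obtain ⟨rfl, rfl⟩ : k = 0 ∧ k' = 0 := by omega
    have := monomial_mem_weightSpan (m := m + n) hm hc (i + i') (j + j')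
      (by simp only [mul_add] at *; omega)
    rw [SetLike.mem_coe]
    convert this using 1
    ring
  exact key (Submodule.mul_mem_mul hu hv)

lemma prod_mem_weightSpan (hm : H.Monic) (hc : ∀ j < H.natDegree, (H.coeff j).natDegree ≤ c)
    {ι : Type*} (s : Finset ι) (f : ι → AdjoinRoot H) (hf : ∀ i ∈ s, f i ∈ weightSpan H c n) :
    ∏ i ∈ s, f i ∈ weightSpan H c (s.card * n) := by
  classical
  induction s using Finset.induction_on with
  | empty => simpa using monomial_mem_weightSpan hm hc 0 0 (by simp)
  | insert a s ha ih =>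
    rw [Finset.prod_insert ha, Finset.card_insert_of_notMem ha, add_mul, one_mul, add_comm]
    exact mul_mem_weightSpan hm hc (hf _ (Finset.mem_insert_self _ _))
      (ih fun i hi => hf i (Finset.mem_insert_of_mem hi))

lemma pow_mem_weightSpan (hm : H.Monic) (hc : ∀ j < H.natDegree, (H.coeff j).natDegree ≤ c)
    {u : AdjoinRoot H} (hu : u ∈ weightSpan H c n) (k : ℕ) : u ^ k ∈ weightSpan H c (k * n) := by
  simpa using prod_mem_weightSpan hm hc (Finset.range k) (fun _ => u) fun _ _ => hu

lemma linearIndependent_monomials (hm : H.Monic) (n : ℕ) :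
    LinearIndependent F fun a : Fin H.natDegree × Fin n =>
      AdjoinRoot.of H X ^ (a.2 : ℕ) * AdjoinRoot.root H ^ (a.1 : ℕ) := by
  have hli := ((basisMonomials F).smulTower (AdjoinRoot.powerBasis' hm).basis).linearIndependent
  convert hli.comp (fun a : Fin H.natDegree × Fin n => ((a.2 : ℕ), a.1)) fun a b hab => by
    simp_all [Prod.ext_iff, Fin.ext_iff] using 2 with a
  simp [Algebra.smul_def, AdjoinRoot.algebraMap_eq, coe_basisMonomials,
    monomial_one_right_eq_X_pow]

lemma natDegree_mul_le_finrank_weightSpan (hm : H.Monic) (n : ℕ) :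
    H.natDegree * (n + 1) ≤ Module.finrank F (weightSpan H c (n + c * H.natDegree)) := by
  have hcard := finrank_span_eq_card (linearIndependent_monomials hm (n + 1))
  simp only [Fintype.card_prod, Fintype.card_fin] at hcard
  rw [← hcard]
  refine Submodule.finrank_mono (Submodule.span_mono ?_)
  rintro _ ⟨⟨j, i⟩, rfl⟩
  refine ⟨i, j, 0, ?_, j.2, by simp, by simp⟩
  have hmul : c * (j : ℕ) ≤ c * H.natDegree := Nat.mul_le_mul_left _ j.2.le
  have hi := i.2
  simp only [add_zero]
  omega

lemma exists_mem_weightSpan_separating (hm : H.Monic)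
    (hc : ∀ j < H.natDegree, (H.coeff j).natDegree ≤ c) {φ ψ : AdjoinRoot H →ₐ[F] F}
    (hne : φ ≠ ψ) : ∃ u ∈ weightSpan H c (c + 1), ψ u = 0 ∧ φ u ≠ 0 := by
  suffices ∃ v ∈ weightSpan H c (c + 1), φ v ≠ ψ v by
    obtain ⟨v, hv, hne⟩ := this
    refine ⟨v - algebraMap F _ (ψ v), sub_mem hv (algebraMap_mem_weightSpan hm hc _), by simp, ?_⟩
    simpa [sub_eq_zero] using hne
  by_contra! hcon
  refine hne (AdjoinRoot.algHom_ext' (Polynomial.algHom_ext ?_) ?_)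
  · simpa using hcon _ (monomial_mem_weightSpan hm hc 1 0 (by simp))
  · simpa using hcon _ (monomial_mem_weightSpan hm hc 0 1 (by simp))

lemma exists_mem_weightSpan_interpolating (hm : H.Monic)
    (hc : ∀ j < H.natDegree, (H.coeff j).natDegree ≤ c) {ι : Type*} [Fintype ι] [DecidableEq ι]
    {φ : ι → AdjoinRoot H →ₐ[F] F} (hφ : Function.Injective φ) (i : ι) :
    ∃ u ∈ weightSpan H c (Fintype.card ι * (c + 1)), (fun k => φ k u) = Pi.single i 1 := by
  choose! u hu hu0 hu1 using fun k (hk : k ≠ i) =>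
    exists_mem_weightSpan_separating hm hc (hφ.ne hk.symm)
  set w := ∏ k ∈ Finset.univ.erase i, u k
  have hw : w ∈ weightSpan H c (Fintype.card ι * (c + 1)) :=
    weightSpan_mono (Nat.mul_le_mul_right _ Finset.card_erase_le)
      (prod_mem_weightSpan hm hc _ u fun k hk => hu k (Finset.ne_of_mem_erase hk))
  have hwi : φ i w ≠ 0 := by
    rw [map_prod]
    exact Finset.prod_ne_zero_iff.2 fun k hk => hu1 k (Finset.ne_of_mem_erase hk)
  refine ⟨(φ i w)⁻¹ • w, Submodule.smul_mem _ _ hw, ?_⟩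
  ext k
  rcases eq_or_ne k i with rfl | hk
  · simp [hwi]
  · have hwk : φ k w = 0 := by
      rw [map_prod]
      exact Finset.prod_eq_zero (Finset.mem_erase.2 ⟨hk, Finset.mem_univ k⟩) (hu0 k hk)
    simp [hwk, hk]

/-- Evaluation of the functions of weight at most `n` at a family of points of the curve. -/
noncomputable def weightSpanEval (H : F[X][X]) (c n : ℕ) {ι : Type*}
    (φ : ι → AdjoinRoot H →ₐ[F] F) : weightSpan H c n →ₗ[F] (ι → F) :=
  (LinearMap.pi fun i => (φ i).toLinearMap) ∘ₗ (weightSpan H c n).subtype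

lemma weightSpanEval_surjective (hm : H.Monic)
    (hc : ∀ j < H.natDegree, (H.coeff j).natDegree ≤ c) {ι : Type*} [Fintype ι]
    {φ : ι → AdjoinRoot H →ₐ[F] F} (hφ : Function.Injective φ)
    (hn : Fintype.card ι * (c + 1) ≤ n) : Function.Surjective (weightSpanEval H c n φ) := by
  classical
  rw [← LinearMap.range_eq_top, eq_top_iff, ← (Pi.basisFun F ι).span_eq, Submodule.span_le]
  rintro _ ⟨i, rfl⟩
  obtain ⟨u, hu, hui⟩ := exists_mem_weightSpan_interpolating hm hc hφ i
  exact ⟨⟨u, weightSpan_mono hn hu⟩, by rw [Pi.basisFun_apply]; exact hui⟩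

lemma finrank_weightSpan_le_finrank_ker_weightSpanEval [IsDomain (AdjoinRoot H)] (hm : H.Monic)
    (hc : ∀ j < H.natDegree, (H.coeff j).natDegree ≤ c) {T : AdjoinRoot H} (hT : T ≠ 0)
    (hTm : T ∈ weightSpan H c m) {ι : Type*} {φ : ι → AdjoinRoot H →ₐ[F] F}
    (hφT : ∀ i, φ i T = 0) :
    Module.finrank F (weightSpan H c n) ≤
      Module.finrank F (LinearMap.ker (weightSpanEval H c (m + n) φ)) := by
  let mulT : weightSpan H c n →ₗ[F] LinearMap.ker (weightSpanEval H c (m + n) φ) :=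
    LinearMap.codRestrict _ (LinearMap.restrict (LinearMap.mulLeft F T)
      fun v hv => mul_mem_weightSpan hm hc hTm hv) fun v => by
        ext i
        change φ i (T * v) = 0
        rw [map_mul, hφT, zero_mul]
  refine LinearMap.finrank_le_finrank_of_injective (f := mulT) fun u v huv => ?_
  have hmul : T * (u : AdjoinRoot H) = T * v :=
    congrArg (fun k : LinearMap.ker (weightSpanEval H c (m + n) φ) =>
      ((k : weightSpan H c (m + n)) : AdjoinRoot H)) huv
  exact Subtype.ext (mul_left_cancel₀ hT hmul)

lemma card_zeros_le [IsDomain (AdjoinRoot H)] (hm : H.Monic)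
    (hc : ∀ j < H.natDegree, (H.coeff j).natDegree ≤ c) {T : AdjoinRoot H} (hT : T ≠ 0)
    (hTm : T ∈ weightSpan H c m) {ι : Type*} [Fintype ι] {φ : ι → AdjoinRoot H →ₐ[F] F}
    (hφ : Function.Injective φ) (hφT : ∀ i, φ i T = 0) :
    Fintype.card ι ≤ H.natDegree * (m + c * H.natDegree) := by
  set n := Fintype.card ι * (c + 1)
  have hsurj := weightSpanEval_surjective (n := m + (n + c * H.natDegree)) hm hc hφ (by omega)
  have hrank := LinearMap.finrank_range_add_finrank_ker
    (weightSpanEval H c (m + (n + c * H.natDegree)) φ)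
  rw [LinearMap.range_eq_top.2 hsurj, finrank_top, Module.finrank_fintype_fun_eq_card] at hrank
  have hker := finrank_weightSpan_le_finrank_ker_weightSpanEval
    (n := n + c * H.natDegree) hm hc hT hTm hφT
  have hupper := finrank_weightSpan_le H c (m + (n + c * H.natDegree))
  have hlower := natDegree_mul_le_finrank_weightSpan (c := c) hm n
  have hsplit : H.natDegree * (m + (n + c * H.natDegree) + 1) =
      H.natDegree * (n + 1) + H.natDegree * (m + c * H.natDegree) := by ring
  omega

end CoordinateRing

section PowerSeries

variable {F : Type*} [Field F]

lemma exists_forall_X_pow_dvd_imp_eq_zero (W : Submodule F (PowerSeries F))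
    [FiniteDimensional F W] :
    ∃ n : ℕ, ∀ w ∈ W, (PowerSeries.X : PowerSeries F) ^ n ∣ w → w = 0 := by
  let N : ℕ →o (Submodule F W)ᵒᵈ :=
    { toFun := fun n => OrderDual.toDual
        (((Ideal.span {(PowerSeries.X : PowerSeries F) ^ n}).restrictScalars F).comap W.subtype)
      monotone' := fun a b hab => Submodule.comap_mono
        (Submodule.restrictScalars_le F |>.2 <|
          Ideal.span_singleton_le_span_singleton.2 (pow_dvd_pow _ hab)) }
  have hmem : ∀ n (w : W), w ∈ OrderDual.ofDual (N n) ↔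
      (PowerSeries.X : PowerSeries F) ^ n ∣ w := fun n w => Ideal.mem_span_singleton
  obtain ⟨n, hn⟩ := IsArtinian.monotone_stabilizes N
  refine ⟨n, fun w hw hdvd => PowerSeries.ext fun k => ?_⟩
  have hstab : (⟨w, hw⟩ : W) ∈ OrderDual.ofDual (N (max n (k + 1))) := by
    rw [← hn _ (le_max_left _ _), hmem]
    exact hdvd
  rw [hmem] at hstab
  exact PowerSeries.X_pow_dvd_iff.1 hstab k (by omega)

lemma exists_eq_X_pow_mul {ι : Type*} [Finite ι] {v : ι → PowerSeries F} (hv : v ≠ 0) :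
    ∃ (k : ℕ) (w : ι → PowerSeries F), (∀ i, v i = PowerSeries.X ^ k * w i) ∧
      ∃ i, PowerSeries.constantCoeff (w i) ≠ 0 := by
  obtain ⟨i₀, hi₀⟩ := Function.ne_iff.1 hv
  have : Nonempty ι := ⟨i₀⟩
  obtain ⟨i₁, hmin⟩ := Finite.exists_min fun i => (v i).order
  have hi₁ : v i₁ ≠ 0 := by
    rw [ne_eq, ← PowerSeries.order_eq_top, ← ne_eq, ← lt_top_iff_ne_top]
    exact (hmin i₀).trans_lt (lt_top_iff_ne_top.2 (mt PowerSeries.order_eq_top.1 hi₀))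
  have hdvd (i : ι) : (PowerSeries.X : PowerSeries F) ^ (v i₁).order.toNat ∣ v i := by
    rw [PowerSeries.X_pow_dvd_iff]
    refine fun m hm => PowerSeries.coeff_of_lt_order _ (lt_of_lt_of_le ?_ (hmin i))
    rw [← ENat.natCast_toNat (mt PowerSeries.order_eq_top.1 hi₁)]
    exact_mod_cast hm
  have hlead := PowerSeries.coeff_order hi₁
  generalize (v i₁).order.toNat = k at hdvd hlead
  choose w hw using hdvd
  rw [hw i₁, PowerSeries.coeff_X_pow_mul', if_pos le_rfl, Nat.sub_self] at hlead
  exact ⟨k, w, hw, i₁, by simpa using hlead⟩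

variable (p : ℕ) [Fact p.Prime] [CharP F p]

instance : CharP (PowerSeries F) p :=
  charP_of_injective_algebraMap (algebraMap F (PowerSeries F)).injective p

variable {p}

lemma pow_dvd_pow_char_pow_sub_C (w : PowerSeries F) (b : ℕ) :
    (PowerSeries.X : PowerSeries F) ^ p ^ b ∣
      w ^ p ^ b - PowerSeries.C (PowerSeries.constantCoeff w ^ p ^ b) := by
  rw [map_pow, ← sub_pow_char_pow]
  exact pow_dvd_pow_of_dvd (PowerSeries.X_dvd_iff.2 (by simp)) _


lemma eq_zero_of_sum_mul_pow_char_pow_eq_zero {ι : Type*} [Fintype ι] {f : ι → PowerSeries F}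
    (hf : LinearIndependent F f) :
    ∃ B : ℕ, ∀ b, B ≤ p ^ b → ∀ u : ι → PowerSeries F, ∑ i, f i * u i ^ p ^ b = 0 → u = 0 := by
  have := Module.Finite.span_of_finite F (Set.finite_range f)
  obtain ⟨B, hB⟩ := exists_forall_X_pow_dvd_imp_eq_zero (Submodule.span F (Set.range f))
  refine ⟨B, fun b hb u hu => ?_⟩
  by_contra hne
  obtain ⟨k, w, hw, i₁, hi₁⟩ := exists_eq_X_pow_mul hne
  have hsum : ∑ i, f i * w i ^ p ^ b = 0 := by
    refine (mul_eq_zero.1 ?_).resolve_left (pow_ne_zero (p ^ b)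
      (pow_ne_zero k (PowerSeries.X_ne_zero (R := F))))
    rw [← hu, Finset.mul_sum]
    refine Finset.sum_congr rfl fun i _ => ?_
    rw [hw i]
    ring
  let a : ι → F := fun i => PowerSeries.constantCoeff (w i) ^ p ^ b
  have hdvd : (PowerSeries.X : PowerSeries F) ^ B ∣ ∑ i, a i • f i := by
    have : ∑ i, a i • f i = -∑ i, f i * (w i ^ p ^ b - PowerSeries.C (a i)) := by
      simp only [mul_sub, Finset.sum_sub_distrib, hsum, zero_sub, neg_neg,
        PowerSeries.smul_eq_C_mul, mul_comm]
    rw [this, dvd_neg]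
    exact (pow_dvd_pow _ hb).trans
      (Finset.dvd_sum fun i _ => (pow_dvd_pow_char_pow_sub_C (w i) b).mul_left _)
  have hzero : ∑ i, a i • f i = 0 :=
    hB _ (Submodule.sum_mem _ fun i _ => Submodule.smul_mem _ _ (Submodule.subset_span ⟨i, rfl⟩))
      hdvd
  exact hi₁ (eq_zero_of_pow_eq_zero (Fintype.linearIndependent_iff.1 hf _ hzero i₁))

lemma exists_forall_sum_mul_pow_eq_zero_imp_eq_zero {R : Type*} [CommRing R] [Algebra F R]
    {ψ : R →ₐ[F] PowerSeries F} (hψ : Function.Injective ψ) {ι : Type*} [Fintype ι] {f : ι → R}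
    (hf : LinearIndependent F f) :
    ∃ B : ℕ, ∀ b, B ≤ p ^ b → ∀ u : ι → R, ∑ i, f i * u i ^ p ^ b = 0 → u = 0 := by
  obtain ⟨B, hB⟩ := eq_zero_of_sum_mul_pow_char_pow_eq_zero (p := p)
    (hf.map' ψ.toLinearMap (LinearMap.ker_eq_bot.2 hψ))
  refine ⟨B, fun b hb u hu => funext fun i => hψ ?_⟩
  rw [Pi.zero_apply, map_zero]
  refine congrFun (hB b hb (fun i => ψ (u i)) ?_) i
  simpa using congrArg ψ hu

end PowerSeries

section Branch

variable {F : Type*} [Field F]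

lemma constantCoeff_eval_C (P : (PowerSeries F)[X]) (y₀ : F) :
    PowerSeries.constantCoeff (P.eval (PowerSeries.C y₀)) =
      (P.map (PowerSeries.constantCoeff (R := F))).eval y₀ := by
  simpa using (eval_map_apply (PowerSeries.constantCoeff (R := F)) (p := P) (PowerSeries.C y₀)).symm

lemma exists_powerSeries_root {G : (PowerSeries F)[X]} (hG : G.Monic) {y₀ : F}
    (hroot : (G.map (PowerSeries.constantCoeff (R := F))).eval y₀ = 0)
    (hder : (G.map (PowerSeries.constantCoeff (R := F))).derivative.eval y₀ ≠ 0) :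
    ∃ a, G.IsRoot a := by
  obtain ⟨a, ha, -⟩ := HenselianRing.is_henselian
    (I := (Ideal.span {PowerSeries.X} : Ideal (PowerSeries F))) G hG (PowerSeries.C y₀)
    (by rw [Ideal.mem_span_singleton, PowerSeries.X_dvd_iff, constantCoeff_eval_C, hroot])
    (by
      refine IsUnit.map _ ?_
      rw [PowerSeries.isUnit_iff_constantCoeff, constantCoeff_eval_C, ← derivative_map]
      exact isUnit_iff_ne_zero.2 hder)
  exact ⟨a, ha⟩

lemma exists_injective_algHom_powerSeries {H : F[X][X]} (hm : H.Monic) [IsDomain (AdjoinRoot H)]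
    {x₀ y₀ : F} (hroot : H.evalEval x₀ y₀ = 0)
    (hder : (H.map (evalRingHom x₀)).derivative.eval y₀ ≠ 0) :
    ∃ ψ : AdjoinRoot H →ₐ[F] PowerSeries F, Function.Injective ψ := by
  let i : F[X] →ₐ[F] PowerSeries F := (coeToPowerSeries.algHom F).comp (taylorAlgHom x₀)
  have hi (g : F[X]) : i g = (taylor x₀ g : PowerSeries F) := by
    simp [i, coeToPowerSeries.algHom_apply]
  have hi_inj : Function.Injective i := fun a b hab => by
    rw [hi, hi] at hab
    exact taylor_injective x₀ (Polynomial.coe_injective F hab)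
  have hmap : (H.map (i : F[X] →+* PowerSeries F)).map (PowerSeries.constantCoeff (R := F)) =
      H.map (evalRingHom x₀) := by
    rw [map_map]
    congr 1
    ext <;> simp [hi]
  obtain ⟨a, ha⟩ := exists_powerSeries_root (y₀ := y₀) (hm.map (i : F[X] →+* PowerSeries F))
    (by rw [hmap, map_evalRingHom_eval, hroot]) (by rwa [hmap])
  rw [IsRoot, eval_map] at ha
  let ψ : AdjoinRoot H →ₐ[F] PowerSeries F := AdjoinRoot.liftAlgHom H i a ha
  have : Module.Finite F[X] (AdjoinRoot H) := hm.finite_adjoinRoot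
  refine ⟨ψ, (RingHom.injective_iff_ker_eq_bot _).2 (Ideal.eq_bot_of_comap_eq_bot (R := F[X]) ?_)⟩
  refine eq_bot_iff.2 fun g hg => hi_inj ?_
  rw [Ideal.mem_comap, RingHom.mem_ker] at hg
  rw [map_zero, ← hg]
  exact (AdjoinRoot.liftAlgHom_of (p := H) i a ha g).symm

end Branch

section AuxiliaryFunction

variable {F : Type*} [Field F] {H : F[X][X]} {c : ℕ}

lemma pow_mul_mem_reducedSpan {B : Type*} [CommRing B] [Algebra F B] {x y z : B} (hm : H.Monic)
    (hd : 0 < H.natDegree) (hc : ∀ j < H.natDegree, (H.coeff j).natDegree ≤ c)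
    (hxy : aevalAeval x y H = 0) (hxyz : dividedDiff H x y z = 0) {S l m i₁ i₂ j₁ j₂ : ℕ}
    (hi₁ : i₁ ≤ H.natDegree) (hi₂ : i₂ ≤ l) (hj₁ : j₁ ≤ H.natDegree) (hj₂ : j₂ ≤ m) :
    (x ^ i₂ * y ^ i₁) ^ S * (x ^ j₂ * z ^ j₁) ∈ reducedSpan F x y z c H.natDegree
      (H.natDegree - 1) ((l + c * H.natDegree) * S + m + c * H.natDegree) := by
  have hmem := monomial_mem_reducedSpan (m := (l + c * H.natDegree) * S + m + c * H.natDegree)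
    (pow_natDegree_mem_reducedSpan hm hc hxy) (pow_pred_natDegree_mem_reducedSpan hm hd hc hxyz)
    (i₂ * S + j₂) (i₁ * S) j₁ (by
      have h₁ : i₂ * S ≤ l * S := Nat.mul_le_mul_right _ hi₂
      have h₂ : c * (i₁ * S) ≤ c * (H.natDegree * S) :=
        Nat.mul_le_mul_left _ (Nat.mul_le_mul_right _ hi₁)
      have h₃ : c * j₁ ≤ c * H.natDegree := Nat.mul_le_mul_left _ hj₁
      simp only [mul_add, add_mul, mul_assoc] at *
      omega)
  convert hmem using 1
  ring

lemma exists_auxiliary_coeffs (hm : H.Monic) (hd : 0 < H.natDegree)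
    (hc : ∀ j < H.natDegree, (H.coeff j).natDegree ≤ c) {S l m : ℕ}
    (hcount : (H.natDegree - 1) * ((l + c * H.natDegree) * S + m + c * H.natDegree + 1) <
      H.natDegree * (l + 1) * (m + 1)) :
    ∃ a : Fin H.natDegree × Fin (l + 1) → Fin H.natDegree × Fin (m + 1) → F, a ≠ 0 ∧
      ∀ x y z : F, H.evalEval x y = 0 → H.evalEval x z = 0 → y ≠ z →
        ∑ i, ∑ j, a i j *
          ((x ^ (i.2 : ℕ) * y ^ (i.1 : ℕ)) ^ S * (x ^ (j.2 : ℕ) * z ^ (j.1 : ℕ))) = 0 := by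
  let Z := {v : F × F × F // H.evalEval v.1 v.2.1 = 0 ∧ H.evalEval v.1 v.2.2 = 0 ∧ v.2.1 ≠ v.2.2}
  let x : Z → F := fun v => v.1.1
  let y : Z → F := fun v => v.1.2.1
  let z : Z → F := fun v => v.1.2.2
  have happly (u w : Z → F) (v : Z) : aevalAeval u w H v = H.evalEval (u v) (w v) := by
    rw [← coe_aevalAeval_eq_evalEval]
    have : (Pi.evalAlgHom F (fun _ : Z => F) v).comp (aevalAeval u w) = aevalAeval (u v) (w v) := by
      ext <;> simp
    exact DFunLike.congr_fun this H
  have hxy : aevalAeval x y H = 0 := funext fun v => (happly x y v).trans v.2.1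
  have hxz : aevalAeval x z H = 0 := funext fun v => (happly x z v).trans v.2.2.1
  have hxyz : dividedDiff H x y z = 0 := by
    have hprod := dividedDiff_mul_sub H x y z
    rw [hxz, hxy, sub_zero] at hprod
    exact funext fun v =>
      (mul_eq_zero.1 (congrFun hprod v)).resolve_right (sub_ne_zero.2 v.2.2.2.symm)
  let w : (Fin H.natDegree × Fin (l + 1)) × (Fin H.natDegree × Fin (m + 1)) →
      reducedSpan F x y z c H.natDegree (H.natDegree - 1)
        ((l + c * H.natDegree) * S + m + c * H.natDegree) := fun k =>
    ⟨(x ^ (k.1.2 : ℕ) * y ^ (k.1.1 : ℕ)) ^ S * (x ^ (k.2.2 : ℕ) * z ^ (k.2.1 : ℕ)),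
      pow_mul_mem_reducedSpan hm hd hc hxy hxyz k.1.1.2.le (Fin.is_le _) k.2.1.2.le (Fin.is_le _)⟩
  have hdep : ¬ LinearIndependent F w := fun hli => by
    have hle := hli.fintype_card_le_finrank.trans (finrank_reducedSpan_le _)
    simp only [Fintype.card_prod, Fintype.card_fin] at hle
    have hlt := Nat.mul_lt_mul_of_pos_left hcount hd
    rw [← mul_assoc] at hlt
    refine absurd hle (not_le.2 (hlt.trans_eq ?_))
    ring
  obtain ⟨a, ha, k, hk⟩ := Fintype.not_linearIndependent_iff.1 hdep
  refine ⟨fun i j => a (i, j), fun h => hk (congrFun (congrFun h k.1) k.2),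
    fun x₁ y₁ z₁ hy hz hyz => ?_⟩
  have heval := congrFun (congrArg Subtype.val ha) ⟨(x₁, y₁, z₁), hy, hz, hyz⟩
  simpa [w, x, y, z, Fintype.sum_prod_type (α₁ := Fin H.natDegree × Fin (l + 1))] using heval

end AuxiliaryFunction

section RationalPoints

variable {F : Type*} [Field F] {H : F[X][X]} {c : ℕ}

/-- The point `(x, y)` of the curve `H = 0`, as a homomorphism on its coordinate ring. -/
noncomputable def pointHom {x y : F} (h : H.evalEval x y = 0) : AdjoinRoot H →ₐ[F] F :=
  AdjoinRoot.liftAlgHom H (aeval x) y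
    (by rw [← h, ← map_evalRingHom_eval, eval_map]; simp [coe_aeval_eq_evalRingHom])

@[simp]
lemma pointHom_of_X {x y : F} (h : H.evalEval x y = 0) : pointHom h (AdjoinRoot.of H X) = x :=
  (AdjoinRoot.liftAlgHom_of (p := H) _ _ _ X).trans (aeval_X x)

@[simp]
lemma pointHom_root {x y : F} (h : H.evalEval x y = 0) : pointHom h (AdjoinRoot.root H) = y :=
  AdjoinRoot.liftAlgHom_root (p := H) _ _ _

/-- Stepanov's auxiliary function, a linear combination of monomials in the coordinate functions
whose coefficients are `B`-th powers. -/
noncomputable def auxFunction (H : F[X][X]) {l m : ℕ}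
    (a : Fin H.natDegree × Fin l → Fin H.natDegree × Fin m → F) (B : ℕ) : AdjoinRoot H :=
  ∑ i, AdjoinRoot.of H X ^ (i.2 : ℕ) * AdjoinRoot.root H ^ (i.1 : ℕ) *
    (∑ j, a i j • (AdjoinRoot.of H X ^ (j.2 : ℕ) * AdjoinRoot.root H ^ (j.1 : ℕ))) ^ B

lemma monomial_mem_weightSpan_of_le (hm : H.Monic)
    (hc : ∀ j < H.natDegree, (H.coeff j).natDegree ≤ c) {l : ℕ}
    (i : Fin H.natDegree × Fin (l + 1)) :
    AdjoinRoot.of H X ^ (i.2 : ℕ) * AdjoinRoot.root H ^ (i.1 : ℕ) ∈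
      weightSpan H c (l + c * H.natDegree) :=
  monomial_mem_weightSpan hm hc _ _ (add_le_add (Fin.is_le _) (Nat.mul_le_mul_left _ i.1.2.le))

lemma auxFunction_mem_weightSpan (hm : H.Monic)
    (hc : ∀ j < H.natDegree, (H.coeff j).natDegree ≤ c) {l m : ℕ}
    (a : Fin H.natDegree × Fin (l + 1) → Fin H.natDegree × Fin (m + 1) → F) (B : ℕ) :
    auxFunction H a B ∈
      weightSpan H c (l + c * H.natDegree + B * (m + c * H.natDegree)) := by
  refine Submodule.sum_mem _ fun i _ =>
    mul_mem_weightSpan hm hc (monomial_mem_weightSpan_of_le hm hc i) ?_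
  exact pow_mem_weightSpan hm hc (Submodule.sum_mem _ fun j _ =>
    Submodule.smul_mem _ (a i j) (monomial_mem_weightSpan_of_le hm hc j)) B

variable {p : ℕ} [Fact p.Prime] [CharP F p]

lemma map_auxFunction_pow {l m : ℕ}
    (a : Fin H.natDegree × Fin l → Fin H.natDegree × Fin m → F) (s b : ℕ)
    {φ : AdjoinRoot H →ₐ[F] F} {x y : F} (hx : φ (AdjoinRoot.of H X) = x)
    (hy : φ (AdjoinRoot.root H) = y) (hxfix : x ^ p ^ (s + b) = x) :
    φ (auxFunction H a (p ^ b)) ^ p ^ s = ∑ i, ∑ j, a i j ^ p ^ (s + b) *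
      ((x ^ (i.2 : ℕ) * y ^ (i.1 : ℕ)) ^ p ^ s *
        (x ^ (j.2 : ℕ) * (y ^ p ^ (s + b)) ^ (j.1 : ℕ))) := by
  simp only [auxFunction, map_sum, map_mul, map_pow, map_smul, hx, hy, sum_pow_char_pow,
    smul_eq_mul]
  refine Finset.sum_congr rfl fun i _ => ?_
  rw [mul_pow, sum_pow_char_pow, Finset.mul_sum]
  refine Finset.sum_congr rfl fun j _ => ?_
  rw [← pow_mul, ← pow_add, add_comm b s, mul_pow (a i j), mul_pow (x ^ (j.2 : ℕ)),
    pow_right_comm x (j.2 : ℕ), hxfix, pow_right_comm y (j.1 : ℕ)]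
  ring

lemma exists_auxFunction_coeffs_ne_zero (hm : H.Monic) [IsDomain (AdjoinRoot H)]
    {x₀ y₀ : F} (hroot : H.evalEval x₀ y₀ = 0)
    (hder : (H.map (evalRingHom x₀)).derivative.eval y₀ ≠ 0) (l : ℕ) :
    ∃ B : ℕ, ∀ b, B ≤ p ^ b → ∀ {m : ℕ}
      (a : Fin H.natDegree × Fin l → Fin H.natDegree × Fin m → F), a ≠ 0 →
        auxFunction H a (p ^ b) ≠ 0 := by
  obtain ⟨ψ, hψ⟩ := exists_injective_algHom_powerSeries hm hroot hder
  obtain ⟨B, hB⟩ := exists_forall_sum_mul_pow_eq_zero_imp_eq_zero (p := p) hψ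
    (linearIndependent_monomials hm l)
  refine ⟨B, fun b hb m a ha h0 => ha ?_⟩
  funext i
  exact funext (Fintype.linearIndependent_iff.1 (linearIndependent_monomials hm m) (a i)
    (congrFun (hB b hb _ h0) i))

lemma exists_separable_fiber_point [IsAlgClosed F] (hm : H.Monic) (hd : 0 < H.natDegree) {x₀ : F}
    (hsep : (H.map (evalRingHom x₀)).Separable) :
    ∃ y₀, H.evalEval x₀ y₀ = 0 ∧ (H.map (evalRingHom x₀)).derivative.eval y₀ ≠ 0 := by
  obtain ⟨y₀, hy₀⟩ := IsAlgClosed.exists_root (H.map (evalRingHom x₀)) (by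
    rw [hm.degree_map, degree_eq_natDegree hm.ne_zero]
    exact_mod_cast hd.ne')
  exact ⟨y₀, by rwa [← map_evalRingHom_eval], by
    simpa using hsep.aeval_derivative_ne_zero (x := y₀) (by simpa using hy₀)⟩

lemma card_moved_points_le [IsAlgClosed F] (hm : H.Monic) (hd : 0 < H.natDegree)
    (hirr : Irreducible H) {x₀ : F} (hsep : (H.map (evalRingHom x₀)).Separable)
    (hc : ∀ j < H.natDegree, (H.coeff j).natDegree ≤ c) (l : ℕ) :
    ∃ B : ℕ, ∀ s b m : ℕ, B ≤ p ^ b →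
      (H.natDegree - 1) * ((l + c * H.natDegree) * p ^ s + m + c * H.natDegree + 1) <
        H.natDegree * (l + 1) * (m + 1) →
      ∀ P : Finset (F × F), (∀ v ∈ P, H.evalEval v.1 v.2 = 0 ∧ v.1 ^ p ^ (s + b) = v.1 ∧
        v.2 ^ p ^ (s + b) ≠ v.2 ∧ H.evalEval v.1 (v.2 ^ p ^ (s + b)) = 0) →
      P.card ≤ H.natDegree *
        (l + c * H.natDegree + p ^ b * (m + c * H.natDegree) + c * H.natDegree) := by
  have : IsDomain (AdjoinRoot H) := AdjoinRoot.isDomain_of_prime hirr.prime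
  obtain ⟨y₀, hroot, hder⟩ := exists_separable_fiber_point hm hd hsep
  obtain ⟨B, hB⟩ := exists_auxFunction_coeffs_ne_zero (p := p) hm hroot hder (l + 1)
  refine ⟨B, fun s b m hb hcount P hP => ?_⟩
  obtain ⟨a, ha, hvanish⟩ := exists_auxiliary_coeffs hm hd hc hcount
  have hpos : 0 < p ^ (s + b) := pow_pos (Fact.out : p.Prime).pos _
  choose ρ hρ using fun u : F => IsAlgClosed.exists_pow_nat_eq u hpos
  have hρa : (fun i j => ρ (a i j)) ≠ 0 := fun h => ha <| by
    funext i j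
    rw [← hρ (a i j), congrFun (congrFun h i) j]
    exact zero_pow hpos.ne'
  let φ : P → AdjoinRoot H →ₐ[F] F := fun v => pointHom (hP v v.2).1
  have hφ : Function.Injective φ := fun v w hvw => Subtype.ext <| Prod.ext
    (by simpa [φ] using DFunLike.congr_fun hvw (AdjoinRoot.of H X))
    (by simpa [φ] using DFunLike.congr_fun hvw (AdjoinRoot.root H))
  have hcard := card_zeros_le hm hc (hB b hb _ hρa) (auxFunction_mem_weightSpan hm hc _ _) hφ
    fun v => by
      obtain ⟨hv, hfix, hmoved, himage⟩ := hP v v.2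
      refine eq_zero_of_pow_eq_zero (n := p ^ s) ?_
      rw [map_auxFunction_pow _ s b (pointHom_of_X hv) (pointHom_root hv) hfix]
      simp only [hρ]
      exact hvanish _ _ _ hv himage hmoved.symm
  rwa [Fintype.card_coe] at hcard

end RationalPoints

section PointCount

lemma exists_stepanov_parameter (d c C k : ℕ) (hd : 0 < d) :
    ∃ S₀ : ℕ, ∀ S ≥ S₀, ∃ m : ℕ,
      (d - 1) * ((4 * c * d * d + 1 + c * d) * S + m + c * d + 1) <
        d * (4 * c * d * d + 1 + 1) * (m + 1) ∧
      ∀ B ≥ 1, d * (4 * c * d * d + 1 + c * d + B * (m + c * d) + c * d) + C ≤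
        d * (S * B - k) := by
  obtain ⟨d, rfl⟩ : ∃ d', d = d' + 1 := ⟨d - 1, by omega⟩
  set D := c * (d + 1) with hD
  set l := 4 * c * (d + 1) * (d + 1) + 1 with hl
  have hlD : l = 4 * D * (d + 1) + 1 := by rw [hl, hD]; ring
  refine ⟨2 * (d + 1) * (l + 3 * D + k + C + 1), fun S hS => ?_⟩
  obtain ⟨g, hgS, hg⟩ : ∃ g, 2 * (d + 1) * g ≤ S ∧ l + 3 * D + k + C + 1 ≤ g :=
    ⟨S / (2 * (d + 1)), Nat.mul_div_le _ _, by
      rwa [Nat.le_div_iff_mul_le (by omega), mul_comm]⟩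
  have hg2 : 2 * g ≤ S := hgS.trans' (Nat.mul_le_mul_right _ (by omega))
  obtain ⟨m, rfl⟩ : ∃ m, S = m + 1 + g := ⟨S - g - 1, by omega⟩
  refine ⟨m, ?_, fun B hB => ?_⟩
  · rw [Nat.add_sub_cancel]
    have hm := Nat.mul_le_mul_left (l + D) (show 2 * d * g ≤ m + 1 by nlinarith)
    have hdD : d * D ≤ d * D * (m + 1) := Nat.le_mul_of_pos_right _ m.succ_pos
    rw [hlD] at hm ⊢
    nlinarith [Nat.zero_le (D * m)]
  · have hsub : l + D + B * (m + D) + D + C ≤ (m + 1 + g) * B - k := by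
      refine Nat.le_sub_of_add_le ?_
      nlinarith
    nlinarith

variable {F : Type*} [Field F] {p : ℕ} [Fact p.Prime] [CharP F p] {H : F[X][X]}

lemma exists_finset_pow_char_pow_eq_self (F : Type*) [Field F] [IsAlgClosed F] [CharP F p] {n : ℕ}
    (hn : n ≠ 0) : ∃ s : Finset F, s.card = p ^ n ∧ ∀ x, x ∈ s ↔ x ^ p ^ n = x := by
  classical
  have hpn : 1 < p ^ n := Nat.one_lt_pow hn (Fact.out : p.Prime).one_lt
  have hsep : (X ^ p ^ n - X : F[X]).Separable := galois_poly_separable p _ (dvd_pow_self p hn)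
  refine ⟨(X ^ p ^ n - X : F[X]).roots.toFinset, ?_, fun x => ?_⟩
  · rw [Multiset.toFinset_card_of_nodup (nodup_roots hsep),
      ← (IsAlgClosed.splits _).natDegree_eq_card_roots,
      FiniteField.X_pow_card_sub_X_natDegree_eq F hpn]
  · simp [FiniteField.X_pow_card_sub_X_ne_zero F hpn, sub_eq_zero]

lemma exists_finset_points [IsAlgClosed F] (hm : H.Monic) {s : Finset F}
    (hsep : ∀ x ∈ s, (H.map (evalRingHom x)).Separable) :
    ∃ P : Finset (F × F), P.card = s.card * H.natDegree ∧
      ∀ v, v ∈ P ↔ v.1 ∈ s ∧ H.evalEval v.1 v.2 = 0 := by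
  classical
  refine ⟨(s.sigma fun x => (H.map (evalRingHom x)).roots.toFinset).map
    (Equiv.sigmaEquivProd F F).toEmbedding, ?_, fun v => ?_⟩
  · rw [Finset.card_map, Finset.card_sigma, Finset.sum_const_nat fun x hx => ?_]
    rw [Multiset.toFinset_card_of_nodup (nodup_roots (hsep x hx)),
      ← (IsAlgClosed.splits _).natDegree_eq_card_roots, hm.natDegree_map]
  · rw [Finset.mem_map_equiv]
    simp [(hm.map _).ne_zero, map_evalRingHom_eval]

lemma evalEval_pow_char_pow_eq_zero {n : ℕ}
    (hfix : H.map (mapRingHom (iterateFrobenius F p n)) = H) {x y : F} (hx : x ^ p ^ n = x)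
    (hxy : H.evalEval x y = 0) : H.evalEval x (y ^ p ^ n) = 0 := by
  have := map_mapRingHom_evalEval (iterateFrobenius F p n) H x y
  rwa [hfix, hxy, map_zero, iterateFrobenius_def, iterateFrobenius_def, hx] at this

theorem exists_finset_rational_points [IsAlgClosed F] (hm : H.Monic) (hd : 0 < H.natDegree)
    (hirr : Irreducible H) {bad : Finset F} (hsep : ∀ x ∉ bad, (H.map (evalRingHom x)).Separable)
    (C : ℕ) :
    ∃ n₀ : ℕ, ∀ n ≥ n₀, H.map (mapRingHom (iterateFrobenius F p n)) = H →
      ∃ P : Finset (F × F), C ≤ P.card ∧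
        ∀ v ∈ P, v.1 ^ p ^ n = v.1 ∧ v.2 ^ p ^ n = v.2 ∧ H.evalEval v.1 v.2 = 0 := by
  classical
  have hp : 1 < p := (Fact.out : p.Prime).one_lt
  obtain ⟨c, hc⟩ : ∃ c, ∀ j < H.natDegree, (H.coeff j).natDegree ≤ c :=
    ⟨_, fun j hj => Finset.le_sup (f := fun j => (H.coeff j).natDegree) (Finset.mem_range.2 hj)⟩
  have : Infinite F := IsAlgClosed.instInfinite
  obtain ⟨x₀, hx₀⟩ := Infinite.exists_notMem_finset bad
  obtain ⟨B, hB⟩ := card_moved_points_le (p := p) hm hd hirr (hsep x₀ hx₀) hc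
    (4 * c * H.natDegree * H.natDegree + 1)
  obtain ⟨S, hS⟩ := exists_stepanov_parameter H.natDegree c C bad.card hd
  refine ⟨S + B + 1, fun n hn hfix => ?_⟩
  obtain ⟨b, rfl⟩ := Nat.exists_eq_add_of_le (show S ≤ n by omega)
  obtain ⟨m, hcount, hbound⟩ := hS (p ^ S) (Nat.lt_pow_self hp).le
  have hmoved := hB S b m ((Nat.lt_pow_self hp).le.trans' (by omega)) hcount
  obtain ⟨fixed, hcard_fixed, hmem_fixed⟩ :=
    exists_finset_pow_char_pow_eq_self (p := p) F (n := S + b) (by omega)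
  obtain ⟨P, hcard, hmem⟩ := exists_finset_points hm (s := fixed \ bad)
    fun x hx => hsep x (Finset.mem_sdiff.1 hx).2
  have hfixed (v : F × F) (hv : v ∈ P) : v.1 ^ p ^ (S + b) = v.1 ∧ H.evalEval v.1 v.2 = 0 :=
    ⟨(hmem_fixed _).1 (Finset.mem_sdiff.1 ((hmem v).1 hv).1).1, ((hmem v).1 hv).2⟩
  refine ⟨P.filter fun v => v.2 ^ p ^ (S + b) = v.2, ?_, fun v hv => ?_⟩
  · have hmoved_le := hmoved (P.filter fun v => ¬ v.2 ^ p ^ (S + b) = v.2) fun v hv => by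
      obtain ⟨hvP, hne⟩ := Finset.mem_filter.1 hv
      obtain ⟨hx, hxy⟩ := hfixed v hvP
      exact ⟨hxy, hx, hne, evalEval_pow_char_pow_eq_zero hfix hx hxy⟩
    have hsplit := Finset.card_filter_add_card_filter_not (s := P)
      fun v => v.2 ^ p ^ (S + b) = v.2
    have hP : H.natDegree * (p ^ S * p ^ b - bad.card) ≤ P.card := by
      rw [hcard, mul_comm, ← pow_add, ← hcard_fixed]
      exact Nat.mul_le_mul_right _ (Finset.le_card_sdiff _ _)
    have := hbound (p ^ b) (Nat.one_le_pow _ _ hp.le)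
    omega
  · obtain ⟨hvP, hy⟩ := Finset.mem_filter.1 hv
    exact ⟨(hfixed v hvP).1, hy, (hfixed v hvP).2⟩

end PointCount

/-! ### Places and their decomposition groups -/

section Nonarchimedean

variable {R : Type*} [CommRing R]

lemma map_sub_le_max_of_isNonarchimedean {v : AbsoluteValue R ℝ} (hv : IsNonarchimedean v)
    (a b : R) : v (a - b) ≤ max (v a) (v b) := by
  simpa [sub_eq_add_neg] using hv a (-b)

lemma sum_lt_of_isNonarchimedean {v : AbsoluteValue R ℝ} (hv : IsNonarchimedean v) {ι : Type*}
    {s : Finset ι} {g : ι → R} {B : ℝ} (hB : 0 < B) (h : ∀ i ∈ s, v (g i) < B) :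
    v (∑ i ∈ s, g i) < B := by
  obtain rfl | hs := s.eq_empty_or_nonempty
  · simpa using hB
  · obtain ⟨i, hi, hle⟩ := hv.finset_image_add_of_nonempty g hs
    exact hle.trans_lt (h i hi)

end Nonarchimedean

section SpectralNorm

variable (k L : Type*) [NontriviallyNormedField k] [IsUltrametricDist k] [CompleteSpace k]
  [Field L] [Algebra k L] [Algebra.IsAlgebraic k L]

/-- The spectral norm, the unique extension of the absolute value of a complete field `k` to an
algebraic extension `L`, as an absolute value. -/
noncomputable def spectralAbs : AbsoluteValue L ℝ where
  toFun := spectralNorm k L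
  map_mul' := map_mul (spectralMulAlgNorm k L)
  nonneg' := spectralNorm_nonneg
  eq_zero' y :=
    ⟨fun h ↦ eq_zero_of_map_spectralNorm_eq_zero h (Algebra.IsAlgebraic.isAlgebraic y),
      fun h ↦ h ▸ spectralNorm_zero⟩
  add_le' a b := (isNonarchimedean_spectralNorm a b).trans
    (max_le_add_of_nonneg (spectralNorm_nonneg _) (spectralNorm_nonneg _))

variable {k L}

lemma isNonarchimedean_spectralAbs : IsNonarchimedean (spectralAbs k L) :=
  isNonarchimedean_spectralNorm

lemma spectralAbs_algebraMap (x : k) : spectralAbs k L (algebraMap k L x) = ‖x‖ :=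
  spectralNorm_extends x

lemma spectralAbs_algEquiv (σ : L ≃ₐ[k] L) (y : L) : spectralAbs k L (σ y) = spectralAbs k L y :=
  (spectralNorm_eq_of_equiv σ y).symm

lemma spectralAbs_pow_natDegree (y : L) :
    spectralAbs k L y ^ (minpoly k y).natDegree = ‖(minpoly k y).coeff 0‖ := by
  have hdeg : ((minpoly k y).natDegree : ℝ) ≠ 0 :=
    Nat.cast_ne_zero.2 (minpoly.natDegree_pos (Algebra.IsIntegral.isIntegral y)).ne'
  change spectralNorm k L y ^ _ = _
  rw [spectralNorm.spectralNorm_eq_norm_coeff_zero_rpow, ← Real.rpow_natCast,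
    ← Real.rpow_mul (norm_nonneg _), one_div, inv_mul_cancel₀ hdeg, Real.rpow_one]

/-- If `y` were at distance `≥ 1` from all constants, then so would be its value at any monic
polynomial over the constants from `0`; but the minimal polynomial of `y` is congruent to one. -/
lemma exists_spectralAbs_sub_lt_one {F : Type*} [Field F] [IsAlgClosed F] {c : F →+* k}
    (hres : ∀ x : k, ‖x‖ ≤ 1 → ∃ a : F, ‖x - c a‖ < 1) {y : L} (hy : spectralAbs k L y ≤ 1) :
    ∃ a : F, spectralAbs k L (y - algebraMap k L (c a)) < 1 := by
  set P := minpoly k y with hP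
  have hPm : P.Monic := minpoly.monic (Algebra.IsIntegral.isIntegral y)
  choose a ha using fun i ↦ hres _ ((spectralValue_le_one_iff hPm).1 hy i)
  set φ : F →+* L := (algebraMap k L).comp c with hφ
  let R : F[X] := X ^ P.natDegree + ∑ i ∈ Finset.range P.natDegree, C (a i) * X ^ i
  have hRm : R.Monic := monic_X_pow_add ((degree_sum_le _ _).trans_lt
    ((Finset.sup_lt_iff (WithBot.bot_lt_coe _)).2 fun i hi ↦
      (degree_C_mul_X_pow_le _ _).trans_lt (by exact_mod_cast Finset.mem_range.1 hi)))
  have hR : R.eval₂ φ y =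
      ∑ i ∈ Finset.range P.natDegree, -(algebraMap k L (P.coeff i - c (a i)) * y ^ i) := by
    have hroot : y ^ P.natDegree +
        ∑ i ∈ Finset.range P.natDegree, algebraMap k L (P.coeff i) * y ^ i = 0 := by
      rw [← minpoly.aeval k y, aeval_eq_sum_range, Finset.sum_range_succ, add_comm]
      simp [Algebra.smul_def, ← hP, hPm.coeff_natDegree]
    simp only [map_sub, sub_mul, Finset.sum_neg_distrib, Finset.sum_sub_distrib]
    have heval : R.eval₂ φ y = y ^ P.natDegree +
        ∑ i ∈ Finset.range P.natDegree, algebraMap k L (c (a i)) * y ^ i := by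
      simp [R, eval₂_finsetSum, hφ]
    linear_combination heval + hroot
  have hlt : spectralAbs k L (R.eval₂ φ y) < 1 := by
    rw [hR]
    refine sum_lt_of_isNonarchimedean isNonarchimedean_spectralAbs one_pos fun i _ ↦ ?_
    rw [AbsoluteValue.map_neg, map_mul, map_pow, spectralAbs_algebraMap]
    exact mul_lt_one_of_nonneg_of_lt_one_left (norm_nonneg _) (ha i)
      (pow_le_one₀ (AbsoluteValue.nonneg _ _) hy)
  by_contra! hfar
  rw [(IsAlgClosed.splits R).eq_prod_roots_of_monic hRm, ← coe_eval₂RingHom, map_multiset_prod,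
    map_multiset_prod, Multiset.map_map, Multiset.map_map] at hlt
  exact hlt.not_ge (Multiset.one_le_prod_map fun b _ ↦ by simpa [hφ] using hfar b)

end SpectralNorm

section GaloisRestriction

variable (k L E Ω : Type*) [Field k] [Field L] [Field E] [Field Ω] [Algebra E k] [Algebra k L]
  [Algebra E L] [IsScalarTower E k L] [Algebra E Ω] [Algebra Ω L] [IsScalarTower E Ω L] [Normal E Ω]

/-- The restriction `Gal(L/k) → Gal(Ω/E)` for extensions `E ⊆ k` and `Ω ⊆ L`, with `Ω/E` normal. -/
noncomputable def galRestrict : (L ≃ₐ[k] L) →* (Ω ≃ₐ[E] Ω) :=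
  (AlgEquiv.restrictNormalHom Ω).comp (AlgEquiv.restrictScalarsHom E)

variable {k L E Ω}

lemma algebraMap_galRestrict (σ : L ≃ₐ[k] L) (y : Ω) :
    algebraMap Ω L (galRestrict k L E Ω σ y) = σ (algebraMap Ω L y) :=
  AlgEquiv.restrictNormal_commutes (σ.restrictScalars E) Ω y

lemma card_orbit_range_galRestrict (y : Ω) :
    Nat.card (MulAction.orbit (galRestrict k L E Ω).range y) =
      Nat.card (MulAction.orbit (L ≃ₐ[k] L) (algebraMap Ω L y)) := by
  have himage : MulAction.orbit (L ≃ₐ[k] L) (algebraMap Ω L y) =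
      algebraMap Ω L '' MulAction.orbit (galRestrict k L E Ω).range y := by
    ext z
    constructor
    · rintro ⟨σ, rfl⟩
      exact ⟨_, ⟨⟨_, σ, rfl⟩, rfl⟩, algebraMap_galRestrict σ y⟩
    · rintro ⟨_, ⟨⟨_, σ, rfl⟩, rfl⟩, rfl⟩
      exact ⟨σ, (algebraMap_galRestrict σ y).symm⟩
  rw [himage, Nat.card_image_of_injective (algebraMap Ω L).injective]

lemma card_orbit_eq_natDegree_minpoly [Normal k L] {y : L} (hy : IsSeparable k y) :
    Nat.card (MulAction.orbit (L ≃ₐ[k] L) y) = (minpoly k y).natDegree := by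
  have horbit : MulAction.orbit (L ≃ₐ[k] L) y = (minpoly k y).rootSet L := by
    ext z
    rw [mem_rootSet_of_ne (minpoly.ne_zero (Normal.isIntegral inferInstance y))]
    exact ⟨by rintro ⟨σ, rfl⟩; simpa using minpoly.aeval_algHom k σ.toAlgHom y,
      fun hz ↦ minpoly.exists_algEquiv_of_root'
        (Normal.isIntegral inferInstance y).isAlgebraic hz⟩
  rw [horbit, Nat.card_eq_fintype_card,
    card_rootSet_eq_natDegree hy (Normal.splits inferInstance y)]

end GaloisRestriction

section Place

variable (F E Ω : Type*) [Field F] [Field E] [Field Ω] [Algebra F Ω] [Algebra E Ω]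

/-- A place of the extension `Ω/E` with residue field `F`: a nonarchimedean absolute value `v` with
a group `D` of automorphisms preserving it. The field `exists_pow_card_orbit` says that
the `D`-orbits are the full sets of local conjugates: the norm of `y` down to the completion of
`E`, a field whose value group is generated by `ρ`, has absolute value `v y ^ #(D • y)`. -/
structure Place where
  v : AbsoluteValue Ω ℝ
  isNonarchimedean : IsNonarchimedean v
  D : Subgroup (Ω ≃ₐ[E] Ω)
  map_apply : ∀ σ ∈ D, ∀ y, v (σ y) = v y
  map_algebraMap : ∀ a : F, a ≠ 0 → v (algebraMap F Ω a) = 1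
  exists_residue : ∀ y, v y ≤ 1 → ∃ a : F, v (y - algebraMap F Ω a) < 1
  ρ : ℝ
  ρ_pos : 0 < ρ
  ρ_lt_one : ρ < 1
  exists_pow_card_orbit : ∀ y, y ≠ 0 → IsSeparable E y →
    ∃ n : ℤ, v y ^ Nat.card (MulAction.orbit D y) = ρ ^ n

end Place

section PlaceOfCompletion

variable {F E Ω k L : Type*} [Field F] [Field E] [Field Ω] [Algebra F E] [Algebra F Ω] [Algebra E Ω]
  [IsScalarTower F E Ω] [NontriviallyNormedField k] [IsUltrametricDist k] [CompleteSpace k]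
  [Algebra E k] [Field L] [Algebra k L] [Normal k L] [Algebra E L] [IsScalarTower E k L]
  [Algebra Ω L]

lemma spectralAbs_algebraMap_algebraMap [IsScalarTower E Ω L] (z : E) :
    spectralAbs k L (algebraMap Ω L (algebraMap E Ω z)) = ‖algebraMap E k z‖ := by
  rw [← IsScalarTower.algebraMap_apply, IsScalarTower.algebraMap_apply E k L,
    spectralAbs_algebraMap]

omit [IsUltrametricDist k] [CompleteSpace k] [Normal k L] in
lemma isSeparable_algebraMap_of_tower [IsScalarTower E Ω L] {y : Ω} (hy : IsSeparable E y) :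
    IsSeparable k (algebraMap Ω L y) := by
  refine (Separable.map (f := algebraMap E k) hy).of_dvd (minpoly.dvd _ _ ?_)
  rw [aeval_map_algebraMap, aeval_algebraMap_apply, minpoly.aeval, map_zero]

/-- The place of `Ω/E` cut out by an embedding of `Ω` in an algebraic extension `L` of a complete
field `k` that contains `E`. -/
noncomputable def Place.ofCompletion [IsAlgClosed F] [Normal E Ω] [IsScalarTower E Ω L] {T : k}
    (hT₀ : 0 < ‖T‖) (hT₁ : ‖T‖ < 1) (hval : ∀ x : k, x ≠ 0 → ∃ n : ℤ, ‖x‖ = ‖T‖ ^ n)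
    (hconst : ∀ a : F, a ≠ 0 → ‖algebraMap E k (algebraMap F E a)‖ = 1)
    (hres : ∀ x : k, ‖x‖ ≤ 1 → ∃ a : F, ‖x - algebraMap E k (algebraMap F E a)‖ < 1) :
    Place F E Ω where
  v := (spectralAbs k L).comp (algebraMap Ω L).injective
  isNonarchimedean a b := by
    change spectralAbs k L (algebraMap Ω L (a + b)) ≤ _
    rw [map_add]
    exact isNonarchimedean_spectralAbs _ _
  D := (galRestrict k L E Ω).range
  map_apply := by
    rintro _ ⟨σ, rfl⟩ y
    exact (congrArg (spectralAbs k L) (algebraMap_galRestrict σ y)).trans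
      (spectralAbs_algEquiv σ (algebraMap Ω L y))
  map_algebraMap a ha := by
    rw [IsScalarTower.algebraMap_apply F E Ω, ← hconst a ha]
    exact spectralAbs_algebraMap_algebraMap (k := k) (L := L) (algebraMap F E a)
  exists_residue y hy := by
    obtain ⟨a, ha⟩ := exists_spectralAbs_sub_lt_one (k := k) (y := algebraMap Ω L y)
      (c := (algebraMap E k).comp (algebraMap F E)) hres hy
    refine ⟨a, ?_⟩
    change spectralAbs k L (algebraMap Ω L (y - algebraMap F Ω a)) < 1
    rwa [map_sub, IsScalarTower.algebraMap_apply F E Ω, ← IsScalarTower.algebraMap_apply E Ω L,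
      IsScalarTower.algebraMap_apply E k L]
  ρ := ‖T‖
  ρ_pos := hT₀
  ρ_lt_one := hT₁
  exists_pow_card_orbit y hy hsep := by
    have hsep' : IsSeparable k (algebraMap Ω L y) := isSeparable_algebraMap_of_tower hsep
    rw [card_orbit_range_galRestrict, card_orbit_eq_natDegree_minpoly hsep']
    have hcoeff : (minpoly k (algebraMap Ω L y)).coeff 0 ≠ 0 :=
      minpoly.coeff_zero_ne_zero hsep'.isIntegral ((map_ne_zero (algebraMap Ω L)).2 hy)
    obtain ⟨n, hn⟩ := hval _ hcoeff
    exact ⟨n, (spectralAbs_pow_natDegree (algebraMap Ω L y)).trans hn⟩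

theorem exists_place_of_completion [IsAlgClosed F] [IsAlgClosure E Ω] {T : k} (hT₀ : 0 < ‖T‖)
    (hT₁ : ‖T‖ < 1) (hval : ∀ x : k, x ≠ 0 → ∃ n : ℤ, ‖x‖ = ‖T‖ ^ n)
    (hconst : ∀ a : F, a ≠ 0 → ‖algebraMap E k (algebraMap F E a)‖ = 1)
    (hres : ∀ x : k, ‖x‖ ≤ 1 → ∃ a : F, ‖x - algebraMap E k (algebraMap F E a)‖ < 1) :
    ∃ P : Place F E Ω, P.ρ = ‖T‖ ∧ ∀ z : E, P.v (algebraMap E Ω z) = ‖algebraMap E k z‖ := by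
  have := IsAlgClosure.isAlgebraic (R := E) (K := Ω)
  have := IsAlgClosure.normal E Ω
  let : Algebra Ω (AlgebraicClosure k) :=
    (IsAlgClosed.lift : Ω →ₐ[E] AlgebraicClosure k).toRingHom.toAlgebra
  have : IsScalarTower E Ω (AlgebraicClosure k) :=
    IsScalarTower.of_algebraMap_eq fun z ↦ ((IsAlgClosed.lift : Ω →ₐ[E] _).commutes z).symm
  exact ⟨.ofCompletion (L := AlgebraicClosure k) hT₀ hT₁ hval hconst hres, rfl,
    fun z ↦ spectralAbs_algebraMap_algebraMap (Ω := Ω) (L := AlgebraicClosure k) z⟩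

end PlaceOfCompletion

section LaurentSeries

open scoped LaurentSeries Valued WithZero

variable {F : Type*} [Field F]

lemma nonempty_rankOne_laurentSeries :
    Nonempty (Valued.v : Valuation F⸨X⸩ ℤᵐ⁰).RankOne := by
  have : (Valued.v : Valuation F⸨X⸩ ℤᵐ⁰).IsNontrivial := by
    refine ⟨⟨HahnSeries.single 1 (1 : F), by simp, ?_⟩⟩
    rw [LaurentSeries.valuation_single_zpow, ← WithZero.exp_zero, Ne, WithZero.exp_inj]
    norm_num
  rw [Valuation.nonempty_rankOne_iff_mulArchimedean]
  infer_instance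

section Norm

variable [(Valued.v : Valuation F⸨X⸩ ℤᵐ⁰).RankOne]

lemma norm_coe_powerSeries_le_one (g : PowerSeries F) : ‖(g : F⸨X⸩)‖ ≤ 1 :=
  Valued.toNormedField.norm_le_one_iff.2 ((LaurentSeries.val_le_one_iff_eq_coe F _).2 ⟨g, rfl⟩)

lemma norm_laurentSeries_C {a : F} (ha : a ≠ 0) : ‖(HahnSeries.C a : F⸨X⸩)‖ = 1 := by
  have hle (b : F) : ‖(HahnSeries.C b : F⸨X⸩)‖ ≤ 1 := by
    simpa using norm_coe_powerSeries_le_one (PowerSeries.C b)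
  have hmul : ‖(HahnSeries.C a : F⸨X⸩)‖ * ‖(HahnSeries.C a⁻¹ : F⸨X⸩)‖ = 1 := by
    rw [← norm_mul, ← map_mul, mul_inv_cancel₀ ha, map_one, norm_one]
  exact le_antisymm (hle a) (hmul.symm.trans_le (mul_le_of_le_one_right (norm_nonneg _) (hle _)))

lemma norm_single_one_lt_one : ‖(HahnSeries.single 1 1 : F⸨X⸩)‖ < 1 := by
  rw [Valued.toNormedField.norm_lt_one_iff, LaurentSeries.valuation_single_zpow,
    ← WithZero.exp_zero, WithZero.exp_lt_exp]
  norm_num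

lemma norm_single_one_right (n : ℤ) :
    ‖(HahnSeries.single n 1 : F⸨X⸩)‖ = ‖(HahnSeries.single 1 1 : F⸨X⸩)‖ ^ n := by
  rw [← norm_zpow, RatFunc.single_zpow]

lemma exists_norm_eq_zpow {f : F⸨X⸩} (hf : f ≠ 0) :
    ∃ n : ℤ, ‖f‖ = ‖(HahnSeries.single 1 1 : F⸨X⸩)‖ ^ n := by
  have hf' : (Valued.v f : ℤᵐ⁰) ≠ 0 := by simpa using hf
  refine ⟨-WithZero.log (Valued.v f), ?_⟩
  have hv : Valued.v f = Valued.v (HahnSeries.single (-WithZero.log (Valued.v f)) 1 : F⸨X⸩) := by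
    rw [LaurentSeries.valuation_single_zpow, neg_neg, WithZero.exp_log hf']
  rw [← norm_single_one_right]
  exact le_antisymm (Valued.toNormedField.norm_le_iff.2 hv.le)
    (Valued.toNormedField.norm_le_iff.2 hv.ge)

lemma exists_norm_sub_C_lt_one {f : F⸨X⸩} (hf : ‖f‖ ≤ 1) :
    ∃ a : F, ‖f - HahnSeries.C a‖ < 1 := by
  obtain ⟨g, rfl⟩ :=
    (LaurentSeries.val_le_one_iff_eq_coe F f).1 (Valued.toNormedField.norm_le_one_iff.1 hf)
  obtain ⟨h, hh⟩ : PowerSeries.X ∣ g - PowerSeries.C (PowerSeries.constantCoeff g) :=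
    PowerSeries.X_dvd_iff.2 (by simp)
  refine ⟨PowerSeries.constantCoeff g, ?_⟩
  have hsub : (g : F⸨X⸩) - HahnSeries.C (PowerSeries.constantCoeff g) =
      HahnSeries.single 1 1 * (h : F⸨X⸩) := by
    simpa using congrArg (fun z : PowerSeries F ↦ (z : F⸨X⸩)) hh
  rw [hsub, norm_mul]
  exact mul_lt_one_of_nonneg_of_lt_one_left (norm_nonneg _) norm_single_one_lt_one
    (norm_coe_powerSeries_le_one h)

end Norm

lemma coeff_eval₂_C_single {s : ℤ} (hs : s ≠ 0) (g : F[X]) (n : ℕ) :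
    (g.eval₂ HahnSeries.C (HahnSeries.single s 1 : F⸨X⸩)).coeff (n * s) = g.coeff n := by
  induction g using Polynomial.induction_on' with
  | add g h hg hh => simp [hg, hh]
  | monomial m a =>
    have hmonomial : (monomial m a).eval₂ HahnSeries.C (HahnSeries.single s 1 : F⸨X⸩) =
        HahnSeries.single (m * s) a := by
      simp [eval₂_monomial, HahnSeries.C_apply]
    rw [hmonomial, HahnSeries.coeff_single, coeff_monomial]
    simp [hs, eq_comm]

variable {E Ω : Type*} [Field E] [Field Ω] [IsAlgClosed F] [Algebra F[X] E]
    [IsFractionRing F[X] E] [Algebra F E] [IsScalarTower F F[X] E] [Algebra E Ω] [Algebra F Ω]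
    [IsScalarTower F E Ω] [IsAlgClosure E Ω]

/-- The completion used is `X ↦ T ^ s` from `F(X)` to `F((T))`; thus `s = 1` gives a place over
`X = 0` and `s = -1` one over `X = ∞`. -/
theorem exists_place_map_X_eq_zpow {s : ℤ} (hs : s ≠ 0) :
    ∃ P : Place F E Ω, P.v (algebraMap E Ω (algebraMap F[X] E X)) = P.ρ ^ s := by
  have hinj : Function.Injective
      (eval₂RingHom (HahnSeries.C : F →+* F⸨X⸩) (HahnSeries.single s 1)) := by
    refine (injective_iff_map_eq_zero _).2 fun g hg ↦ ext fun n ↦ ?_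
    rw [← coeff_eval₂_C_single hs, ← coe_eval₂RingHom, hg, HahnSeries.coeff_zero, coeff_zero]
  let : Algebra E F⸨X⸩ := (IsFractionRing.lift hinj).toAlgebra
  have hmap (g : F[X]) : algebraMap E F⸨X⸩ (algebraMap F[X] E g) =
      g.eval₂ HahnSeries.C (HahnSeries.single s 1) := IsFractionRing.lift_algebraMap hinj g
  have hC (a : F) : algebraMap E F⸨X⸩ (algebraMap F E a) = HahnSeries.C a := by
    rw [IsScalarTower.algebraMap_apply F F[X] E, hmap, algebraMap_eq, eval₂_C]
  obtain ⟨_⟩ := nonempty_rankOne_laurentSeries (F := F)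
  obtain ⟨P, hρ, hP⟩ := exists_place_of_completion (F := F) (Ω := Ω) (k := F⸨X⸩)
    (norm_pos_iff.2 (by simp)) norm_single_one_lt_one (fun f ↦ exists_norm_eq_zpow)
    (fun a ha ↦ by rw [hC, norm_laurentSeries_C ha])
    (fun f hf ↦ by simpa only [hC] using exists_norm_sub_C_lt_one hf)
  exact ⟨P, by rw [hP, hmap, eval₂_X, hρ, norm_single_one_right]⟩

end LaurentSeries

section Residue

variable {F E Ω : Type*} [Field F] [Field E] [Field Ω] [Algebra F Ω] [Algebra E Ω]

namespace Place

variable (P : Place F E Ω)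

lemma map_algebraMap_le_one (a : F) : P.v (algebraMap F Ω a) ≤ 1 := by
  rcases eq_or_ne a 0 with rfl | ha
  · simp
  · exact (P.map_algebraMap a ha).le

/-- `a` is the reduction of `y` modulo the maximal ideal of the place `P`. -/
def IsResidue (y : Ω) (a : F) : Prop :=
  P.v (y - algebraMap F Ω a) < 1

lemma isResidue_algebraMap (a : F) : P.IsResidue (algebraMap F Ω a) a := by
  simp [IsResidue]

lemma isResidue_zero_iff {y : Ω} : P.IsResidue y 0 ↔ P.v y < 1 := by
  simp [IsResidue]

namespace IsResidue

variable {P} {y z : Ω} {a b : F}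

lemma unique (ha : P.IsResidue y a) (hb : P.IsResidue y b) : a = b := by
  by_contra hab
  have h : P.v (algebraMap F Ω (a - b)) < 1 := by
    rw [map_sub, show algebraMap F Ω a - algebraMap F Ω b =
      (y - algebraMap F Ω b) - (y - algebraMap F Ω a) by ring]
    exact (map_sub_le_max_of_isNonarchimedean P.isNonarchimedean _ _).trans_lt (max_lt hb ha)
  exact h.ne (P.map_algebraMap _ (sub_ne_zero.2 hab))

lemma add (hy : P.IsResidue y a) (hz : P.IsResidue z b) : P.IsResidue (y + z) (a + b) := by
  rw [IsResidue, map_add, add_sub_add_comm]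
  exact (P.isNonarchimedean _ _).trans_lt (max_lt hy hz)

lemma neg (hy : P.IsResidue y a) : P.IsResidue (-y) (-a) := by
  rwa [IsResidue, map_neg, ← neg_sub', AbsoluteValue.map_neg]

lemma sub (hy : P.IsResidue y a) (hz : P.IsResidue z b) : P.IsResidue (y - z) (a - b) := by
  simpa only [sub_eq_add_neg] using hy.add hz.neg

lemma map_le_one (hy : P.IsResidue y a) : P.v y ≤ 1 := by
  rw [← sub_add_cancel y (algebraMap F Ω a)]
  exact (P.isNonarchimedean _ _).trans (max_le hy.le (P.map_algebraMap_le_one a))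

lemma map_eq_one (hy : P.IsResidue y a) (ha : a ≠ 0) : P.v y = 1 := by
  have h := P.isNonarchimedean.add_eq_right_of_lt (x := y - algebraMap F Ω a)
    (y := algebraMap F Ω a) (by rwa [P.map_algebraMap a ha])
  rwa [P.map_algebraMap a ha, sub_add_cancel] at h

lemma mul (hy : P.IsResidue y a) (hz : P.IsResidue z b) : P.IsResidue (y * z) (a * b) := by
  rw [IsResidue, map_mul, show y * z - algebraMap F Ω a * algebraMap F Ω b =
    (y - algebraMap F Ω a) * z + algebraMap F Ω a * (z - algebraMap F Ω b) by ring]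
  refine (P.isNonarchimedean _ _).trans_lt (max_lt ?_ ?_) <;> rw [map_mul]
  · exact (mul_le_of_le_one_right (P.v.nonneg _) hz.map_le_one).trans_lt hy
  · exact (mul_le_of_le_one_left (P.v.nonneg _) (P.map_algebraMap_le_one a)).trans_lt hz

lemma pow (hy : P.IsResidue y a) : ∀ n : ℕ, P.IsResidue (y ^ n) (a ^ n)
  | 0 => by simpa using P.isResidue_algebraMap 1
  | n + 1 => by simpa only [pow_succ] using (hy.pow n).mul hy

lemma of_sub (hy : P.IsResidue y a) (hz : P.v (z - y) < 1) : P.IsResidue z a := by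
  simpa using (P.isResidue_zero_iff.2 hz).add hy

lemma eq_zero_iff {w : Ω} (hw : w ≠ 0) (h : P.IsResidue (y / w) a) :
    a = 0 ↔ P.v y < P.v w := by
  rw [← div_lt_one (P.v.pos hw), ← map_div₀, ← P.isResidue_zero_iff]
  exact ⟨fun ha => ha ▸ h, h.unique⟩

lemma div_of_sub_lt {y' z' : Ω} (h : P.IsResidue (y / z) a) (hy : P.v (y' - y) < P.v z)
    (hz : P.v (z' - z) < P.v z) : P.IsResidue (y' / z') a := by
  have hz₀ : z ≠ 0 := P.v.pos_iff.1 ((P.v.nonneg _).trans_lt hz)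
  have hvz' : P.v z' = P.v z := by
    simpa using P.isNonarchimedean.add_eq_right_of_lt hz
  have hz₀' : z' ≠ 0 := by
    rwa [← P.v.ne_zero_iff, hvz', P.v.ne_zero_iff]
  have hsub : P.v (y' - z' * (y / z)) < P.v z := by
    rw [show y' - z' * (y / z) = (y' - y) + (z - z') * (y / z) by field_simp; ring]
    refine (P.isNonarchimedean _ _).trans_lt (max_lt hy ?_)
    rw [map_mul, P.v.map_sub]
    exact (mul_le_of_le_one_right (P.v.nonneg _) h.map_le_one).trans_lt hz
  refine h.of_sub ?_
  rwa [show y' / z' - y / z = (y' - z' * (y / z)) / z' by field_simp, map_div₀, hvz',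
    div_lt_one (P.v.pos hz₀)]

end IsResidue

lemma exists_isResidue_div {y w : Ω} (h : P.v y ≤ P.v w) : ∃ a, P.IsResidue (y / w) a :=
  P.exists_residue _ (by rw [map_div₀]; exact div_le_one_of_le₀ h (P.v.nonneg w))

lemma map_sum_algebraMap_mul_sub_lt {s : Finset ℕ} {c : ℕ → F} {z : ℕ → Ω} {i : ℕ}
    (hi : i ∈ s) (hz : z i ≠ 0) (h : ∀ j ∈ s, j ≠ i → P.v (z j) < P.v (z i)) :
    P.v (∑ j ∈ s, algebraMap F Ω (c j) * z j - algebraMap F Ω (c i) * z i) < P.v (z i) := by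
  rw [← Finset.add_sum_erase s _ hi, add_sub_cancel_left]
  refine sum_lt_of_isNonarchimedean P.isNonarchimedean (P.v.pos hz) fun j hj => ?_
  rw [map_mul]
  exact (mul_le_of_le_one_left (P.v.nonneg _) (P.map_algebraMap_le_one _)).trans_lt
    (h j (Finset.mem_of_mem_erase hj) (Finset.ne_of_mem_erase hj))

lemma map_sum_algebraMap_mul_eq {s : Finset ℕ} {c : ℕ → F} {z : ℕ → Ω} {i : ℕ}
    (hi : i ∈ s) (hc : c i ≠ 0) (hz : z i ≠ 0) (h : ∀ j ∈ s, j ≠ i → P.v (z j) < P.v (z i)) :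
    P.v (∑ j ∈ s, algebraMap F Ω (c j) * z j) = P.v (z i) := by
  have hlead : P.v (algebraMap F Ω (c i) * z i) = P.v (z i) := by
    rw [map_mul, P.map_algebraMap _ hc, one_mul]
  have hlt := P.map_sum_algebraMap_mul_sub_lt (c := c) hi hz h
  rw [← hlead] at hlt ⊢
  simpa using P.isNonarchimedean.add_eq_right_of_lt hlt

section LinearResidue

variable {k : Type*} [Field k] [Algebra k F] [Algebra k Ω] [IsScalarTower k F Ω]

variable (k) in
/-- The elements of absolute value `< B`, as a vector space over a subfield of the constants. -/
def ball (B : ℝ) (hB : 0 < B) : Submodule k Ω where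
  carrier := {y | P.v y < B}
  add_mem' hy hz := (P.isNonarchimedean _ _).trans_lt (max_lt hy hz)
  zero_mem' := by simpa using hB
  smul_mem' c y hy := by
    rw [Set.mem_ofPred_eq, Algebra.smul_def, IsScalarTower.algebraMap_apply k F Ω, map_mul]
    exact (mul_le_of_le_one_left (P.v.nonneg _) (P.map_algebraMap_le_one _)).trans_lt hy

lemma mem_ball {B : ℝ} {hB : 0 < B} {y : Ω} : y ∈ P.ball k B hB ↔ P.v y < B := Iff.rfl

lemma exists_linearMap_isResidue_div {W : Submodule k Ω} {w : Ω} (hW : ∀ y ∈ W, P.v y ≤ P.v w) :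
    ∃ l : W →ₗ[k] F, ∀ y : W, P.IsResidue (y / w) (l y) := by
  choose l hl using fun y : W => P.exists_isResidue_div (hW y y.2)
  refine ⟨{ toFun := l, map_add' := fun y z => ?_, map_smul' := fun c y => ?_ }, hl⟩
  · refine (hl _).unique ?_
    rw [Submodule.coe_add, add_div]
    exact (hl y).add (hl z)
  · refine (hl _).unique ?_
    rw [Submodule.coe_smul, Algebra.smul_def, IsScalarTower.algebraMap_apply k F Ω, mul_div_assoc,
      RingHom.id_apply, Algebra.smul_def]
    exact (P.isResidue_algebraMap _).mul (hl y)

end LinearResidue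

end Place

end Residue

/-! ### The equation `f(y) = a y ^ (q ^ t)` at a place -/

section RootSpace

variable (k Ω : Type*) {F : Type*} [Field k] [Fintype k] [Field F] [Field Ω] [Algebra k Ω]
  [Algebra F Ω]

local notation "q" => Fintype.card k

variable {k Ω} in
lemma frobeniusAlgHom_pow_apply (n : ℕ) (y : Ω) :
    (FiniteField.frobeniusAlgHom k Ω ^ n) y = y ^ q ^ n := by
  rw [AlgHom.coe_pow, FiniteField.coe_frobeniusAlgHom, pow_iterate]

lemma pow_card_pow_injective (n : ℕ) : Function.Injective fun y : Ω => y ^ q ^ n :=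
  fun y z h => (FiniteField.frobeniusAlgHom k Ω ^ n).injective <|
    (frobeniusAlgHom_pow_apply n y).trans (h.trans (frobeniusAlgHom_pow_apply n z).symm)

/-- The `q`-polynomial `y ↦ ∑ j, L_j y ^ (q ^ j)`, `q = #k`, attached to its conventional
`q`-associate `L = ∑ j, L_j X ^ j`, as a `k`-linear map. -/
noncomputable def qMap (L : F[X]) : Ω →ₗ[k] Ω :=
  ∑ j ∈ L.support, LinearMap.mulLeft k (algebraMap F Ω (L.coeff j)) ∘ₗ
    (FiniteField.frobeniusAlgHom k Ω ^ j).toLinearMap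

variable {k Ω}

lemma qMap_apply (L : F[X]) (y : Ω) :
    qMap k Ω L y = ∑ j ∈ L.support, algebraMap F Ω (L.coeff j) * y ^ q ^ j := by
  simp only [qMap, LinearMap.sum_apply, LinearMap.comp_apply, LinearMap.mulLeft_apply,
    AlgHom.toLinearMap_apply, frobeniusAlgHom_pow_apply]

variable (k) in
/-- The `k`-vector space of solutions `y` of `f(y) = a y ^ (q ^ t)`, for the `q`-polynomial `f`
with `q`-associate `L`. -/
noncomputable def rootSpace (L : F[X]) (t : ℕ) (a : Ω) : Submodule k Ω :=
  LinearMap.ker (qMap k Ω L -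
    LinearMap.mulLeft k a ∘ₗ (FiniteField.frobeniusAlgHom k Ω ^ t).toLinearMap)

lemma mem_rootSpace {L : F[X]} {t : ℕ} {a y : Ω} :
    y ∈ rootSpace k L t a ↔ qMap k Ω L y = a * y ^ q ^ t := by
  simp only [rootSpace, LinearMap.mem_ker, LinearMap.sub_apply, LinearMap.comp_apply,
    LinearMap.mulLeft_apply, AlgHom.toLinearMap_apply, frobeniusAlgHom_pow_apply, sub_eq_zero]

lemma qMap_div_qMap {L : F[X]} {t : ℕ} {a y z : Ω} (ha : a ≠ 0) (hy : y ∈ rootSpace k L t a)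
    (hz : z ∈ rootSpace k L t a) : qMap k Ω L y / qMap k Ω L z = (y / z) ^ q ^ t := by
  rw [mem_rootSpace.1 hy, mem_rootSpace.1 hz, mul_div_mul_left _ _ ha, div_pow]

end RootSpace

section FixedPoints

variable {F : Type*} [Field F] {Q : ℕ}

lemma finite_setOf_pow_eq_self (hQ : 1 < Q) : {z : F | z ^ Q = z}.Finite := by
  refine (X ^ Q - X : F[X]).roots.finite_toSet.subset fun z hz => ?_
  simpa [FiniteField.X_pow_card_sub_X_ne_zero F hQ, sub_eq_zero] using hz

lemma ncard_setOf_pow_eq_self_le (hQ : 1 < Q) : {z : F | z ^ Q = z}.ncard ≤ Q := by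
  classical
  have hroots : {z : F | z ^ Q = z} = (X ^ Q - X : F[X]).roots.toFinset := by
    ext z
    simp [FiniteField.X_pow_card_sub_X_ne_zero F hQ, sub_eq_zero]
  rw [hroots, Set.ncard_coe_finset]
  refine (Multiset.toFinset_card_le _).trans ((card_roots' _).trans ?_)
  rw [FiniteField.X_pow_card_sub_X_natDegree_eq F hQ]

lemma natCard_range_le_of_pow_eq_self {k W : Type*} [Field k] [Algebra k F] [AddCommGroup W]
    [Module k W] (hQ : 1 < Q) {l : W →ₗ[k] F} (hl : ∀ y, l y ^ Q = l y) :
    Nat.card (LinearMap.range l) ≤ Q :=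
  (Nat.card_mono (finite_setOf_pow_eq_self hQ) (by rintro _ ⟨y, rfl⟩; exact hl y)).trans
    (ncard_setOf_pow_eq_self_le hQ)

end FixedPoints

section Valuation

variable {k F E Ω : Type*} [Field k] [Fintype k] [Field F] [Field E] [Field Ω] [Algebra k Ω]
  [Algebra F Ω] [Algebra E Ω] (P : Place F E Ω) {L : F[X]} {t : ℕ} {a y z : Ω} {b : F}

local notation "q" => Fintype.card k

namespace Place

lemma map_qMap_sub_lt_of_lt_one (hL₀ : L.coeff 0 ≠ 0) (hy₀ : y ≠ 0) (hy : P.v y < 1) :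
    P.v (qMap k Ω L y - algebraMap F Ω (L.coeff 0) * y) < P.v y := by
  simpa only [qMap_apply, pow_zero, pow_one] using
    P.map_sum_algebraMap_mul_sub_lt (c := L.coeff) (z := fun j => y ^ q ^ j)
      (mem_support_iff.2 hL₀) (by simpa using hy₀) fun j _ hj => by
        simpa using pow_lt_self_of_lt_one₀ (P.v.pos hy₀) hy
          (Nat.one_lt_pow hj Fintype.one_lt_card)

lemma map_qMap_sub_lt_of_one_lt (hL : L.Monic) (hy : 1 < P.v y) :
    P.v (qMap k Ω L y - y ^ q ^ L.natDegree) < P.v y ^ q ^ L.natDegree := by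
  have hy₀ : y ≠ 0 := P.v.pos_iff.1 (one_pos.trans hy)
  simpa only [qMap_apply, hL.coeff_natDegree, map_one, one_mul, map_pow] using
    P.map_sum_algebraMap_mul_sub_lt (c := L.coeff) (z := fun j => y ^ q ^ j)
      (natDegree_mem_support_of_nonzero hL.ne_zero) (pow_ne_zero _ hy₀) fun j hj hjn => by
        simpa only [map_pow] using pow_lt_pow_right₀ hy (Nat.pow_lt_pow_right Fintype.one_lt_card
          ((le_natDegree_of_mem_supp j hj).lt_of_ne hjn))

lemma map_qMap_le_one (hy : P.v y ≤ 1) : P.v (qMap k Ω L y) ≤ 1 := by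
  rw [qMap_apply]
  refine le_of_forall_gt fun B hB => sum_lt_of_isNonarchimedean P.isNonarchimedean
    (one_pos.trans hB) fun j _ => ?_
  rw [map_mul, map_pow]
  exact (mul_le_one₀ (P.map_algebraMap_le_one _) (by positivity)
    (pow_le_one₀ (P.v.nonneg _) hy)).trans_lt hB

lemma map_ne_one_of_mem_rootSpace (ha : 1 < P.v a) (hy : y ∈ rootSpace k L t a) : P.v y ≠ 1 := by
  intro h
  have hle := P.map_qMap_le_one (k := k) (L := L) h.le
  rw [mem_rootSpace.1 hy, map_mul, map_pow, h, one_pow, mul_one] at hle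
  exact hle.not_gt ha

lemma map_pow_of_lt_one (hL₀ : L.coeff 0 ≠ 0) (hy : y ∈ rootSpace k L t a) (hy₀ : y ≠ 0)
    (hy₁ : P.v y < 1) : P.v y ^ (q ^ t - 1) = (P.v a)⁻¹ := by
  have hlt := P.map_qMap_sub_lt_of_lt_one (k := k) hL₀ hy₀ hy₁
  have hv : P.v a * P.v y ^ q ^ t = P.v y := by
    have hc : P.v (algebraMap F Ω (L.coeff 0) * y) = P.v y := by
      rw [map_mul, P.map_algebraMap _ hL₀, one_mul]
    rw [← hc] at hlt
    have h := P.isNonarchimedean.add_eq_right_of_lt hlt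
    rwa [sub_add_cancel, mem_rootSpace.1 hy, map_mul, map_pow, hc] at h
  rw [← Nat.sub_add_cancel (Nat.one_le_pow t q Fintype.card_pos), pow_succ, ← mul_assoc] at hv
  exact eq_inv_of_mul_eq_one_right (mul_right_cancel₀ (P.v.ne_zero hy₀) (hv.trans (one_mul _).symm))

lemma map_pow_of_one_lt (hL : L.Monic) (ht : t ≤ L.natDegree) (hy : y ∈ rootSpace k L t a)
    (hy₁ : 1 < P.v y) : P.v y ^ (q ^ t * (q ^ (L.natDegree - t) - 1)) = P.v a := by
  have hlt := P.map_qMap_sub_lt_of_one_lt (k := k) hL hy₁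
  rw [← map_pow] at hlt
  have h := P.isNonarchimedean.add_eq_right_of_lt hlt
  rw [sub_add_cancel, mem_rootSpace.1 hy, map_mul, map_pow, map_pow] at h
  have hexp : q ^ t * (q ^ (L.natDegree - t) - 1) + q ^ t = q ^ L.natDegree := by
    rw [← Nat.mul_add_one, Nat.sub_add_cancel (Nat.one_le_pow _ _ Fintype.card_pos), ← pow_add,
      Nat.add_sub_cancel' ht]
  rw [← hexp, pow_add] at h
  exact (mul_right_cancel₀ (by positivity) h).symm

lemma map_eq_of_lt_one (ht : 0 < t) (hL₀ : L.coeff 0 ≠ 0) (hy : y ∈ rootSpace k L t a)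
    (hy₀ : y ≠ 0) (hy₁ : P.v y < 1) (hz : z ∈ rootSpace k L t a) (hz₀ : z ≠ 0) (hz₁ : P.v z < 1) :
    P.v y = P.v z := by
  refine (pow_left_inj₀ (P.v.nonneg y) (P.v.nonneg z) ?_).1
    ((P.map_pow_of_lt_one hL₀ hy hy₀ hy₁).trans (P.map_pow_of_lt_one hL₀ hz hz₀ hz₁).symm)
  have := Nat.one_lt_pow ht.ne' (Fintype.one_lt_card (α := k))
  lia

lemma one_lt_of_mem_rootSpace (hL : L.Monic) (ht : t < L.natDegree) (hy : y ∈ rootSpace k L t a)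
    (hy₁ : 1 < P.v y) : 1 < P.v a := by
  rw [← P.map_pow_of_one_lt hL ht.le hy hy₁]
  have := Nat.one_lt_pow (Nat.sub_pos_of_lt ht).ne' (Fintype.one_lt_card (α := k))
  exact one_lt_pow₀ hy₁ (Nat.mul_ne_zero (pow_pos Fintype.card_pos _).ne' (by lia))

lemma map_eq_of_one_lt (hL : L.Monic) (ht : t < L.natDegree) (hy : y ∈ rootSpace k L t a)
    (hy₁ : 1 < P.v y) (hz : z ∈ rootSpace k L t a) (hz₁ : 1 < P.v z) : P.v y = P.v z := by
  refine (pow_left_inj₀ (P.v.nonneg y) (P.v.nonneg z) ?_).1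
    ((P.map_pow_of_one_lt hL ht.le hy hy₁).trans (P.map_pow_of_one_lt hL ht.le hz hz₁).symm)
  have := Nat.one_lt_pow (Nat.sub_pos_of_lt ht).ne' (Fintype.one_lt_card (α := k))
  exact Nat.mul_ne_zero (pow_pos Fintype.card_pos _).ne' (by lia)

lemma residue_pow_card_eq_of_lt_one (ht : 0 < t) (hL₀ : L.coeff 0 ≠ 0) (ha : a ≠ 0)
    (hy : y ∈ rootSpace k L t a) (hy₁ : P.v y < 1) (hz : z ∈ rootSpace k L t a)
    (hz₀ : z ≠ 0) (hz₁ : P.v z < 1) (hb : P.IsResidue (y / z) b) : b ^ q ^ t = b := by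
  have hc : algebraMap F Ω (L.coeff 0) ≠ 0 := by simpa using hL₀
  have happrox : ∀ u ∈ rootSpace k L t a, P.v u < 1 →
      P.v (qMap k Ω L u - algebraMap F Ω (L.coeff 0) * u) <
        P.v (algebraMap F Ω (L.coeff 0) * z) := by
    intro u hu hu₁
    rw [map_mul _ _ z, P.map_algebraMap _ hL₀, one_mul]
    rcases eq_or_ne u 0 with rfl | hu₀
    · simpa using hz₀
    · rw [← P.map_eq_of_lt_one ht hL₀ hu hu₀ hu₁ hz hz₀ hz₁]
      exact P.map_qMap_sub_lt_of_lt_one hL₀ hu₀ hu₁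
  have hres := IsResidue.div_of_sub_lt (by rwa [mul_div_mul_left _ _ hc])
    (happrox y hy hy₁) (happrox z hz hz₁)
  rw [qMap_div_qMap ha hy hz] at hres
  exact (hb.pow _).unique hres

lemma residue_pow_card_eq_of_one_lt (hL : L.Monic) (ht : t < L.natDegree) (ha : a ≠ 0)
    (hy : y ∈ rootSpace k L t a) (hy₁ : 1 < P.v y) (hz : z ∈ rootSpace k L t a) (hz₁ : 1 < P.v z)
    [Algebra k F] (hb : P.IsResidue (y / z) b) : b ^ q ^ (L.natDegree - t) = b := by
  have happrox : ∀ u ∈ rootSpace k L t a, 1 < P.v u →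
      P.v (qMap k Ω L u - u ^ q ^ L.natDegree) < P.v (z ^ q ^ L.natDegree) := by
    intro u hu hu₁
    rw [map_pow, ← P.map_eq_of_one_lt hL ht hu hu₁ hz hz₁]
    exact P.map_qMap_sub_lt_of_one_lt hL hu₁
  have hres := IsResidue.div_of_sub_lt (div_pow y z _ ▸ hb.pow _) (happrox y hy hy₁)
    (happrox z hz hz₁)
  rw [qMap_div_qMap ha hy hz] at hres
  refine pow_card_pow_injective k F t ?_
  simp only [← pow_mul, ← pow_add]
  rw [Nat.sub_add_cancel ht.le]
  exact hres.unique (hb.pow _)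

end Place

end Valuation

section Card

variable {k F E Ω : Type*} [Field k] [Field F] [Field E] [Field Ω] [Algebra k F] [Algebra k Ω]
  [Algebra F Ω] [Algebra E Ω] [IsScalarTower k F Ω]

lemma Place.natCard_eq_natCard_inf_ball_mul (P : Place F E Ω) {W : Submodule k Ω} {w : Ω}
    (hw : w ≠ 0) {l : W →ₗ[k] F}
    (hl : ∀ y : W, P.IsResidue (y / w) (l y)) :
    Nat.card W =
      Nat.card ↥(W ⊓ P.ball k (P.v w) (P.v.pos hw)) * Nat.card (LinearMap.range l) := by
  have hker : LinearMap.ker l = (W ⊓ P.ball k (P.v w) (P.v.pos hw)).comap W.subtype := by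
    ext y
    simp [(hl y).eq_zero_iff hw, mem_ball]
  rw [Submodule.card_eq_card_quotient_mul_card (LinearMap.ker l),
    Nat.card_congr l.quotKerEquivRange.toEquiv, hker,
    Nat.card_congr (Submodule.comapSubtypeEquivOfLe inf_le_left).toEquiv, mul_comm]

end Card

section SmallRoots

variable {k F E Ω : Type*} [Field k] [Fintype k] [Field F] [Field E] [Field Ω] [Algebra k F]
  [Algebra k Ω] [Algebra F Ω] [Algebra E Ω] [IsScalarTower k F Ω] (P : Place F E Ω)
  {L : F[X]} {t : ℕ} {a w y : Ω}

local notation "q" => Fintype.card k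

namespace Place

variable (k L t a) in
/-- The roots in `rootSpace k L t a` that the place `P` sends to `0`. When `P` is a pole of `a`,
these are the finite roots: all others go to `∞`. -/
noncomputable def smallRoots : Submodule k Ω :=
  rootSpace k L t a ⊓ P.ball k 1 one_pos

variable {P}

lemma smallRoots_le : P.smallRoots k L t a ≤ rootSpace k L t a := inf_le_left

lemma one_lt_of_notMem_smallRoots (ha : 1 < P.v a) (hy : y ∈ rootSpace k L t a)
    (hyU : y ∉ P.smallRoots k L t a) : 1 < P.v y :=
  (le_of_not_gt fun h => hyU ⟨hy, h⟩).lt_of_ne' (P.map_ne_one_of_mem_rootSpace ha hy)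

lemma map_le_of_one_lt (ha : 1 < P.v a) (hL : L.Monic) (ht : t < L.natDegree)
    (hw : w ∈ rootSpace k L t a) (hw₁ : 1 < P.v w) (hy : y ∈ rootSpace k L t a) :
    P.v y ≤ P.v w := by
  by_cases hyU : y ∈ P.smallRoots k L t a
  · exact (hyU.2.trans hw₁).le
  · exact (P.map_eq_of_one_lt hL ht hy (one_lt_of_notMem_smallRoots ha hy hyU) hw hw₁).le

lemma rootSpace_inf_ball (ha : 1 < P.v a) (hL : L.Monic) (ht : t < L.natDegree)
    (hw : w ∈ rootSpace k L t a) (hw₁ : 1 < P.v w) :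
    rootSpace k L t a ⊓ P.ball k (P.v w) (one_pos.trans hw₁) = P.smallRoots k L t a := by
  refine le_antisymm (fun y hy => ?_) fun y hy => ⟨hy.1, hy.2.trans hw₁⟩
  by_contra hyU
  exact (P.mem_ball.1 hy.2).ne
    (P.map_eq_of_one_lt hL ht hy.1 (one_lt_of_notMem_smallRoots ha hy.1 hyU) hw hw₁)

lemma natCard_smallRoots_le (ht : 0 < t) (hL₀ : L.coeff 0 ≠ 0) (ha : a ≠ 0) :
    Nat.card (P.smallRoots k L t a) ≤ q ^ t := by
  have hQ : 1 < q ^ t := Nat.one_lt_pow ht.ne' Fintype.one_lt_card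
  rcases eq_or_ne (P.smallRoots k L t a) ⊥ with hU | hU
  · simpa [hU] using hQ.le
  obtain ⟨z, hz, hz₀⟩ := Submodule.exists_mem_ne_zero_of_ne_bot hU
  have heq : ∀ y ∈ P.smallRoots k L t a, y ≠ 0 → P.v y = P.v z := fun y hy hy₀ =>
    P.map_eq_of_lt_one ht hL₀ hy.1 hy₀ hy.2 hz.1 hz₀ hz.2
  obtain ⟨l, hl⟩ := P.exists_linearMap_isResidue_div (W := P.smallRoots k L t a) (w := z)
    fun y hy => by
      rcases eq_or_ne y 0 with rfl | hy₀
      · simp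
      · exact (heq y hy hy₀).le
  have hinj : Function.Injective l := by
    rw [← LinearMap.ker_eq_bot, LinearMap.ker_eq_bot']
    intro y hy
    by_contra hy₀
    exact ((hl y).eq_zero_iff hz₀ |>.1 hy).ne (heq y y.2 (by simpa using hy₀))
  rw [Nat.card_congr (LinearEquiv.ofInjective l hinj).toEquiv]
  exact natCard_range_le_of_pow_eq_self hQ fun y =>
    P.residue_pow_card_eq_of_lt_one ht hL₀ ha y.2.1 y.2.2 hz.1 hz₀ hz.2 (hl y)

section Card

variable (ht₀ : 0 < t) (hL₀ : L.coeff 0 ≠ 0) (ht : t < L.natDegree) (ha : 1 < P.v a)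
  (hV : Nat.card (rootSpace k L t a) = Fintype.card k ^ L.natDegree)
include ht₀ hL₀ ht ha hV

lemma exists_mem_rootSpace_notMem_smallRoots :
    ∃ w ∈ rootSpace k L t a, w ∉ P.smallRoots k L t a := by
  by_contra! hle
  have hcard := natCard_smallRoots_le (k := k) (P := P) ht₀ hL₀ (P.v.pos_iff.1 (one_pos.trans ha))
  rw [le_antisymm smallRoots_le hle, hV] at hcard
  exact hcard.not_gt (Nat.pow_lt_pow_right Fintype.one_lt_card ht)

theorem natCard_smallRoots (hL : L.Monic) : Nat.card (P.smallRoots k L t a) = q ^ t := by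
  have ha₀ : a ≠ 0 := P.v.pos_iff.1 (one_pos.trans ha)
  obtain ⟨w, hw, hwU⟩ := exists_mem_rootSpace_notMem_smallRoots ht₀ hL₀ ht ha hV
  have hw₁ := one_lt_of_notMem_smallRoots ha hw hwU
  have hw₀ : w ≠ 0 := P.v.pos_iff.1 (one_pos.trans hw₁)
  obtain ⟨l, hl⟩ := P.exists_linearMap_isResidue_div (W := rootSpace k L t a)
    fun y hy => map_le_of_one_lt ha hL ht hw hw₁ hy
  have hcard := P.natCard_eq_natCard_inf_ball_mul hw₀ hl
  rw [rootSpace_inf_ball ha hL ht hw hw₁, hV] at hcard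
  have hrange : Nat.card (LinearMap.range l) ≤ q ^ (L.natDegree - t) := by
    refine natCard_range_le_of_pow_eq_self
      (Nat.one_lt_pow (Nat.sub_pos_of_lt ht).ne' Fintype.one_lt_card) fun y => ?_
    by_cases hy : (y : Ω) ∈ P.smallRoots k L t a
    · rw [((hl y).eq_zero_iff hw₀).2 (hy.2.trans hw₁), zero_pow (pow_pos Fintype.card_pos _).ne']
    · exact P.residue_pow_card_eq_of_one_lt hL ht ha₀ y.2
        (one_lt_of_notMem_smallRoots ha y.2 hy) hw hw₁ (hl y)
  refine le_antisymm (natCard_smallRoots_le ht₀ hL₀ ha₀) (Nat.le_of_mul_le_mul_right ?_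
    (pow_pos (Fintype.card_pos (α := k)) (L.natDegree - t)))
  calc q ^ t * q ^ (L.natDegree - t) = q ^ L.natDegree := by
        rw [← pow_add, Nat.add_sub_cancel' ht.le]
    _ ≤ Nat.card (P.smallRoots k L t a) * q ^ (L.natDegree - t) :=
        hcard.trans_le (Nat.mul_le_mul_left _ hrange)

end Card

end Place

end SmallRoots

/-! ### Large orbits -/

section LargeOrbit

open Pointwise

variable {k G W : Type*} [Field k] [AddCommGroup W] [Module k W] [Group G] [DistribMulAction G W]

/-- All cosets of `S` in `V`, except `S` itself, are contained in single `G`-orbits. -/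
def CosetsInOrbits (G : Type*) [Group G] [DistribMulAction G W] (V S : Submodule k W) : Prop :=
  S ≤ V ∧ ∀ w ∈ V, w ∉ S → ∀ s ∈ S, w + s ∈ MulAction.orbit G w

namespace CosetsInOrbits

variable {V S T : Submodule k W}

lemma smul [SMulCommClass G k W] (hV : ∀ g : G, ∀ w ∈ V, g • w ∈ V) (h : CosetsInOrbits G V S)
    (g : G) : CosetsInOrbits G V (g • S) := by
  refine ⟨fun y hy => ?_, fun w hw hwS s hs => ?_⟩
  · obtain ⟨z, hz, rfl⟩ := (Submodule.mem_smul_pointwise_iff_exists _ _ _).1 hy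
    exact hV _ _ (h.1 hz)
  · obtain ⟨z, hz, rfl⟩ := (Submodule.mem_smul_pointwise_iff_exists _ _ _).1 hs
    obtain ⟨g', hg'⟩ := h.2 (g⁻¹ • w) (hV _ _ hw) (fun hw' => hwS <| by
      simpa using Submodule.smul_mem_pointwise_smul _ g S hw') z hz
    refine ⟨g * g' * g⁻¹, ?_⟩
    have hg'' : g' • g⁻¹ • w = g⁻¹ • w + z := hg'
    simp only [mul_smul, hg'', smul_add, smul_inv_smul]

lemma sup_of_forall_add_mem_orbit (hS : CosetsInOrbits G V S) (hTV : T ≤ V)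
    (hT : ∀ w ∈ V, w ∉ S ⊔ T → ∀ u ∈ T, w + u ∈ MulAction.orbit G w) :
    CosetsInOrbits G V (S ⊔ T) := by
  refine ⟨sup_le hS.1 hTV, fun w hw hwST y hy => ?_⟩
  obtain ⟨s, hs, u, hu, rfl⟩ := Submodule.mem_sup.1 hy
  have hws : w + s ∉ S ⊔ T := fun h => hwST <| by
    simpa using sub_mem h (Submodule.mem_sup_left hs)
  have hmem := hT (w + s) (V.add_mem hw (hS.1 hs)) hws u hu
  rwa [MulAction.orbit_eq_iff.2 (hS.2 w hw (fun h => hwST (Submodule.mem_sup_left h)) s hs),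
    add_assoc] at hmem

lemma sup (hS : CosetsInOrbits G V S) (hT : CosetsInOrbits G V T) :
    CosetsInOrbits G V (S ⊔ T) :=
  hS.sup_of_forall_add_mem_orbit hT.1 fun w hw hwST =>
    hT.2 w hw fun h => hwST (Submodule.mem_sup_right h)

lemma add_mem_orbit_of_notMem_left (hS : CosetsInOrbits G V S) (hT : CosetsInOrbits G V T)
    {e e' w : W} (he : e ∈ S) (heT : e ∉ T) (he' : e' ∈ T) (hw : w ∈ S ⊔ T) (hwS : w ∉ S) :
    e + e' ∈ MulAction.orbit G w := by
  obtain ⟨s, hs, u, hu, rfl⟩ := Submodule.mem_sup.1 hw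
  have h₁ := hS.2 _ (sup_le hS.1 hT.1 hw) hwS (e - s) (S.sub_mem he hs)
  rw [show s + u + (e - s) = e + u by abel] at h₁
  have h₂ := hT.2 (e + u) (V.add_mem (hS.1 he) (hT.1 hu))
    (fun h => heT ((T.add_mem_iff_left hu).1 h)) (e' - u) (T.sub_mem he' hu)
  rwa [MulAction.orbit_eq_iff.2 h₁, show e + u + (e' - u) = e + e' by abel] at h₂

lemma sdiff_inf_subset_orbit (hS : CosetsInOrbits G V S) (hT : CosetsInOrbits G V T)
    {e e' : W} (he : e ∈ S) (heT : e ∉ T) (he' : e' ∈ T) (heS : e' ∉ S) :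
    ((S ⊔ T : Submodule k W) : Set W) \ (S ⊓ T : Submodule k W) ⊆ MulAction.orbit G (e + e') := by
  rintro w ⟨hw, hwST⟩
  refine MulAction.mem_orbit_symm.1 ?_
  by_cases hwS : w ∈ S
  · rw [add_comm]
    exact hT.add_mem_orbit_of_notMem_left hS he' heS he (sup_comm S T ▸ hw)
      fun hwT => hwST ⟨hwS, hwT⟩
  · exact hS.add_mem_orbit_of_notMem_left hT he heT he' hw hwS

end CosetsInOrbits

lemma two_mul_natCard_le_of_lt {A B : Submodule k W} [Finite B] (h : A < B) :
    2 * Nat.card A ≤ Nat.card B := by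
  have hcard := Submodule.card_eq_card_quotient_mul_card (A.comap B.subtype)
  rw [Nat.card_congr (Submodule.comapSubtypeEquivOfLe h.le).toEquiv] at hcard
  have : Nontrivial (B ⧸ A.comap B.subtype) :=
    Submodule.Quotient.nontrivial_iff.2 fun htop => h.not_ge (Submodule.comap_subtype_eq_top.1 htop)
  have : Finite (B ⧸ A.comap B.subtype) := .of_surjective _ (Submodule.mkQ_surjective _)
  rw [hcard, mul_comm (Nat.card A)]
  exact Nat.mul_le_mul_right _ Finite.one_lt_card

lemma finite_setOf_submodule_le (V : Submodule k W) [Finite V] :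
    {S : Submodule k W | S ≤ V}.Finite :=
  .of_finite_image (f := fun S => (S : Set W))
    ((Set.toFinite (V : Set W)).finite_subsets.subset (by rintro _ ⟨S, hS, rfl⟩; exact hS))
    SetLike.coe_injective.injOn

lemma CosetsInOrbits.exists_natCard_lt_two_mul_orbit_of_sup_eq {V S T : Submodule k W} [Finite V]
    (hV : ∀ g : G, ∀ w ∈ V, g • w ∈ V) (hS : CosetsInOrbits G V S) (hT : CosetsInOrbits G V T)
    (hsup : S ⊔ T = V) (hST : ¬ S ≤ T) (hTS : ¬ T ≤ S) :
    ∃ w ∈ V, Nat.card V < 2 * Nat.card (MulAction.orbit G w) := by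
  obtain ⟨e, he, heT⟩ := Set.not_subset.1 hST
  obtain ⟨e', he', heS⟩ := Set.not_subset.1 hTS
  have heV : e + e' ∈ V := V.add_mem (hS.1 he) (hT.1 he')
  refine ⟨e + e', heV, ?_⟩
  have hsub := hS.sdiff_inf_subset_orbit hT he heT he' heS
  rw [hsup] at hsub
  have horb : (MulAction.orbit G (e + e')).Finite :=
    (Set.toFinite (V : Set W)).subset (by rintro _ ⟨γ, rfl⟩; exact hV _ _ heV)
  have hlt : S ⊓ T < S := inf_lt_left.2 hST
  have hSV : S < V := hS.1.lt_of_ne fun h => hTS (h ▸ hT.1)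
  have : Finite S := (Set.toFinite (V : Set W)).subset hS.1
  have hle₁ := Set.ncard_le_ncard hsub horb
  have hle₂ := two_mul_natCard_le_of_lt hlt
  have hle₃ := two_mul_natCard_le_of_lt hSV
  have hdiff := Set.ncard_sdiff_add_ncard_of_subset (s := ((S ⊓ T : Submodule k W) : Set W))
    (hlt.le.trans hS.1) (Set.toFinite (V : Set W))
  simp only [← Nat.card_coe_set_eq, SetLike.coe_sort_coe] at hle₁ hdiff
  have hpos : 0 < Nat.card V := Nat.card_pos
  lia

theorem CosetsInOrbits.exists_natCard_lt_two_mul_orbit [SMulCommClass G k W]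
    {V S₀ : Submodule k W} [Finite V] (hV : ∀ g : G, ∀ w ∈ V, g • w ∈ V)
    (hS₀ : CosetsInOrbits G V S₀) (hne : S₀ ≠ V)
    (hirr : ∀ S, S₀ ≤ S → S ≤ V → (∀ g : G, ∀ w ∈ S, g • w ∈ S) → S = V) :
    ∃ w ∈ V, Nat.card V < 2 * Nat.card (MulAction.orbit G w) := by
  have hfin : {S | CosetsInOrbits G V S ∧ S₀ ≤ S ∧ S ≠ V}.Finite :=
    (finite_setOf_submodule_le V).subset fun S hS => hS.1.1
  obtain ⟨S, ⟨hS, hS₀S, hSV⟩, hmax⟩ := hfin.exists_maximal ⟨S₀, hS₀, le_rfl, hne⟩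
  obtain ⟨g, hg⟩ : ∃ g : G, ¬ g • S ≤ S := by
    by_contra! hstable
    exact hSV (hirr S hS₀S hS.1 fun g w hw =>
      hstable g (Submodule.smul_mem_pointwise_smul _ _ _ hw))
  have hT := hS.smul hV g
  have hsup : S ⊔ g • S = V := by
    by_contra hne
    exact hg (le_sup_right.trans (hmax ⟨hS.sup hT, hS₀S.trans le_sup_left, hne⟩ le_sup_left))
  refine hS.exists_natCard_lt_two_mul_orbit_of_sup_eq hV hT hsup (fun hle => ?_) hg
  refine hSV (hS.1.antisymm fun w hw => ?_)
  have hgw : g • w ∈ g • S := by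
    rw [← sup_eq_right.2 hle, hsup]
    exact hV g w hw
  obtain ⟨z, hz, hzw⟩ := (Submodule.mem_smul_pointwise_iff_exists _ _ _).1 hgw
  rwa [← smul_left_cancel _ hzw]

end LargeOrbit

section Arithmetic

variable {q n t j c : ℕ}

lemma two_mul_le_of_dvd_of_lt {d : ℕ} (hd : d ∣ n) (hlt : d < n) : 2 * d ≤ n := by
  obtain ⟨m, rfl⟩ := hd
  have hm : 1 < m := lt_of_mul_lt_mul_left (by simpa using hlt) d.zero_le
  rw [mul_comm]
  exact Nat.mul_le_mul_left d hm

lemma not_pow_sub_one_dvd_mul {d e : ℕ} (hq : 1 < q) (hd : 0 < d) (he : 0 < e) (hn : d + e ≤ n) :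
    ¬ q ^ n - 1 ∣ (q ^ d - 1) * (q ^ e - 1) := by
  have hqd : 1 < q ^ d := Nat.one_lt_pow hd.ne' hq
  have hqe : 1 < q ^ e := Nat.one_lt_pow he.ne' hq
  have hle : q ^ d * q ^ e ≤ q ^ n := by
    rw [← pow_add]
    exact Nat.pow_le_pow_right (by lia) hn
  refine Nat.not_dvd_of_pos_of_lt (Nat.mul_pos (by lia) (by lia)) ?_
  zify [hqd.le, hqe.le, (Nat.one_le_pow n q (by lia) : 1 ≤ q ^ n)] at hle hqd hqe ⊢
  linarith

lemma eq_of_pow_sub_one_dvd_mul (hq : 1 < q) (hj₀ : 0 < j) (hj : j ≤ n) (hnt : n = 1 ∨ ¬ n ∣ t)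
    (ht : q ^ n - 1 ∣ (q ^ t - 1) * c) (hcn : c ∣ q ^ n - 1) (hcj : c ∣ q ^ j - 1) : j = n := by
  rcases hnt with rfl | hnt
  · lia
  by_contra hjn
  have hn : 0 < n := hj₀.trans_le hj
  have hj' : 2 * j.gcd n ≤ n := two_mul_le_of_dvd_of_lt (Nat.gcd_dvd_right j n)
    ((Nat.gcd_le_left n hj₀).trans_lt (hj.lt_of_ne hjn))
  have ht' : 2 * t.gcd n ≤ n := two_mul_le_of_dvd_of_lt (Nat.gcd_dvd_right t n)
    ((Nat.gcd_le_right t hn).lt_of_ne fun h => hnt (Nat.gcd_eq_right_iff_dvd.1 h))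
  have hc : c ∣ q ^ j.gcd n - 1 := by
    rw [← Nat.pow_sub_one_gcd_pow_sub_one]
    exact Nat.dvd_gcd hcj hcn
  have hdvd : q ^ n - 1 ∣ (q ^ t.gcd n - 1) * c := by
    rw [← Nat.pow_sub_one_gcd_pow_sub_one, ← Nat.gcd_mul_right]
    exact Nat.dvd_gcd ht (dvd_mul_right _ _)
  exact not_pow_sub_one_dvd_mul hq (Nat.gcd_pos_of_pos_right t hn) (Nat.gcd_pos_of_pos_right j hn)
    (by lia) (hdvd.trans (Nat.mul_dvd_mul_left _ hc))

lemma eq_and_dvd_of_pow_eq_zpow {ρ va vw : ℝ} {Q T C : ℕ} {m : ℤ} (hρ₀ : 0 < ρ) (hρ₁ : ρ < 1)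
    (ha : va⁻¹ = ρ ^ (Q - 1)) (hw : vw ^ (Q * n) = va) (hm : vw ^ (T * C) = ρ ^ m) (hQ : 0 < Q)
    (hC : Q.Coprime C) (hT₀ : 0 < T) (hT : T ≤ Q) : T = Q ∧ n ∣ (Q - 1) * C := by
  have hint : m * (Q * n : ℕ) = -(((Q - 1) * (T * C) : ℕ) : ℤ) := by
    refine zpow_right_injective₀ hρ₀ hρ₁.ne ?_
    simp only
    rw [zpow_mul, ← hm, zpow_neg, zpow_natCast, zpow_natCast, pow_mul ρ, ← ha, ← pow_mul,
      mul_comm (T * C), pow_mul, hw, inv_pow, inv_inv]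
  have hnat : m.natAbs * (Q * n) = (Q - 1) * (T * C) := by
    simpa only [Int.natAbs_mul, Int.natAbs_neg, Int.natAbs_natCast] using congrArg Int.natAbs hint
  have hQ' : Q.Coprime (Q - 1) := (Nat.coprime_self_sub_right hQ).2 (Nat.coprime_one_right Q)
  have hdvd : Q ∣ T := hC.dvd_of_dvd_mul_right <| hQ'.dvd_of_dvd_mul_left <|
    hnat ▸ (dvd_mul_right Q n).mul_left m.natAbs
  obtain rfl : T = Q := hT.antisymm (Nat.le_of_dvd hT₀ hdvd)
  refine ⟨rfl, m.natAbs, Nat.eq_of_mul_eq_mul_left hQ ?_⟩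
  linarith

end Arithmetic

section Groups

lemma natCard_orbit_eq_mul {G H α : Type*} [Group G] [Group H] [MulAction G α] {w : α} {χ : G →* H}
    (hχ : MulAction.stabilizer G w ≤ χ.ker) :
    Nat.card (MulAction.orbit G w) = Nat.card (MulAction.orbit χ.ker w) * Nat.card χ.range := by
  have h := Subgroup.relIndex_mul_index hχ
  rw [MulAction.index_stabilizer, Subgroup.index_ker] at h
  rw [Nat.card_coe_set_eq, Nat.card_coe_set_eq, ← h, ← MulAction.index_stabilizer]
  rfl

variable {F : Type*} [Field F]

lemma pow_card_sub_one_eq_one_of_mul_mem {R : Finset F} (h₀ : 0 ∈ R) {z : F} (hz : z ≠ 0)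
    (h : ∀ y ∈ R, z * y ∈ R) : z ^ (R.card - 1) = 1 := by
  classical
  have hinj : Function.Injective (z * ·) := mul_right_injective₀ hz
  have himage : (R.erase 0).image (z * ·) = R.erase 0 := by
    refine Finset.eq_of_subset_of_card_le (fun y hy => ?_)
      (Finset.card_image_of_injective _ hinj).ge
    obtain ⟨a, ha, rfl⟩ := Finset.mem_image.1 hy
    exact Finset.mem_erase.2 ⟨mul_ne_zero hz (Finset.ne_of_mem_erase ha),
      h a (Finset.mem_of_mem_erase ha)⟩
  have hprod : z ^ (R.card - 1) * ∏ y ∈ R.erase 0, y = ∏ y ∈ R.erase 0, y := by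
    conv_rhs => rw [← himage, Finset.prod_image hinj.injOn]
    rw [Finset.prod_mul_distrib, Finset.prod_const, Finset.card_erase_of_mem h₀]
  exact (mul_eq_right₀ (Finset.prod_ne_zero_iff.2 fun y hy => Finset.ne_of_mem_erase hy)).1 hprod

lemma natCard_dvd_of_forall_pow_eq_one {C : Subgroup Fˣ} {N : ℕ} (h : ∀ z ∈ C, z ^ N = 1) :
    Nat.card C ∣ N := by
  rcases eq_or_ne N 0 with rfl | hN
  · exact dvd_zero _
  have : NeZero N := ⟨hN⟩
  have hC : C ≤ rootsOfUnity N F := h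
  have : Finite C := .of_injective (Subgroup.inclusion hC) (Subgroup.inclusion_injective hC)
  rw [← IsCyclic.exponent_eq_card]
  exact Monoid.exponent_dvd_of_forall_pow_eq_one fun z => Subtype.ext (h z z.2)

end Groups

section TameCharacter

lemma algEquiv_algebraMap {R E Ω : Type*} [CommSemiring R] [Field E] [Field Ω] [Algebra R E]
    [Algebra R Ω] [Algebra E Ω] [IsScalarTower R E Ω] (γ : Ω ≃ₐ[E] Ω) (c : R) :
    γ (algebraMap R Ω c) = algebraMap R Ω c := by
  rw [IsScalarTower.algebraMap_apply R E Ω, γ.commutes]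

variable {F E Ω : Type*} [Field F] [Field E] [Field Ω] [Algebra F Ω] [Algebra E Ω]

namespace Place

variable {P : Place F E Ω} {γ : Ω ≃ₐ[E] Ω} {y w : Ω} {b c : F}

variable (P) in
/-- `χ` is the tame character of `w`, by which `P.D` acts on the leading coefficient of `w`. -/
def IsTameCharacter (w : Ω) (χ : P.D →* Fˣ) : Prop :=
  ∀ δ : P.D, P.IsResidue (δ • w / w) (χ δ : F)

section Kernel

variable {χ : P.D →* Fˣ} (hχ : P.IsTameCharacter w χ)
include hχ

lemma IsTameCharacter.mem_ker (hw : w ≠ 0) {δ : P.D} : δ ∈ χ.ker ↔ P.v (δ • w - w) < P.v w := by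
  have h : P.IsResidue ((δ • w - w) / w) ((χ δ : F) - 1) := by
    rw [sub_div, div_self hw]
    exact (hχ δ).sub (by simpa using P.isResidue_algebraMap 1)
  rw [← h.eq_zero_iff hw, sub_eq_zero, MonoidHom.mem_ker, ← Units.val_inj, Units.val_one]

lemma IsTameCharacter.stabilizer_le_ker (hw : w ≠ 0) : MulAction.stabilizer P.D w ≤ χ.ker := by
  intro δ hδ
  rw [hχ.mem_ker hw, MulAction.mem_stabilizer_iff.1 hδ, sub_self, map_zero]
  exact P.v.pos hw

end Kernel

variable [Algebra F E] [IsScalarTower F E Ω]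

lemma IsResidue.map (hγ : γ ∈ P.D) (h : P.IsResidue y b) : P.IsResidue (γ y) b := by
  rwa [IsResidue, ← algEquiv_algebraMap γ b, ← map_sub, P.map_apply γ hγ]

lemma IsResidue.map_div (hγ : γ ∈ P.D) (hw : w ≠ 0) (hy : P.IsResidue (y / w) b)
    (hc : P.IsResidue (γ w / w) c) : P.IsResidue (γ y / w) (c * b) := by
  have hγw : γ w ≠ 0 := (map_ne_zero_iff γ γ.injective).2 hw
  rw [show γ y / w = γ w / w * γ (y / w) by rw [map_div₀]; field_simp]
  exact hc.mul (hy.map hγ)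

variable (P) in
lemma exists_isTameCharacter (hw : w ≠ 0) : ∃ χ, P.IsTameCharacter w χ := by
  choose c hc using fun δ : P.D => P.exists_isResidue_div (P.map_apply δ δ.2 w).le
  refine ⟨MonoidHom.toHomUnits
    { toFun := c, map_one' := (hc 1).unique ?_, map_mul' := fun δ δ' => ?_ }, hc⟩
  · simpa [div_self hw] using P.isResidue_algebraMap 1
  · have hmul := (hc δ').map_div δ.2 hw (hc δ)
    exact (hc (δ * δ')).unique hmul

section Card

variable {k : Type*} [Field k] [Algebra k F] [Algebra k Ω] {χ : P.D →* Fˣ}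
  (hχ : P.IsTameCharacter w χ) {S : Submodule k Ω} (hw : w ≠ 0) (hS : ∀ δ ∈ P.D, ∀ y ∈ S, δ y ∈ S)
include hχ hw hS

lemma IsTameCharacter.natCard_range_dvd_sub_one {l : S →ₗ[k] F}
    [Finite (LinearMap.range l)] (hl : ∀ y : S, P.IsResidue (y / w) (l y)) :
    Nat.card χ.range ∣ Nat.card (LinearMap.range l) - 1 := by
  classical
  refine natCard_dvd_of_forall_pow_eq_one ?_
  rintro _ ⟨δ, rfl⟩
  have hfin : (LinearMap.range l : Set F).Finite := Set.toFinite _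
  have hpow := pow_card_sub_one_eq_one_of_mul_mem (R := hfin.toFinset)
    (hfin.mem_toFinset.2 (zero_mem _)) (χ δ).ne_zero fun y hy => by
      obtain ⟨y, rfl⟩ := hfin.mem_toFinset.1 hy
      exact hfin.mem_toFinset.2 ⟨⟨δ.1 y, hS _ δ.2 _ y.2⟩,
        (hl _).unique ((hl y).map_div δ.2 hw (hχ δ))⟩
  rw [← Set.ncard_eq_toFinset_card _ hfin, ← Nat.card_coe_set_eq] at hpow
  exact Units.ext (by simpa using hpow)

lemma IsTameCharacter.exists_natCard_eq_and_dvd [IsScalarTower k F Ω] [Fintype k] [Finite S]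
    (hwS : w ∈ S) (hle : ∀ y ∈ S, P.v y ≤ P.v w) :
    ∃ j, 0 < j ∧ Nat.card S = Nat.card ↥(S ⊓ P.ball k (P.v w) (P.v.pos hw)) * Fintype.card k ^ j ∧
      Nat.card χ.range ∣ Fintype.card k ^ j - 1 := by
  obtain ⟨l, hl⟩ := P.exists_linearMap_isResidue_div hle
  have : Finite (LinearMap.range l) := .of_surjective _ l.surjective_rangeRestrict
  have hcard : Nat.card (LinearMap.range l) =
      Fintype.card k ^ Module.finrank k (LinearMap.range l) := by
    rw [Module.natCard_eq_pow_finrank (K := k), Nat.card_eq_fintype_card]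
  refine ⟨Module.finrank k (LinearMap.range l), ?_, ?_, ?_⟩
  · have hne : l ⟨w, hwS⟩ ≠ 0 := fun h => (((hl _).eq_zero_iff hw).1 h).false
    have : Nontrivial (LinearMap.range l) :=
      ⟨⟨⟨_, ⟨w, hwS⟩, rfl⟩, 0, fun h => hne (congrArg Subtype.val h)⟩⟩
    exact Module.finrank_pos
  · rw [P.natCard_eq_natCard_inf_ball_mul hw hl, hcard]
  · rw [← hcard]
    exact hχ.natCard_range_dvd_sub_one hw hS hl

end Card

end Place

end TameCharacter

section GaloisAction

section Orbit

variable {G W : Type*} [AddGroup W] [Group G] [MulAction G W] {U : Set W} {w u : W}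
  (h : ∀ g : G, -w + g • w ∈ U)
include h

lemma orbit_subset_image_add : MulAction.orbit G w ⊆ (w + ·) '' U := by
  rintro _ ⟨g, rfl⟩
  exact ⟨_, h g, add_neg_cancel_left w _⟩

variable [Finite U]

lemma natCard_orbit_le : Nat.card (MulAction.orbit G w) ≤ Nat.card U :=
  (Set.ncard_le_ncard (orbit_subset_image_add h) ((Set.toFinite U).image _)).trans
    (Set.ncard_image_of_injective _ (add_right_injective w)).le

lemma natCard_orbit_pos : 0 < Nat.card (MulAction.orbit G w) :=
  have := (((Set.toFinite U).image _).subset (orbit_subset_image_add h)).to_subtype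
  have := (MulAction.nonempty_orbit (M := G) w).to_subtype
  Nat.card_pos

lemma add_mem_orbit_of_natCard_le (hcard : Nat.card U ≤ Nat.card (MulAction.orbit G w))
    (hu : u ∈ U) : w + u ∈ MulAction.orbit G w := by
  rw [Set.eq_of_subset_of_ncard_le (orbit_subset_image_add h)
    ((Set.ncard_image_of_injective _ (add_right_injective w)).trans_le hcard)
    ((Set.toFinite U).image _)]
  exact ⟨u, hu, rfl⟩

end Orbit

lemma Place.one_lt_of_inv_eq_pow {k F E Ω : Type*} [Field k] [Fintype k] [Field F] [Field E]
    [Field Ω] [Algebra F Ω] [Algebra E Ω] {P : Place F E Ω} {t : ℕ} {a : Ω} (ht₀ : 0 < t)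
    (ha : (P.v a)⁻¹ = P.ρ ^ (Fintype.card k ^ t - 1)) : 1 < P.v a := by
  have hQ : 1 < Fintype.card k ^ t := Nat.one_lt_pow ht₀.ne' Fintype.one_lt_card
  rw [← inv_inv (P.v _), ha]
  exact (one_lt_inv₀ (pow_pos P.ρ_pos _)).2
    (pow_lt_one₀ P.ρ_pos.le P.ρ_lt_one (Nat.sub_pos_of_lt hQ).ne')

variable {k F E Ω : Type*} [Field k] [Fintype k] [Field F] [Field E] [Field Ω] [Algebra k F]
  [Algebra k Ω] [Algebra F Ω] [Algebra E Ω] [IsScalarTower k F Ω] [Algebra F E]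
  [IsScalarTower F E Ω] {P : Place F E Ω} {L : F[X]} {t : ℕ} {a : E} {w y : Ω}

local notation "q" => Fintype.card k

omit [Algebra k F] [IsScalarTower k F Ω] in
lemma algEquiv_mem_rootSpace (γ : Ω ≃ₐ[E] Ω) (hy : y ∈ rootSpace k L t (algebraMap E Ω a)) :
    γ y ∈ rootSpace k L t (algebraMap E Ω a) := by
  rw [mem_rootSpace] at hy ⊢
  rw [← γ.commutes, ← map_pow, ← map_mul, ← hy, qMap_apply, qMap_apply, map_sum]
  simp only [map_mul, map_pow, algEquiv_algebraMap]

namespace Place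

section Cosets

variable (ht₀ : 0 < t) (hL₀ : L.coeff 0 ≠ 0) (hL : L.Monic) (ht : t < L.natDegree)
  (ha : (P.v (algebraMap E Ω a))⁻¹ = P.ρ ^ (Fintype.card k ^ t - 1))
  (hV : Nat.card (rootSpace k L t (algebraMap E Ω a)) = Fintype.card k ^ L.natDegree)
include ht₀ hL₀ hL ht ha hV

lemma exists_natCard_range_dvd {χ : P.D →* Fˣ} (hχ : P.IsTameCharacter w χ)
    (hw : w ∈ rootSpace k L t (algebraMap E Ω a))
    (hwU : w ∉ P.smallRoots k L t (algebraMap E Ω a)) {S : Submodule k Ω}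
    (hS : ∀ δ ∈ P.D, ∀ y ∈ S, δ y ∈ S) (hUS : P.smallRoots k L t (algebraMap E Ω a) ≤ S)
    (hSV : S ≤ rootSpace k L t (algebraMap E Ω a)) (hwS : w ∈ S) :
    ∃ j, 0 < j ∧ Nat.card S = q ^ t * q ^ j ∧ Nat.card χ.range ∣ q ^ j - 1 := by
  have ha₁ := one_lt_of_inv_eq_pow ht₀ ha
  have hw₁ := one_lt_of_notMem_smallRoots ha₁ hw hwU
  have : Finite (rootSpace k L t (algebraMap E Ω a)) :=
    Nat.finite_of_card_ne_zero (hV.trans_ne (pow_pos Fintype.card_pos _).ne')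
  have : Finite S := .of_injective _ (Submodule.inclusion_injective hSV)
  obtain ⟨j, hj, hcard, hdvd⟩ := hχ.exists_natCard_eq_and_dvd
    (P.v.pos_iff.1 (one_pos.trans hw₁)) hS hwS
    fun y hy => map_le_of_one_lt ha₁ hL ht hw hw₁ (hSV hy)
  refine ⟨j, hj, ?_, hdvd⟩
  have hball : S ⊓ P.ball k (P.v w) (one_pos.trans hw₁) =
      P.smallRoots k L t (algebraMap E Ω a) := by
    refine le_antisymm ?_ (le_inf hUS ?_)
    · exact (inf_le_inf_right _ hSV).trans_eq (rootSpace_inf_ball ha₁ hL ht hw hw₁)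
    · exact (rootSpace_inf_ball ha₁ hL ht hw hw₁).ge.trans inf_le_right
  rw [hcard, hball, natCard_smallRoots ht₀ hL₀ ht ha₁ hV hL]

lemma natCard_orbit_ker_and_dvd {χ : P.D →* Fˣ} (hχ : P.IsTameCharacter w χ)
    (hsep : IsSeparable E w) (hw : w ∈ rootSpace k L t (algebraMap E Ω a))
    (hwU : w ∉ P.smallRoots k L t (algebraMap E Ω a)) :
    (∀ u ∈ P.smallRoots k L t (algebraMap E Ω a), w + u ∈ MulAction.orbit χ.ker w) ∧
      q ^ (L.natDegree - t) - 1 ∣ (q ^ t - 1) * Nat.card χ.range := by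
  have ha₁ := one_lt_of_inv_eq_pow ht₀ ha
  have hw₁ := one_lt_of_notMem_smallRoots ha₁ hw hwU
  have hw₀ : w ≠ 0 := P.v.pos_iff.1 (one_pos.trans hw₁)
  have hcardU := natCard_smallRoots ht₀ hL₀ ht ha₁ hV hL
  have hcop : (q ^ t).Coprime (Nat.card χ.range) := by
    obtain ⟨j, hj, -, hdvd⟩ := exists_natCard_range_dvd ht₀ hL₀ hL ht ha hV hχ hw hwU
      (fun δ _ y hy => algEquiv_mem_rootSpace δ hy) smallRoots_le le_rfl hw
    have hsucc : q ^ j - 1 + 1 = q ^ j := Nat.sub_add_cancel (Nat.one_le_pow _ _ Fintype.card_pos)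
    have hcop : (q ^ j).Coprime (q ^ j - 1) := by
      conv_lhs => rw [← hsucc]
      exact Nat.coprime_self_add_left.2 (Nat.coprime_one_left _)
    exact ((Nat.coprime_pow_left_iff hj _ _).1 (hcop.coprime_dvd_right hdvd)).pow_left _
  have horbit : ∀ δ : χ.ker, -w + δ • w ∈ (P.smallRoots k L t (algebraMap E Ω a) : Set Ω) := by
    intro δ
    rw [← rootSpace_inf_ball ha₁ hL ht hw hw₁, neg_add_eq_sub]
    exact ⟨sub_mem (algEquiv_mem_rootSpace _ hw) hw, (hχ.mem_ker hw₀).1 δ.2⟩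
  have : Finite (P.smallRoots k L t (algebraMap E Ω a)) :=
    Nat.finite_of_card_ne_zero (hcardU.trans_ne (pow_pos Fintype.card_pos _).ne')
  obtain ⟨m, hm⟩ := P.exists_pow_card_orbit w hw₀ hsep
  rw [natCard_orbit_eq_mul (hχ.stabilizer_le_ker hw₀)] at hm
  have hle := (natCard_orbit_le horbit).trans_eq hcardU
  obtain ⟨hcard, hdvd⟩ := eq_and_dvd_of_pow_eq_zpow P.ρ_pos P.ρ_lt_one ha
    (P.map_pow_of_one_lt hL ht.le hw hw₁) hm (pow_pos Fintype.card_pos _) hcop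
    (natCard_orbit_pos horbit) hle
  exact ⟨fun u hu => add_mem_orbit_of_natCard_le horbit (hcardU.trans hcard.symm).le hu, hdvd⟩

theorem add_mem_orbit_of_mem_smallRoots (hsep : IsSeparable E w)
    (hw : w ∈ rootSpace k L t (algebraMap E Ω a))
    (hwU : w ∉ P.smallRoots k L t (algebraMap E Ω a))
    (hy : y ∈ P.smallRoots k L t (algebraMap E Ω a)) : w + y ∈ MulAction.orbit P.D w := by
  have hw₁ := one_lt_of_notMem_smallRoots (one_lt_of_inv_eq_pow ht₀ ha) hw hwU
  obtain ⟨χ, hχ⟩ := P.exists_isTameCharacter (P.v.pos_iff.1 (one_pos.trans hw₁))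
  obtain ⟨δ, hδ⟩ := (natCard_orbit_ker_and_dvd ht₀ hL₀ hL ht ha hV hχ hsep hw hwU).1 y hy
  exact ⟨δ, hδ⟩

theorem eq_rootSpace_of_smallRoots_lt
    (hsep : ∀ y ∈ rootSpace k L t (algebraMap E Ω a), IsSeparable E y)
    (hnt : L.natDegree - t = 1 ∨ ¬ L.natDegree - t ∣ t) {S : Submodule k Ω}
    (hS : ∀ δ ∈ P.D, ∀ y ∈ S, δ y ∈ S) (hUS : P.smallRoots k L t (algebraMap E Ω a) < S)
    (hSV : S ≤ rootSpace k L t (algebraMap E Ω a)) : S = rootSpace k L t (algebraMap E Ω a) := by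
  obtain ⟨hUS, w, hwS, hwU⟩ := SetLike.lt_iff_le_and_exists.1 hUS
  have hw := hSV hwS
  have hw₁ := one_lt_of_notMem_smallRoots (one_lt_of_inv_eq_pow ht₀ ha) hw hwU
  obtain ⟨χ, hχ⟩ := P.exists_isTameCharacter (P.v.pos_iff.1 (one_pos.trans hw₁))
  obtain ⟨j, hj, hcardS, hdvdS⟩ :=
    exists_natCard_range_dvd ht₀ hL₀ hL ht ha hV hχ hw hwU hS hUS hSV hwS
  obtain ⟨n, -, hcardV, hdvdV⟩ := exists_natCard_range_dvd ht₀ hL₀ hL ht ha hV hχ hw hwU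
    (fun δ _ y hy => algEquiv_mem_rootSpace δ hy) (hUS.trans hSV) le_rfl hw
  have hdvd := (natCard_orbit_ker_and_dvd ht₀ hL₀ hL ht ha hV hχ (hsep w hw) hw hwU).2
  have hn : t + n = L.natDegree := by
    rw [hV, ← pow_add] at hcardV
    exact (Nat.pow_right_injective Fintype.one_lt_card hcardV).symm
  have : Finite (rootSpace k L t (algebraMap E Ω a)) :=
    Nat.finite_of_card_ne_zero (hV.trans_ne (pow_pos Fintype.card_pos _).ne')
  have hjn : j ≤ n := by
    have hle := Nat.card_mono (Set.toFinite _) hSV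
    rw [SetLike.coe_sort_coe, SetLike.coe_sort_coe, hcardS, hcardV] at hle
    exact (Nat.pow_le_pow_iff_right Fintype.one_lt_card).1
      (Nat.le_of_mul_le_mul_left hle (pow_pos Fintype.card_pos _))
  rw [← hn, Nat.add_sub_cancel_left] at hnt hdvd
  obtain rfl := eq_of_pow_sub_one_dvd_mul Fintype.one_lt_card hj hjn hnt hdvd hdvdV hdvdS
  exact SetLike.coe_injective
    (Set.eq_of_subset_of_ncard_le hSV (hcardV.trans hcardS.symm).le (Set.toFinite _))

end Cosets

end Place

end GaloisAction

/-! ### The function field of the curve -/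

section TwoPlaces

lemma map_coeff_prod_X_sub_C_mul_pow_le {R : Type*} [CommRing R] [Nontrivial R]
    {v : AbsoluteValue R ℝ} (hv : IsNonarchimedean v) {s : Multiset R} {B : ℝ} (hB : 0 ≤ B)
    (h : ∀ r ∈ s, v r ≤ B) (j : ℕ) :
    v ((s.map (X - C ·)).prod.coeff j) * B ^ j ≤ B ^ s.card := by
  induction s using Multiset.induction generalizing j with
  | empty =>
    rcases j with _ | j
    · simp
    · simp [coeff_one]
  | cons r s ih =>
    have ih := ih fun z hz => h z (Multiset.mem_cons_of_mem hz)
    have hr (j : ℕ) : v (r * (s.map (X - C ·)).prod.coeff j) * B ^ j ≤ B ^ (s.card + 1) := by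
      rw [map_mul, mul_assoc, pow_succ']
      exact mul_le_mul (h r (Multiset.mem_cons_self _ _)) (ih j)
        (mul_nonneg (v.nonneg _) (pow_nonneg hB j)) hB
    rw [Multiset.map_cons, Multiset.prod_cons, Multiset.card_cons, sub_mul, coeff_sub, coeff_C_mul]
    rcases j with _ | j
    · simpa [mul_comm] using hr 0
    · rw [coeff_X_mul]
      refine (mul_le_mul_of_nonneg_right (map_sub_le_max_of_isNonarchimedean hv _ _)
        (pow_nonneg hB _)).trans ?_
      rw [max_mul_of_nonneg _ _ (pow_nonneg hB _)]
      refine max_le ?_ (hr _)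
      rw [pow_succ', pow_succ', mul_left_comm]
      exact mul_le_mul_of_nonneg_left (ih j) hB

variable {F E Ω : Type*} [Field F] [Field E] [Field Ω] [Algebra F Ω] [Algebra E Ω]

namespace Place

section Poly

variable {P Q : Place F E Ω} {x : Ω} {g : F[X]} {m i : ℕ}

lemma map_aeval_eq_pow (hx : x ≠ 0) (hi : g.coeff i ≠ 0)
    (h : ∀ j, g.coeff j ≠ 0 → j ≠ i → P.v x ^ j < P.v x ^ i) : P.v (aeval x g) = P.v x ^ i := by
  rw [aeval_def, eval₂_eq_sum, sum_def, P.map_sum_algebraMap_mul_eq (mem_support_iff.2 hi) hi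
    (pow_ne_zero i hx), map_pow]
  intro j hj hji
  simpa only [map_pow] using h j (mem_support_iff.1 hj) hji

lemma coeff_eq_zero_of_map_aeval_le_of_lt_one (hx₀ : x ≠ 0) (hx : P.v x < 1)
    (h : P.v (aeval x g) ≤ P.v x ^ m) (hi : i < m) : g.coeff i = 0 := by
  rcases eq_or_ne g 0 with rfl | hg
  · exact coeff_zero i
  refine coeff_eq_zero_of_lt_natTrailingDegree (hi.trans_le ?_)
  rwa [map_aeval_eq_pow hx₀ (trailingCoeff_nonzero_iff_nonzero.2 hg) fun j hj hji =>
    pow_lt_pow_right_of_lt_one₀ (P.v.pos hx₀) hx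
      ((natTrailingDegree_le_of_ne_zero hj).lt_of_ne' hji),
    pow_le_pow_iff_right_of_lt_one₀ (P.v.pos hx₀) hx] at h

lemma coeff_eq_zero_of_map_aeval_le_of_one_lt (hx : 1 < P.v x)
    (h : P.v (aeval x g) ≤ P.v x ^ m) (hi : m < i) : g.coeff i = 0 := by
  rcases eq_or_ne g 0 with rfl | hg
  · exact coeff_zero i
  refine coeff_eq_zero_of_natDegree_lt (lt_of_le_of_lt ?_ hi)
  rwa [map_aeval_eq_pow (P.v.pos_iff.1 (one_pos.trans hx)) (leadingCoeff_ne_zero.2 hg)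
    fun j hj hji => pow_lt_pow_right₀ hx ((le_natDegree_of_ne_zero hj).lt_of_ne hji),
    pow_le_pow_iff_right₀ hx] at h

lemma exists_eq_C_mul_X_pow_of_map_aeval_le (hx₀ : x ≠ 0) (hP : P.v x < 1) (hQ : 1 < Q.v x)
    (hgP : P.v (aeval x g) ≤ P.v x ^ m) (hgQ : Q.v (aeval x g) ≤ Q.v x ^ m) :
    ∃ c, g = C c * X ^ m := by
  refine ⟨g.coeff m, Polynomial.ext fun i => ?_⟩
  rw [coeff_C_mul_X_pow]
  split_ifs with hi
  · rw [hi]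
  rcases lt_or_gt_of_ne hi with hi | hi
  · exact coeff_eq_zero_of_map_aeval_le_of_lt_one hx₀ hP hgP hi
  · exact coeff_eq_zero_of_map_aeval_le_of_one_lt hQ hgQ hi

end Poly

section Integral

variable [Algebra F[X] E] [IsFractionRing F[X] E] [Algebra F[X] Ω] [IsScalarTower F[X] E Ω]
  [IsAlgClosure E Ω] {y : Ω} {e : ℕ}

lemma map_coeff_minpoly_le (P : Place F E Ω) {B : ℝ} (hB : 0 < B) (hy : IsIntegral F[X] y)
    (h : ∀ γ : Ω ≃ₐ[E] Ω, P.v (γ y) ≤ B) {j : ℕ} (hj : j ≤ (minpoly F[X] y).natDegree) :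
    P.v (algebraMap F[X] Ω ((minpoly F[X] y).coeff j)) ≤
      B ^ ((minpoly F[X] y).natDegree - j) := by
  have : IsAlgClosed Ω := IsAlgClosure.isAlgClosed E
  have : Algebra.IsAlgebraic E Ω := IsAlgClosure.isAlgebraic
  set N := minpoly F[X] y
  have hsplits := IsAlgClosed.splits (N.map (algebraMap F[X] Ω))
  have hN : N.Monic := minpoly.monic hy
  have hconj : ∀ r ∈ (N.map (algebraMap F[X] Ω)).roots, P.v r ≤ B := by
    intro r hr
    obtain ⟨γ, rfl⟩ := minpoly.exists_algEquiv_of_root' (K := E) (x := r) (y := y)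
      (Algebra.IsAlgebraic.isAlgebraic y) (by
        rw [minpoly.isIntegrallyClosed_eq_field_fractions' E hy, aeval_map_algebraMap,
          ← eval_map_algebraMap]
        exact isRoot_of_mem_roots hr)
    exact h γ
  have hcoeff := map_coeff_prod_X_sub_C_mul_pow_le P.isNonarchimedean hB.le hconj j
  rw [← hsplits.eq_prod_roots_of_monic (hN.map _), ← hsplits.natDegree_eq_card_roots,
    hN.natDegree_map, coeff_map] at hcoeff
  rw [show B ^ N.natDegree = B ^ (N.natDegree - j) * B ^ j by
    rw [← pow_add, Nat.sub_add_cancel hj]] at hcoeff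
  exact le_of_mul_le_mul_right hcoeff (pow_pos hB j)

variable [IsScalarTower F F[X] Ω] [IsAlgClosed F] {P Q : Place F E Ω}

theorem exists_eq_algebraMap_mul_pow (hP : P.v (algebraMap F[X] Ω X) < 1)
    (hQ : 1 < Q.v (algebraMap F[X] Ω X)) (hy : IsIntegral F[X] y)
    (hyP : ∀ γ : Ω ≃ₐ[E] Ω, P.v (γ y) ≤ P.v (algebraMap F[X] Ω X) ^ e)
    (hyQ : ∀ γ : Ω ≃ₐ[E] Ω, Q.v (γ y) ≤ Q.v (algebraMap F[X] Ω X) ^ e) :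
    ∃ ζ : F, y = algebraMap F Ω ζ * algebraMap F[X] Ω X ^ e := by
  set x := algebraMap F[X] Ω X with hx
  have hx₀ : x ≠ 0 := Q.v.pos_iff.1 (one_pos.trans hQ)
  have haeval (g : F[X]) : aeval x g = algebraMap F[X] Ω g := by
    rw [hx, aeval_algebraMap_apply, aeval_X_left_apply]
  set N := minpoly F[X] y
  have hmonic : N.Monic := minpoly.monic hy
  set m : F[X] := N.map (evalRingHom 1) with hm
  have hN : N = scaleRoots (m.map C) (X ^ e) := by
    refine Polynomial.ext fun j => ?_
    rw [coeff_scaleRoots, natDegree_map_eq_of_injective C_injective, hm,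
      hmonic.natDegree_map, coeff_map, coeff_map, coe_evalRingHom, ← pow_mul]
    rcases lt_or_ge N.natDegree j with hj | hj
    · rw [coeff_eq_zero_of_natDegree_lt hj, eval_zero, C_0, zero_mul]
    obtain ⟨c, hc⟩ := exists_eq_C_mul_X_pow_of_map_aeval_le (g := N.coeff j)
      (m := e * (N.natDegree - j)) hx₀ hP hQ
      (by simpa only [haeval, pow_mul] using
        P.map_coeff_minpoly_le (pow_pos (P.v.pos hx₀) e) hy hyP hj)
      (by simpa only [haeval, pow_mul] using
        Q.map_coeff_minpoly_le (pow_pos (Q.v.pos hx₀) e) hy hyQ hj)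
    rw [hc]
    simp
  have hroot : aeval (y / x ^ e) m = 0 := by
    have h := scaleRoots_eval₂_mul (p := m.map C) (algebraMap F[X] Ω) (y / x ^ e) (X ^ e)
    rw [← hN, map_pow, ← hx, mul_div_cancel₀ _ (pow_ne_zero e hx₀), ← aeval_def, minpoly.aeval,
      eval₂_map] at h
    rw [aeval_def, IsScalarTower.algebraMap_eq F F[X] Ω]
    exact (mul_eq_zero.1 h.symm).resolve_left (pow_ne_zero _ (pow_ne_zero e hx₀))
  obtain ⟨ζ, hζ⟩ := (IsAlgClosed.splits m).mem_range_of_isRoot (hmonic.map _).ne_zero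
    ((eval_map_algebraMap _ _).trans hroot)
  exact ⟨ζ, by rw [hζ, div_mul_cancel₀ _ (pow_ne_zero e hx₀)]⟩

end Integral

end Place

end TwoPlaces

section Curve

variable (k : Type*) {F : Type*} [Field k] [Fintype k] [Field F]

local notation "q" => Fintype.card k

/-- The `q`-polynomial `f = ∑ j, L_j X ^ (q ^ j)`, as a polynomial. -/
noncomputable def qPoly (L : F[X]) : F[X] := ∑ j ∈ L.support, C (L.coeff j) * X ^ q ^ j

/-- The plane curve in the coordinates `(x, z)`, `z = x y`, with equation
`x ^ (q ^ n) (f(y) - f(x) y ^ (q ^ t) / x ^ (q ^ t)) = 0`, where `n = deg L`. Multiplying `y` by `x`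
makes the equation monic in `z`. -/
noncomputable def scatteredCurve (L : F[X]) (t : ℕ) : F[X][X] :=
  ∑ j ∈ L.support, C (C (L.coeff j) * X ^ (q ^ L.natDegree - q ^ j)) * X ^ q ^ j -
    C (qPoly k L * X ^ (q ^ L.natDegree - 2 * q ^ t)) * X ^ q ^ t

variable {k} {L : F[X]} {t : ℕ}

lemma exists_scatteredCurve_eq (hL : L.Monic) (ht : t < L.natDegree) :
    ∃ R : F[X][X], R.degree < ((q ^ L.natDegree : ℕ) : WithBot ℕ) ∧
      scatteredCurve k L t = X ^ q ^ L.natDegree + R := by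
  have hdeg (c : F[X]) {j : ℕ} (hj : j < L.natDegree) :
      (C c * X ^ q ^ j).degree < ((q ^ L.natDegree : ℕ) : WithBot ℕ) :=
    (degree_C_mul_X_pow_le _ _).trans_lt
      (Nat.cast_lt.2 (Nat.pow_lt_pow_right Fintype.one_lt_card hj))
  refine ⟨∑ j ∈ L.support.erase L.natDegree,
    C (C (L.coeff j) * X ^ (q ^ L.natDegree - q ^ j)) * X ^ q ^ j -
    C (qPoly k L * X ^ (q ^ L.natDegree - 2 * q ^ t)) * X ^ q ^ t, ?_, ?_⟩
  · refine (degree_sub_le _ _).trans_lt (max_lt ?_ (hdeg _ ht))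
    refine (degree_sum_le _ _).trans_lt ((Finset.sup_lt_iff (WithBot.bot_lt_coe _)).2 ?_)
    intro j hj
    exact hdeg _ ((le_natDegree_of_mem_supp _ (Finset.mem_of_mem_erase hj)).lt_of_ne
      (Finset.ne_of_mem_erase hj))
  · rw [scatteredCurve, ← Finset.add_sum_erase _ _ (natDegree_mem_support_of_nonzero hL.ne_zero),
      hL.coeff_natDegree, Nat.sub_self, add_sub_assoc]
    simp

lemma monic_scatteredCurve (hL : L.Monic) (ht : t < L.natDegree) :
    (scatteredCurve k L t).Monic := by
  obtain ⟨R, hR, h⟩ := exists_scatteredCurve_eq (k := k) hL ht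
  exact h ▸ monic_X_pow_add hR

lemma natDegree_scatteredCurve (hL : L.Monic) (ht : t < L.natDegree) :
    (scatteredCurve k L t).natDegree = q ^ L.natDegree := by
  obtain ⟨R, hR, h⟩ := exists_scatteredCurve_eq (k := k) hL ht
  rw [h, natDegree_add_eq_left_of_degree_lt (by rwa [degree_X_pow]), natDegree_X_pow]

lemma separable_map_scatteredCurve [Algebra k F] (hL₀ : L.coeff 0 ≠ 0) (ht₀ : 0 < t) {K : Type*}
    [Field K] {φ : F[X] →+* K} (hφ : φ X ≠ 0) : ((scatteredCurve k L t).map φ).Separable := by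
  have hcast {j : ℕ} (hj : j ≠ 0) : ((q ^ j : ℕ) : K) = 0 := by
    rw [Nat.cast_pow, ← map_natCast ((φ.comp C).comp (algebraMap k F)),
      FiniteField.cast_card_eq_zero, map_zero, zero_pow hj]
  have hderiv₀ (c : F[X]) {j : ℕ} (hj : j ≠ 0) :
      derivative ((C c * X ^ q ^ j : F[X][X]).map φ) = 0 := by
    rw [Polynomial.map_mul, Polynomial.map_pow, map_C, map_X, derivative_C_mul_X_pow, hcast hj,
      mul_zero, C_0, zero_mul]
  have hderiv : derivative ((scatteredCurve k L t).map φ) =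
      C (φ (C (L.coeff 0)) * φ X ^ (q ^ L.natDegree - 1)) := by
    rw [scatteredCurve, Polynomial.map_sub, Polynomial.map_sum, derivative_sub, derivative_sum,
      hderiv₀ _ ht₀.ne', sub_zero,
      Finset.sum_eq_single_of_mem 0 (mem_support_iff.2 hL₀) fun j _ hj => hderiv₀ _ hj,
      pow_zero, pow_one, Polynomial.map_mul, map_C, map_X, derivative_C_mul_X, map_mul, map_pow]
  have hunit : IsUnit (derivative ((scatteredCurve k L t).map φ)) := by
    rw [hderiv, isUnit_C, isUnit_iff_ne_zero]
    exact mul_ne_zero ((map_ne_zero (φ.comp C)).2 hL₀) (pow_ne_zero _ hφ)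
  exact isCoprime_one_right.of_isCoprime_of_dvd_right hunit.dvd

variable {K : Type*} [Field K] [Algebra k K] [Algebra F K]

lemma aeval_qPoly (y : K) : aeval y (qPoly k L) = qMap k K L y := by
  simp [qPoly, qMap_apply]

lemma aevalAeval_scatteredCurve_mul (ht : t < L.natDegree) (x y : K) :
    aevalAeval x (x * y) (scatteredCurve k L t) * x ^ q ^ t =
      x ^ q ^ L.natDegree * (qMap k K L y * x ^ q ^ t - qMap k K L x * y ^ q ^ t) := by
  have hpow {j : ℕ} (hj : j ≤ L.natDegree) :
      x ^ (q ^ L.natDegree - q ^ j) * x ^ q ^ j = x ^ q ^ L.natDegree := by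
    rw [← pow_add, Nat.sub_add_cancel (Nat.pow_le_pow_right Fintype.card_pos hj)]
  have hpow_two : x ^ (q ^ L.natDegree - 2 * q ^ t) * x ^ q ^ t * x ^ q ^ t =
      x ^ q ^ L.natDegree := by
    have hle : 2 * q ^ t ≤ q ^ L.natDegree :=
      calc 2 * q ^ t ≤ q ^ (t + 1) := by
            rw [pow_succ']; exact Nat.mul_le_mul_right _ Fintype.one_lt_card
        _ ≤ q ^ L.natDegree := Nat.pow_le_pow_right Fintype.card_pos ht
    rw [mul_assoc, ← pow_add, ← two_mul, ← pow_add, Nat.sub_add_cancel hle]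
  have hsum : ∑ j ∈ L.support,
      algebraMap F K (L.coeff j) * x ^ (q ^ L.natDegree - q ^ j) * (x * y) ^ q ^ j =
      x ^ q ^ L.natDegree * qMap k K L y := by
    rw [qMap_apply, Finset.mul_sum]
    refine Finset.sum_congr rfl fun j hj => ?_
    rw [← hpow (le_natDegree_of_mem_supp _ hj)]
    ring
  have heval : aevalAeval x (x * y) (scatteredCurve k L t) =
      x ^ q ^ L.natDegree * qMap k K L y -
        qMap k K L x * x ^ (q ^ L.natDegree - 2 * q ^ t) * (x * y) ^ q ^ t := by
    simp [scatteredCurve, aeval_qPoly, ← hsum, eval_finsetSum]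
  rw [heval, mul_pow]
  linear_combination -(qMap k K L x * y ^ q ^ t) * hpow_two

end Curve

section FunctionField

variable {k F E Ω : Type*} [Field k] [Fintype k] [Field F] [Field E] [Field Ω] [Algebra k Ω]
  [Algebra E Ω] [Algebra F[X] E] [IsFractionRing F[X] E] [Algebra F[X] Ω]
  [IsScalarTower F[X] E Ω] {L : F[X]} {t : ℕ} {a : E} {y : Ω}

local notation "q" => Fintype.card k

variable (F E Ω) in
include E in
lemma algebraMap_X_ne_zero : algebraMap F[X] Ω X ≠ 0 := by
  rw [IsScalarTower.algebraMap_apply F[X] E Ω, Ne, map_eq_zero, map_eq_zero_iff _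
    (IsFractionRing.injective F[X] E)]
  exact X_ne_zero

variable [Algebra F Ω] [IsScalarTower F F[X] Ω]

lemma aeval_eq_aevalAeval (H : F[X][X]) (y : Ω) :
    aeval y H = aevalAeval (algebraMap F[X] Ω X) y H := by
  have h : (aeval y).restrictScalars F = (aevalAeval (algebraMap F[X] Ω X) y : F[X][X] →ₐ[F] Ω) :=
    by ext <;> simp
  exact DFunLike.congr_fun h H

variable (ht : t < L.natDegree)
  (hx : algebraMap F[X] Ω X ∈ rootSpace k L t (algebraMap E Ω a))
include ht hx

lemma mem_rootSpace_iff_aeval_scatteredCurve :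
    y ∈ rootSpace k L t (algebraMap E Ω a) ↔
      aeval (algebraMap F[X] Ω X * y) (scatteredCurve k L t) = 0 := by
  have hx₀ := algebraMap_X_ne_zero F E Ω
  have h := aevalAeval_scatteredCurve_mul (k := k) ht (algebraMap F[X] Ω X) y
  rw [mem_rootSpace.1 hx, ← aeval_eq_aevalAeval] at h
  rw [mem_rootSpace, ← sub_eq_zero]
  refine ⟨fun hy => ?_, fun hy => ?_⟩
  · refine (mul_eq_zero.1 (h.trans ?_)).resolve_right (pow_ne_zero (q ^ t) hx₀)
    linear_combination algebraMap F[X] Ω X ^ q ^ L.natDegree * algebraMap F[X] Ω X ^ q ^ t * hy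
  · rw [hy, zero_mul, zero_eq_mul] at h
    refine (mul_eq_zero.1 (Eq.trans ?_ (h.resolve_left (pow_ne_zero _ hx₀)))).resolve_right
      (pow_ne_zero (q ^ t) hx₀)
    ring

lemma isIntegral_X_mul_of_mem_rootSpace (hL : L.Monic)
    (hy : y ∈ rootSpace k L t (algebraMap E Ω a)) : IsIntegral F[X] (algebraMap F[X] Ω X * y) :=
  ⟨scatteredCurve k L t, monic_scatteredCurve hL ht,
    (mem_rootSpace_iff_aeval_scatteredCurve ht hx).1 hy⟩

variable [Algebra k F]

lemma natCard_rootSpace [IsAlgClosed Ω] (hL : L.Monic) (hL₀ : L.coeff 0 ≠ 0) (ht₀ : 0 < t) :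
    Nat.card (rootSpace k L t (algebraMap E Ω a)) = q ^ L.natDegree := by
  have hx₀ := algebraMap_X_ne_zero F E Ω
  have hmonic := (monic_scatteredCurve (k := k) hL ht).map (algebraMap F[X] Ω)
  have hcard := card_rootSet_eq_natDegree (K := Ω)
    (separable_map_scatteredCurve (k := k) (t := t) hL₀ ht₀ hx₀) (IsAlgClosed.splits _)
  rw [(monic_scatteredCurve hL ht).natDegree_map, natDegree_scatteredCurve hL ht,
    ← Nat.card_eq_fintype_card] at hcard
  rw [← hcard]
  refine Nat.card_congr ((Equiv.mulLeft₀ _ hx₀).subtypeEquiv fun y => ?_)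
  rw [mem_rootSpace_iff_aeval_scatteredCurve ht hx, mem_rootSet_of_ne hmonic.ne_zero,
    aeval_map_algebraMap]
  rfl

lemma isSeparable_of_mem_rootSpace (hL₀ : L.coeff 0 ≠ 0) (ht₀ : 0 < t)
    (hy : y ∈ rootSpace k L t (algebraMap E Ω a)) : IsSeparable E y := by
  have hX : algebraMap F[X] E X ≠ 0 :=
    (map_ne_zero_iff _ (IsFractionRing.injective F[X] E)).2 X_ne_zero
  have hmul : IsSeparable E (algebraMap F[X] Ω X * y) := by
    refine (separable_map_scatteredCurve (k := k) (t := t) hL₀ ht₀ hX).of_dvd (minpoly.dvd _ _ ?_)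
    rw [aeval_map_algebraMap]
    exact (mem_rootSpace_iff_aeval_scatteredCurve ht hx).1 hy
  rw [← mem_separableClosure_iff] at hmul ⊢
  rw [IsScalarTower.algebraMap_apply F[X] E Ω] at hmul
  have hdiv := div_mem hmul (algebraMap_mem (separableClosure E Ω) (algebraMap F[X] E X))
  rwa [mul_div_cancel_left₀ _ ((_root_.map_ne_zero _).2 hX)] at hdiv

end FunctionField

section ConstantMultiples

variable {k F E Ω : Type*} [Field k] [Fintype k] [Field F] [Field E] [Field Ω] [Algebra k Ω]
  [Algebra F Ω] [Algebra E Ω] [Algebra F[X] E]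
  [IsFractionRing F[X] E] [Algebra F[X] Ω] [IsScalarTower F[X] E Ω] [IsScalarTower F F[X] Ω]
  {L : F[X]} {t : ℕ} {a : E}

local notation "q" => Fintype.card k

variable (hx : algebraMap F[X] Ω X ∈ rootSpace k L t (algebraMap E Ω a))
include hx

lemma algebraMap_mul_X_mem_rootSpace_iff {ζ : F} :
    algebraMap F Ω ζ * algebraMap F[X] Ω X ∈ rootSpace k L t (algebraMap E Ω a) ↔
      ∀ j ∈ L.support, ζ ^ q ^ j = ζ ^ q ^ t := by
  set g : F[X] := ∑ j ∈ L.support, C (L.coeff j * (ζ ^ q ^ j - ζ ^ q ^ t)) * X ^ q ^ j with hg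
  have hqMap : qMap k Ω L (algebraMap F Ω ζ * algebraMap F[X] Ω X) -
      algebraMap E Ω a * (algebraMap F Ω ζ * algebraMap F[X] Ω X) ^ q ^ t =
      algebraMap F[X] Ω g := by
    rw [mul_pow, mul_left_comm, ← mem_rootSpace.1 hx, qMap_apply, qMap_apply, Finset.mul_sum,
      ← Finset.sum_sub_distrib, hg, map_sum]
    refine Finset.sum_congr rfl fun j _ => ?_
    rw [map_mul, map_pow, ← algebraMap_eq, ← IsScalarTower.algebraMap_apply F F[X] Ω]
    simp only [map_mul, map_sub, map_pow]
    ring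
  have hcoeff (j : ℕ) : g.coeff (q ^ j) = L.coeff j * (ζ ^ q ^ j - ζ ^ q ^ t) := by
    simp only [hg, finsetSum_coeff, coeff_C_mul_X_pow,
      (Nat.pow_right_injective Fintype.one_lt_card).eq_iff, Finset.sum_ite_eq]
    split_ifs with h
    · rfl
    · rw [notMem_support_iff.1 h, zero_mul]
  rw [mem_rootSpace, ← sub_eq_zero, hqMap, IsScalarTower.algebraMap_apply F[X] E Ω, map_eq_zero,
    map_eq_zero_iff _ (IsFractionRing.injective F[X] E)]
  refine ⟨fun h j hj => ?_, fun h => Finset.sum_eq_zero fun j hj => ?_⟩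
  · rw [← sub_eq_zero]
    exact (mul_eq_zero.1 ((hcoeff j).symm.trans (by rw [h, coeff_zero]))).resolve_left
      (mem_support_iff.1 hj)
  · rw [h j hj, sub_self, mul_zero, C_0, zero_mul]

lemma dvd_of_forall_eq_algebraMap_mul_X (ht₀ : 0 < t) (hL₀ : L.coeff 0 ≠ 0) {U : Submodule k Ω}
    (hU : U ≤ rootSpace k L t (algebraMap E Ω a)) (hcard : Nat.card U = q ^ t)
    (hconst : ∀ u ∈ U, ∃ ζ : F, u = algebraMap F Ω ζ * algebraMap F[X] Ω X)
    {j : ℕ} (hj : j ∈ L.support) : t ∣ j := by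
  choose! ζ hζ using hconst
  have hQ : 1 < q ^ t.gcd j :=
    Nat.one_lt_pow (Nat.gcd_pos_of_pos_left _ ht₀).ne' Fintype.one_lt_card
  have hfixed : ∀ u ∈ U, ζ u ^ q ^ t.gcd j = ζ u := by
    intro u hu
    have hpow := (algebraMap_mul_X_mem_rootSpace_iff hx).1 (hζ u hu ▸ hU hu)
    have ht : ζ u ^ q ^ t = ζ u := by simpa using (hpow 0 (mem_support_iff.2 hL₀)).symm
    have hperiod {m : ℕ} :
        (fun c : F => c ^ q).IsPeriodicPt m (ζ u) ↔ ζ u ^ q ^ m = ζ u := by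
      rw [Function.IsPeriodicPt, Function.IsFixedPt, pow_iterate]
    exact hperiod.1 ((hperiod.2 ht).gcd (hperiod.2 ((hpow j hj).trans ht)))
  have hinj : Function.Injective
      fun u : U => (⟨ζ u, hfixed u u.2⟩ : {z : F | z ^ q ^ t.gcd j = z}) := fun u u' h =>
    Subtype.ext <| (hζ u u.2).trans <| (congrArg (fun z : F => algebraMap F Ω z * _)
      (congrArg Subtype.val h)).trans (hζ u' u'.2).symm
  have := (finite_setOf_pow_eq_self (F := F) hQ).to_subtype
  have hle : q ^ t ≤ q ^ t.gcd j := by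
    rw [← hcard]
    exact (Nat.card_le_card_of_injective _ hinj).trans (ncard_setOf_pow_eq_self_le hQ)
  exact (Nat.dvd_gcd_iff.1 (Nat.le_antisymm (Nat.gcd_le_left j ht₀)
    ((Nat.pow_le_pow_iff_right Fintype.one_lt_card).1 hle)).symm.dvd).2

lemma Place.exists_eq_algebraMap_mul_X [Algebra k F] [IsScalarTower k F Ω] [Algebra F E]
    [IsScalarTower F E Ω] [IsAlgClosure E Ω] [IsAlgClosed F] {P Q : Place F E Ω} (ht₀ : 0 < t)
    (hL₀ : L.coeff 0 ≠ 0) (hL : L.Monic) (ht : t < L.natDegree) (hP : P.v (algebraMap F[X] Ω X) < 1)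
    (hQ : 1 < Q.v (algebraMap F[X] Ω X))
    (hstable : ∀ γ : Ω ≃ₐ[E] Ω, ∀ u ∈ P.smallRoots k L t (algebraMap E Ω a),
      γ u ∈ P.smallRoots k L t (algebraMap E Ω a))
    {u : Ω} (hu : u ∈ P.smallRoots k L t (algebraMap E Ω a)) :
    ∃ ζ : F, u = algebraMap F Ω ζ * algebraMap F[X] Ω X := by
  have hx₀ := algebraMap_X_ne_zero F E Ω
  have ha := Q.one_lt_of_mem_rootSpace hL ht hx hQ
  have hxγ (γ : Ω ≃ₐ[E] Ω) : γ (algebraMap F[X] Ω X) = algebraMap F[X] Ω X :=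
    algEquiv_algebraMap γ X
  have hyP (γ : Ω ≃ₐ[E] Ω) :
      P.v (γ (algebraMap F[X] Ω X * u)) ≤ P.v (algebraMap F[X] Ω X) ^ 2 := by
    rw [map_mul, map_mul, hxγ, pow_two]
    refine mul_le_mul_of_nonneg_left ?_ (P.v.nonneg _)
    rcases eq_or_ne (γ u) 0 with hγu | hγu
    · simp [hγu]
    · rw [P.map_eq_of_lt_one ht₀ hL₀ (hstable γ u hu).1 hγu (hstable γ u hu).2 hx hx₀ hP]
  have hyQ (γ : Ω ≃ₐ[E] Ω) :
      Q.v (γ (algebraMap F[X] Ω X * u)) ≤ Q.v (algebraMap F[X] Ω X) ^ 2 := by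
    rw [map_mul, map_mul, hxγ, pow_two]
    exact mul_le_mul_of_nonneg_left (map_le_of_one_lt ha hL ht hx hQ
      (algEquiv_mem_rootSpace γ hu.1)) (Q.v.nonneg _)
  obtain ⟨ζ, hζ⟩ := exists_eq_algebraMap_mul_pow hP hQ
    (isIntegral_X_mul_of_mem_rootSpace ht hx hL hu.1) hyP hyQ
  exact ⟨ζ, mul_left_cancel₀ hx₀ (hζ.trans (by ring))⟩

end ConstantMultiples

section PlaceAtInfinity

lemma exists_pow_card_pow_eq_qMap_sub {k F Ω : Type*} [Field k] [Fintype k] [Field F] [Field Ω]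
    [Algebra k Ω] [Algebra F Ω] [IsAlgClosed F] {L : F[X]} {t : ℕ} (hL₀ : L.coeff 0 ≠ 0)
    (hsupp : ∀ j ∈ L.support, j ≠ 0 → t ≤ j) :
    ∃ g : F[X], ∀ z : Ω,
      aeval z g ^ Fintype.card k ^ t = qMap k Ω L z - algebraMap F Ω (L.coeff 0) * z := by
  choose b hb using fun j => IsAlgClosed.exists_pow_nat_eq (L.coeff j)
    (pow_pos (Fintype.card_pos (α := k)) t)
  refine ⟨∑ j ∈ L.support.erase 0, C (b j) * X ^ Fintype.card k ^ (j - t), fun z => ?_⟩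
  rw [qMap_apply, ← Finset.add_sum_erase _ _ (mem_support_iff.2 hL₀), pow_zero, pow_one,
    add_sub_cancel_left, map_sum, ← frobeniusAlgHom_pow_apply, map_sum]
  refine Finset.sum_congr rfl fun j hj => ?_
  have htj : t ≤ j := hsupp j (Finset.mem_of_mem_erase hj) (Finset.ne_of_mem_erase hj)
  rw [frobeniusAlgHom_pow_apply, map_mul, aeval_C, map_pow, aeval_X, mul_pow, ← map_pow, hb,
    ← pow_mul, ← pow_add, Nat.sub_add_cancel htj]

lemma natCard_orbit_dvd_of_stabilizer_le {G α β : Type*} [Group G] [MulAction G α]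
    [MulAction G β] {y : α} {z : β} (h : MulAction.stabilizer G y ≤ MulAction.stabilizer G z) :
    Nat.card (MulAction.orbit G z) ∣ Nat.card (MulAction.orbit G y) := by
  simpa only [MulAction.index_stabilizer, Nat.card_coe_set_eq] using Subgroup.index_dvd_of_le h

lemma aeval_mem_separableClosure {F E Ω : Type*} [Field F] [Field E] [Field Ω] [Algebra F Ω]
    [Algebra E Ω] [Algebra F E] [IsScalarTower F E Ω] (g : F[X]) {u : Ω} (hu : IsSeparable E u) :
    aeval u g ∈ separableClosure E Ω := by
  rw [aeval_eq_sum_range]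
  refine sum_mem fun i _ => ?_
  rw [Algebra.smul_def, IsScalarTower.algebraMap_apply F E Ω]
  exact mul_mem (IntermediateField.algebraMap_mem _ _) (pow_mem (mem_separableClosure_iff.2 hu) _)

namespace Place

section Field

variable {F E Ω : Type*} [Field F] [Field E] [Field Ω] [Algebra F Ω] [Algebra E Ω]
  {P : Place F E Ω}

lemma dvd_natCard_orbit {z : Ω} {N : ℕ} (hz : z ≠ 0) (hsep : IsSeparable E z)
    (hv : P.v z ^ N = P.ρ⁻¹ ^ (N + 1)) : N ∣ Nat.card (MulAction.orbit P.D z) := by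
  obtain ⟨m, hm⟩ := P.exists_pow_card_orbit z hz hsep
  set c := Nat.card (MulAction.orbit P.D z)
  have hint : m * N = -((N + 1) * c : ℕ) := by
    refine zpow_right_injective₀ P.ρ_pos P.ρ_lt_one.ne ?_
    simp only
    rw [zpow_mul, ← hm, zpow_natCast, zpow_neg, zpow_natCast, ← inv_pow, pow_mul, ← hv,
      pow_right_comm]
  refine Int.natCast_dvd_natCast.1 ⟨-m - c, ?_⟩
  push_cast at hint
  linarith

variable {x w : Ω} {ζ : F}

lemma map_mul_pow_sub_mul_pow {Q : ℕ} (hx : x ≠ 0) (hζ : P.IsResidue (w / x) ζ) (hne : ζ ^ Q ≠ ζ) :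
    P.v (x * w ^ Q - w * x ^ Q) = P.v x ^ (Q + 1) := by
  have hfactor : x * w ^ Q - w * x ^ Q = x ^ (Q + 1) * ((w / x) ^ Q - w / x) := by
    rw [div_pow]
    field_simp
    ring
  rw [hfactor, map_mul, ((hζ.pow Q).sub hζ).map_eq_one (sub_ne_zero.2 hne), mul_one, map_pow]

lemma map_neg_add_lt_of_isResidue [Algebra F E] [IsScalarTower F E Ω] {γ : Ω ≃ₐ[E] Ω}
    (hγ : γ ∈ P.D) (hx : x ≠ 0) (hγx : γ x = x) (hζ : P.IsResidue (w / x) ζ) :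
    P.v (-w + γ w) < P.v x := by
  have hres : P.IsResidue ((-w + γ w) / x) (-ζ + ζ) := by
    rw [add_div, neg_div]
    refine hζ.neg.add ?_
    simpa only [map_div₀, hγx] using hζ.map hγ
  exact (hres.eq_zero_iff hx).1 (neg_add_cancel ζ)

end Field

variable {k F E Ω : Type*} [Field k] [Fintype k] [Field F] [Field E] [Field Ω] [Algebra k F]
  [Algebra k Ω] [Algebra F Ω] [Algebra E Ω] [IsScalarTower k F Ω] [Algebra F E]
  [IsScalarTower F E Ω] {P : Place F E Ω} {L : F[X]} {t : ℕ} {a : E} {x w y : Ω} {ζ : F}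

local notation "q" => Fintype.card k

omit [Algebra k F] [IsScalarTower k F Ω] in
lemma pow_dvd_natCard_orbit [IsAlgClosed F] (hL₀ : L.coeff 0 ≠ 0)
    (hsupp : ∀ j ∈ L.support, j ≠ 0 → t ≤ j)
    (hx : x ∈ rootSpace k L t (algebraMap E Ω a)) (hw : w ∈ rootSpace k L t (algebraMap E Ω a))
    (hγx : ∀ γ : Ω ≃ₐ[E] Ω, γ x = x) (hxsep : IsSeparable E x) (hwsep : IsSeparable E w)
    (hxρ : P.v x = P.ρ⁻¹) (hζ : P.IsResidue (w / x) ζ) (hne : ζ ^ q ^ t ≠ ζ) :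
    q ^ t ∣ Nat.card (MulAction.orbit P.D w) := by
  have hx₀ : x ≠ 0 := P.v.pos_iff.1 (hxρ ▸ inv_pos.2 P.ρ_pos)
  obtain ⟨g, hg⟩ := exists_pow_card_pow_eq_qMap_sub (k := k) (Ω := Ω) hL₀ hsupp
  set z := aeval w g * x - aeval x g * w with hz
  have hzpow : z ^ q ^ t = algebraMap F Ω (L.coeff 0) * (x * w ^ q ^ t - w * x ^ q ^ t) := by
    rw [hz, ← frobeniusAlgHom_pow_apply, map_sub, map_mul, map_mul]
    simp only [frobeniusAlgHom_pow_apply, hg, mem_rootSpace.1 hx, mem_rootSpace.1 hw]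
    ring
  have hzv : P.v z ^ q ^ t = P.ρ⁻¹ ^ (q ^ t + 1) := by
    rw [← map_pow, hzpow, map_mul, P.map_algebraMap _ hL₀, one_mul,
      map_mul_pow_sub_mul_pow hx₀ hζ hne, hxρ]
  have hz₀ : z ≠ 0 := by
    intro h
    rw [h, map_zero, zero_pow (pow_pos Fintype.card_pos _).ne'] at hzv
    exact (pow_pos (inv_pos.2 P.ρ_pos) _).ne hzv
  have hzsep : IsSeparable E z :=
    mem_separableClosure_iff.1 <| sub_mem
      (mul_mem (aeval_mem_separableClosure g hwsep) (mem_separableClosure_iff.2 hxsep))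
      (mul_mem (aeval_mem_separableClosure g hxsep) (mem_separableClosure_iff.2 hwsep))
  have haeval (γ : Ω ≃ₐ[E] Ω) (u : Ω) : γ (aeval u g) = aeval (γ u) g :=
    (aeval_algHom_apply (γ.toAlgHom.restrictScalars F) u g).symm
  refine (dvd_natCard_orbit hz₀ hzsep hzv).trans (natCard_orbit_dvd_of_stabilizer_le ?_)
  intro δ hδ
  have hδw : δ.1 w = w := hδ
  change δ.1 z = z
  rw [hz, map_sub, map_mul, map_mul, haeval, haeval, hδw, hγx]

theorem add_mem_orbit_of_residue_pow_ne [IsAlgClosed F] (ht₀ : 0 < t) (hL₀ : L.coeff 0 ≠ 0)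
    (hL : L.Monic) (ht : t < L.natDegree) (hsupp : ∀ j ∈ L.support, j ≠ 0 → t ≤ j)
    (hV : Nat.card (rootSpace k L t (algebraMap E Ω a)) = q ^ L.natDegree)
    (hsep : ∀ y ∈ rootSpace k L t (algebraMap E Ω a), IsSeparable E y)
    (hx : x ∈ rootSpace k L t (algebraMap E Ω a)) (hw : w ∈ rootSpace k L t (algebraMap E Ω a))
    (hγx : ∀ γ : Ω ≃ₐ[E] Ω, γ x = x) (hxρ : P.v x = P.ρ⁻¹) (hζ : P.IsResidue (w / x) ζ)
    (hne : ζ ^ q ^ t ≠ ζ) (hy : y ∈ P.smallRoots k L t (algebraMap E Ω a)) :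
    w + y ∈ MulAction.orbit P.D w := by
  have hx₁ : 1 < P.v x := hxρ ▸ (one_lt_inv₀ P.ρ_pos).2 P.ρ_lt_one
  have ha := P.one_lt_of_mem_rootSpace hL ht hx hx₁
  have hcardU := natCard_smallRoots ht₀ hL₀ ht ha hV hL
  have : Finite (P.smallRoots k L t (algebraMap E Ω a)) :=
    Nat.finite_of_card_ne_zero (hcardU.trans_ne (pow_pos Fintype.card_pos _).ne')
  have horbit : ∀ δ : P.D, -w + δ • w ∈ (P.smallRoots k L t (algebraMap E Ω a) : Set Ω) := by
    intro δ
    rw [← rootSpace_inf_ball ha hL ht hx hx₁]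
    exact ⟨add_mem (neg_mem hw) (algEquiv_mem_rootSpace _ hw),
      map_neg_add_lt_of_isResidue δ.2 (P.v.pos_iff.1 (one_pos.trans hx₁)) (hγx δ) hζ⟩
  have hdvd := pow_dvd_natCard_orbit hL₀ hsupp hx hw hγx (hsep x hx) (hsep w hw) hxρ hζ hne
  exact add_mem_orbit_of_natCard_le horbit
    (hcardU.trans_le (Nat.le_of_dvd (natCard_orbit_pos horbit) hdvd)) hy

end Place

end PlaceAtInfinity

section BigOrbit

section Numerics

variable {n t : ℕ} (ht₀ : 0 < t) (h : (t ∣ n ∧ 3 * t ≤ n) ∨ (¬ t ∣ n ∧ 2 * t - 1 ≤ n))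
include ht₀ h

lemma lt_of_dvd_and_le_or_not_dvd_and_le : t < n := by
  rcases h with ⟨-, hle⟩ | ⟨hnd, hle⟩
  · lia
  · have ht₁ : t ≠ 1 := fun h => hnd (h ▸ one_dvd n)
    lia

lemma sub_eq_one_or_not_sub_dvd : n - t = 1 ∨ ¬ n - t ∣ t := by
  by_contra! hcon
  obtain ⟨hne, c, hc⟩ := hcon
  have hlt := lt_of_dvd_and_le_or_not_dvd_and_le ht₀ h
  rcases h with ⟨-, hle⟩ | ⟨hnd, hle⟩
  · have := Nat.le_of_dvd ht₀ ⟨c, hc⟩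
    lia
  · rcases lt_trichotomy c 1 with hc₁ | rfl | hc₁
    · rw [Nat.lt_one_iff.1 hc₁, mul_zero] at hc
      exact ht₀.ne' hc
    · exact hnd ⟨2, by lia⟩
    · have := Nat.mul_le_mul_left (n - t) hc₁
      lia

end Numerics

lemma natCard_sup_le {R W : Type*} [Ring R] [AddCommGroup W] [Module R W] (S T : Submodule R W)
    [Finite S] [Finite T] : Nat.card ↥(S ⊔ T) ≤ Nat.card S * Nat.card T := by
  rw [← Nat.card_prod, Submodule.sup_eq_range]
  exact Nat.card_le_card_of_surjective _ (LinearMap.surjective_rangeRestrict _)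

lemma smulCommClass_algEquiv (k F E Ω : Type*) [Field k] [Field F] [Field E] [Field Ω]
    [Algebra k F] [Algebra k Ω] [Algebra F E] [Algebra F Ω] [Algebra E Ω] [IsScalarTower k F Ω]
    [IsScalarTower F E Ω] : SMulCommClass (Ω ≃ₐ[E] Ω) k Ω := by
  refine ⟨fun γ c y => ?_⟩
  rw [Algebra.smul_def, Algebra.smul_def, smul_mul', IsScalarTower.algebraMap_apply k F Ω,
    AlgEquiv.smul_def γ, algEquiv_algebraMap]

variable {k F E Ω : Type*} [Field k] [Fintype k] [Field F] [Field E] [Field Ω]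
  [Algebra k Ω] [Algebra F Ω] [Algebra E Ω] [Algebra F[X] E] [IsFractionRing F[X] E]
  [Algebra F[X] Ω] [IsScalarTower F[X] E Ω] {L : F[X]} {t : ℕ} {a : E} {P Q : Place F E Ω}

local notation "q" => Fintype.card k
local notation "xΩ" => algebraMap F[X] Ω X

variable (hx : algebraMap F[X] Ω X ∈ rootSpace k L t (algebraMap E Ω a))
include hx

namespace Place

lemma inv_map_eq (hL₀ : L.coeff 0 ≠ 0) (hP : P.v xΩ = P.ρ) :
    (P.v (algebraMap E Ω a))⁻¹ = P.ρ ^ (q ^ t - 1) := by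
  rw [← hP]
  exact (P.map_pow_of_lt_one hL₀ hx (algebraMap_X_ne_zero F E Ω) (hP.trans_lt P.ρ_lt_one)).symm

end Place

variable [Algebra k F] [IsScalarTower k F Ω] [IsScalarTower F F[X] Ω]

namespace Place

lemma algebraMap_mul_X_mem_smallRoots (hdvd : ∀ j ∈ L.support, t ∣ j) (hP : P.v xΩ < 1) {ζ : F}
    (hζ : ζ ^ q ^ t = ζ) : algebraMap F Ω ζ * xΩ ∈ P.smallRoots k L t (algebraMap E Ω a) := by
  refine ⟨(algebraMap_mul_X_mem_rootSpace_iff hx).2 fun j hj => ?_, ?_⟩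
  · obtain ⟨d, rfl⟩ := hdvd j hj
    have hfixed : Function.IsFixedPt (fun c : F => c ^ q ^ t) ζ := hζ
    have := hfixed.iterate d
    rw [pow_iterate, ← pow_mul] at this
    exact Eq.trans this hζ.symm
  · refine (map_mul P.v _ _).trans_lt ?_
    exact (mul_le_of_le_one_left (P.v.nonneg _) (P.map_algebraMap_le_one ζ)).trans_lt hP

lemma residue_pow_ne_of_notMem_sup (hL : L.Monic) (ht : t < L.natDegree)
    (hdvd : ∀ j ∈ L.support, t ∣ j) (hP : P.v xΩ < 1) (hQ : 1 < Q.v xΩ) {w : Ω} {ζ : F}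
    (hw : w ∈ rootSpace k L t (algebraMap E Ω a))
    (hwS : w ∉ P.smallRoots k L t (algebraMap E Ω a) ⊔ Q.smallRoots k L t (algebraMap E Ω a))
    (hζ : Q.IsResidue (w / xΩ) ζ) : ζ ^ q ^ t ≠ ζ := by
  intro hfix
  have hmem := algebraMap_mul_X_mem_smallRoots hx hdvd hP hfix
  have hx₀ := algebraMap_X_ne_zero F E Ω
  have hlt : Q.v (w - algebraMap F Ω ζ * xΩ) < Q.v xΩ := by
    have hres := hζ.sub (Q.isResidue_algebraMap ζ)
    rw [← mul_div_cancel_right₀ (algebraMap F Ω ζ) hx₀, ← sub_div] at hres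
    exact (hres.eq_zero_iff hx₀).1 (sub_self ζ)
  have hsmall : w - algebraMap F Ω ζ * xΩ ∈ Q.smallRoots k L t (algebraMap E Ω a) := by
    rw [← rootSpace_inf_ball (Q.one_lt_of_mem_rootSpace hL ht hx hQ) hL ht hx hQ]
    exact ⟨sub_mem hw hmem.1, hlt⟩
  exact hwS (by simpa using add_mem (Submodule.mem_sup_left hmem) (Submodule.mem_sup_right hsmall))

end Place

variable [Algebra F E] [IsScalarTower F E Ω]

namespace Place

variable (ht₀ : 0 < t) (hL₀ : L.coeff 0 ≠ 0) (hL : L.Monic) (ht : t < L.natDegree)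
include ht₀ hL₀ hL ht

lemma cosetsInOrbits_smallRoots [IsAlgClosed Ω] (hP : P.v xΩ = P.ρ) :
    CosetsInOrbits (Ω ≃ₐ[E] Ω) (rootSpace k L t (algebraMap E Ω a))
      (P.smallRoots k L t (algebraMap E Ω a)) :=
  ⟨smallRoots_le, fun _ hw hwU _ hs => MulAction.orbit_subgroup_subset _ _ <|
    add_mem_orbit_of_mem_smallRoots ht₀ hL₀ hL ht (inv_map_eq hx hL₀ hP)
      (natCard_rootSpace ht hx hL hL₀ ht₀) (isSeparable_of_mem_rootSpace ht hx hL₀ ht₀ hw)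
      hw hwU hs⟩

lemma cosetsInOrbits_smallRoots_sup [IsAlgClosed F] [IsAlgClosed Ω] (hP : P.v xΩ = P.ρ)
    (hQ : Q.v xΩ = Q.ρ⁻¹) (hdvd : ∀ j ∈ L.support, t ∣ j) :
    CosetsInOrbits (Ω ≃ₐ[E] Ω) (rootSpace k L t (algebraMap E Ω a))
      (P.smallRoots k L t (algebraMap E Ω a) ⊔ Q.smallRoots k L t (algebraMap E Ω a)) := by
  have hP₁ : P.v xΩ < 1 := hP.trans_lt P.ρ_lt_one
  have hQ₁ : 1 < Q.v xΩ := hQ ▸ (one_lt_inv₀ Q.ρ_pos).2 Q.ρ_lt_one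
  refine (cosetsInOrbits_smallRoots hx ht₀ hL₀ hL ht hP).sup_of_forall_add_mem_orbit
    smallRoots_le fun w hw hwS u hu => ?_
  obtain ⟨ζ, hζ⟩ := Q.exists_isResidue_div
    (map_le_of_one_lt (Q.one_lt_of_mem_rootSpace hL ht hx hQ₁) hL ht hx hQ₁ hw)
  exact MulAction.orbit_subgroup_subset _ _ <| add_mem_orbit_of_residue_pow_ne ht₀ hL₀ hL ht
    (fun j hj hj₀ => Nat.le_of_dvd (Nat.pos_of_ne_zero hj₀) (hdvd j hj))
    (natCard_rootSpace ht hx hL hL₀ ht₀) (fun y => isSeparable_of_mem_rootSpace ht hx hL₀ ht₀)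
    hx hw (fun γ => algEquiv_algebraMap γ X) hQ hζ
    (residue_pow_ne_of_notMem_sup hx hL ht hdvd hP₁ hQ₁ hw hwS hζ) hu

lemma not_smallRoots_le [IsAlgClosed F] [IsAlgClosure E Ω] (hP : P.v xΩ < 1) (hQ : 1 < Q.v xΩ)
    (hstable : ∀ γ : Ω ≃ₐ[E] Ω, ∀ u ∈ P.smallRoots k L t (algebraMap E Ω a),
      γ u ∈ P.smallRoots k L t (algebraMap E Ω a)) :
    ¬ Q.smallRoots k L t (algebraMap E Ω a) ≤ P.smallRoots k L t (algebraMap E Ω a) := by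
  intro hle
  have : IsAlgClosed Ω := IsAlgClosure.isAlgClosed E
  have hcard := natCard_smallRoots (P := Q) ht₀ hL₀ ht (Q.one_lt_of_mem_rootSpace hL ht hx hQ)
    (natCard_rootSpace ht hx hL hL₀ ht₀) hL
  obtain ⟨u, hu, hu₀⟩ := Submodule.exists_mem_ne_zero_of_ne_bot
    (p := Q.smallRoots k L t (algebraMap E Ω a)) fun hbot => by
      rw [hbot, Nat.card_unique] at hcard
      exact (Nat.one_lt_pow ht₀.ne' Fintype.one_lt_card).ne hcard
  obtain ⟨ζ, rfl⟩ := exists_eq_algebraMap_mul_X hx ht₀ hL₀ hL ht hP hQ hstable (hle hu)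
  have hζ : ζ ≠ 0 := by
    rintro rfl
    simp at hu₀
  have hu₁ := hu.2
  change Q.v _ < 1 at hu₁
  rw [map_mul, Q.map_algebraMap ζ hζ, one_mul] at hu₁
  exact hQ.not_gt hu₁

theorem exists_natCard_lt_two_mul_orbit_of_stable [IsAlgClosed F] [IsAlgClosure E Ω]
    (hP : P.v xΩ = P.ρ) (hQ : Q.v xΩ = Q.ρ⁻¹) (hn : t ∣ L.natDegree → 3 * t ≤ L.natDegree)
    (hnt : L.natDegree - t = 1 ∨ ¬ L.natDegree - t ∣ t)
    (hstable : ∀ γ : Ω ≃ₐ[E] Ω, ∀ u ∈ P.smallRoots k L t (algebraMap E Ω a),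
      γ u ∈ P.smallRoots k L t (algebraMap E Ω a)) :
    ∃ w ∈ rootSpace k L t (algebraMap E Ω a),
      q ^ L.natDegree < 2 * Nat.card (MulAction.orbit (Ω ≃ₐ[E] Ω) w) := by
  have : IsAlgClosed Ω := IsAlgClosure.isAlgClosed E
  have := smulCommClass_algEquiv k F E Ω
  have hP₁ : P.v xΩ < 1 := hP.trans_lt P.ρ_lt_one
  have hQ₁ : 1 < Q.v xΩ := hQ ▸ (one_lt_inv₀ Q.ρ_pos).2 Q.ρ_lt_one
  have hV := natCard_rootSpace (k := k) ht hx hL hL₀ ht₀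
  have hfin : Finite (rootSpace k L t (algebraMap E Ω a)) :=
    Nat.finite_of_card_ne_zero (hV.trans_ne (pow_pos Fintype.card_pos _).ne')
  have ha := inv_map_eq hx hL₀ hP
  have hcardP := natCard_smallRoots ht₀ hL₀ ht (one_lt_of_inv_eq_pow ht₀ ha) hV hL
  have hcardQ := natCard_smallRoots ht₀ hL₀ ht (Q.one_lt_of_mem_rootSpace hL ht hx hQ₁) hV hL
  have hdvd : ∀ j ∈ L.support, t ∣ j := fun j hj =>
    dvd_of_forall_eq_algebraMap_mul_X hx ht₀ hL₀ smallRoots_le hcardP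
      (fun u => exists_eq_algebraMap_mul_X hx ht₀ hL₀ hL ht hP₁ hQ₁ hstable) hj
  have h3t := hn (hdvd _ (natDegree_mem_support_of_nonzero hL.ne_zero))
  rw [← hV]
  refine (cosetsInOrbits_smallRoots_sup hx ht₀ hL₀ hL ht hP hQ hdvd).exists_natCard_lt_two_mul_orbit
    (fun γ w => algEquiv_mem_rootSpace γ) (fun heq => ?_) fun S hPQS hSV hS =>
      eq_rootSpace_of_smallRoots_lt ht₀ hL₀ hL ht ha hV
        (fun y => isSeparable_of_mem_rootSpace ht hx hL₀ ht₀) hnt (fun δ _ => hS δ)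
        ((left_lt_sup.2 (not_smallRoots_le hx ht₀ hL₀ hL ht hP₁ hQ₁ hstable)).trans_le hPQS) hSV
  have : Finite (P.smallRoots k L t (algebraMap E Ω a)) :=
    (Set.toFinite (rootSpace k L t (algebraMap E Ω a) : Set Ω)).subset smallRoots_le
  have : Finite (Q.smallRoots k L t (algebraMap E Ω a)) :=
    (Set.toFinite (rootSpace k L t (algebraMap E Ω a) : Set Ω)).subset smallRoots_le
  have hle := natCard_sup_le (P.smallRoots k L t (algebraMap E Ω a))
    (Q.smallRoots k L t (algebraMap E Ω a))
  rw [heq, hV, hcardP, hcardQ, ← pow_add, Nat.pow_le_pow_iff_right Fintype.one_lt_card] at hle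
  lia

theorem exists_natCard_lt_two_mul_orbit_of_not_stable [IsAlgClosed Ω] (hP : P.v xΩ = P.ρ)
    (hnt : L.natDegree - t = 1 ∨ ¬ L.natDegree - t ∣ t)
    (hstable : ¬ ∀ γ : Ω ≃ₐ[E] Ω, ∀ u ∈ P.smallRoots k L t (algebraMap E Ω a),
      γ u ∈ P.smallRoots k L t (algebraMap E Ω a)) :
    ∃ w ∈ rootSpace k L t (algebraMap E Ω a),
      q ^ L.natDegree < 2 * Nat.card (MulAction.orbit (Ω ≃ₐ[E] Ω) w) := by
  have := smulCommClass_algEquiv k F E Ω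
  have hV := natCard_rootSpace (k := k) ht hx hL hL₀ ht₀
  have hfin : Finite (rootSpace k L t (algebraMap E Ω a)) :=
    Nat.finite_of_card_ne_zero (hV.trans_ne (pow_pos Fintype.card_pos _).ne')
  have ha := inv_map_eq hx hL₀ hP
  rw [← hV]
  refine (cosetsInOrbits_smallRoots hx ht₀ hL₀ hL ht hP).exists_natCard_lt_two_mul_orbit
    (fun γ w => algEquiv_mem_rootSpace γ) (fun heq => ?_) fun S hPS hSV hS =>
      eq_rootSpace_of_smallRoots_lt ht₀ hL₀ hL ht ha hV
        (fun y => isSeparable_of_mem_rootSpace ht hx hL₀ ht₀) hnt (fun δ _ => hS δ)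
        (hPS.lt_of_ne (by rintro rfl; exact hstable hS)) hSV
  obtain ⟨w, hw, hwU⟩ := exists_mem_rootSpace_notMem_smallRoots ht₀ hL₀ ht
    (one_lt_of_inv_eq_pow ht₀ ha) hV
  exact hwU (heq ▸ hw)

end Place

theorem exists_natCard_lt_two_mul_orbit [IsScalarTower F F[X] E] [IsAlgClosed F]
    [IsAlgClosure E Ω] (ht₀ : 0 < t) (hL₀ : L.coeff 0 ≠ 0) (hL : L.Monic)
    (hn : (t ∣ L.natDegree ∧ 3 * t ≤ L.natDegree) ∨
      (¬ t ∣ L.natDegree ∧ 2 * t - 1 ≤ L.natDegree)) :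
    ∃ w ∈ rootSpace k L t (algebraMap E Ω a),
      q ^ L.natDegree < 2 * Nat.card (MulAction.orbit (Ω ≃ₐ[E] Ω) w) := by
  have : IsAlgClosed Ω := IsAlgClosure.isAlgClosed E
  obtain ⟨P, hP⟩ := exists_place_map_X_eq_zpow (F := F) (E := E) (Ω := Ω) one_ne_zero
  obtain ⟨Q, hQ⟩ := exists_place_map_X_eq_zpow (F := F) (E := E) (Ω := Ω)
    (neg_ne_zero.2 one_ne_zero)
  rw [← IsScalarTower.algebraMap_apply, zpow_one] at hP
  rw [← IsScalarTower.algebraMap_apply, zpow_neg_one] at hQ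
  have hnt := sub_eq_one_or_not_sub_dvd ht₀ hn
  have ht := lt_of_dvd_and_le_or_not_dvd_and_le ht₀ hn
  by_cases hstable : ∀ γ : Ω ≃ₐ[E] Ω, ∀ u ∈ P.smallRoots k L t (algebraMap E Ω a),
      γ u ∈ P.smallRoots k L t (algebraMap E Ω a)
  · exact Place.exists_natCard_lt_two_mul_orbit_of_stable hx ht₀ hL₀ hL ht hP hQ (by tauto) hnt
      hstable
  · exact Place.exists_natCard_lt_two_mul_orbit_of_not_stable hx ht₀ hL₀ hL ht hP hnt hstable

end BigOrbit

/-! ### Rational points on the curve -/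

section Factor

variable {E Ω : Type*} [Field E] [Field Ω] [Algebra E Ω]

lemma natCard_orbit_smul {c : E} (hc : c ≠ 0) (y : Ω) :
    Nat.card (MulAction.orbit (Ω ≃ₐ[E] Ω) (c • y)) =
      Nat.card (MulAction.orbit (Ω ≃ₐ[E] Ω) y) := by
  have hstab : MulAction.stabilizer (Ω ≃ₐ[E] Ω) (c • y) = MulAction.stabilizer (Ω ≃ₐ[E] Ω) y := by
    ext γ
    rw [MulAction.mem_stabilizer_iff, MulAction.mem_stabilizer_iff, AlgEquiv.smul_def, map_smul]
    exact (smul_right_injective Ω hc).eq_iff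
  rw [Nat.card_coe_set_eq, Nat.card_coe_set_eq, ← MulAction.index_stabilizer, hstab,
    MulAction.index_stabilizer]

lemma natCard_orbit_le_natDegree {R : Type*} [CommRing R] [Algebra R E] [Algebra R Ω]
    [IsScalarTower R E Ω] {g : R[X]} (hg : g.Monic) {y : Ω} (hy : aeval y g = 0) :
    Nat.card (MulAction.orbit (Ω ≃ₐ[E] Ω) y) ≤ g.natDegree := by
  have hsub : MulAction.orbit (Ω ≃ₐ[E] Ω) y ⊆ g.rootSet Ω := by
    rintro _ ⟨γ, rfl⟩
    refine mem_rootSet'.2 ⟨(hg.map (algebraMap R Ω)).ne_zero, ?_⟩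
    have h := aeval_algHom_apply ((γ : Ω →ₐ[E] Ω).restrictScalars R) y g
    rwa [hy, map_zero] at h
  exact (Nat.card_mono (rootSet_finite g Ω) hsub).trans (ncard_rootSet_le g Ω)

variable {k F : Type*} [Field k] [Fintype k] [Field F] [Algebra k Ω] [Algebra F Ω]
  [Algebra F[X] E] [IsFractionRing F[X] E] [Algebra F[X] Ω] [IsScalarTower F[X] E Ω]
  [IsScalarTower F F[X] Ω] {L : F[X]} {t : ℕ}

local notation "q" => Fintype.card k

variable (E L t) in
lemma exists_algebraMap_X_mem_rootSpace :
    ∃ a : E, algebraMap F[X] Ω X ∈ rootSpace k L t (algebraMap E Ω a) := by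
  refine ⟨algebraMap F[X] E (qPoly k L) / algebraMap F[X] E X ^ q ^ t, ?_⟩
  have hx₀ := algebraMap_X_ne_zero F E Ω
  rw [mem_rootSpace, map_div₀, map_pow, ← IsScalarTower.algebraMap_apply,
    ← IsScalarTower.algebraMap_apply, div_mul_cancel₀ _ (pow_ne_zero _ hx₀), ← aeval_qPoly,
    aeval_algebraMap_apply, aeval_X_left_apply]

theorem exists_irreducible_dvd_of_mem_rootSpace {a : E}
    (hx : algebraMap F[X] Ω X ∈ rootSpace k L t (algebraMap E Ω a)) (hL : L.Monic)
    (ht : t < L.natDegree) {w : Ω} (hw : w ∈ rootSpace k L t (algebraMap E Ω a)) :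
    ∃ H : F[X][X], H.Monic ∧ Irreducible H ∧ H ∣ scatteredCurve k L t ∧
      Nat.card (MulAction.orbit (Ω ≃ₐ[E] Ω) w) ≤ H.natDegree := by
  have hint := isIntegral_X_mul_of_mem_rootSpace ht hx hL hw
  have : Module.IsTorsionFree F[X] Ω := by
    rw [Module.isTorsionFree_iff_algebraMap_injective, IsScalarTower.algebraMap_eq F[X] E Ω]
    exact (algebraMap E Ω).injective.comp (IsFractionRing.injective F[X] E)
  refine ⟨_, minpoly.monic hint, minpoly.irreducible hint, minpoly.isIntegrallyClosed_dvd hint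
    ((mem_rootSpace_iff_aeval_scatteredCurve ht hx).1 hw), ?_⟩
  have hX : algebraMap F[X] E X ≠ 0 :=
    (map_ne_zero_iff _ (IsFractionRing.injective F[X] E)).2 X_ne_zero
  rw [← natCard_orbit_smul hX, algebraMap_smul, Algebra.smul_def]
  exact natCard_orbit_le_natDegree (minpoly.monic hint) (minpoly.aeval _ _)

end Factor

section Curve

variable {k F : Type*} [Fintype k] [Field F] {L : F[X]} {t : ℕ}

theorem exists_irreducible_dvd_scatteredCurve [Field k] [Algebra k F] [IsAlgClosed F] (ht₀ : 0 < t)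
    (hL₀ : L.coeff 0 ≠ 0) (hL : L.Monic)
    (hn : (t ∣ L.natDegree ∧ 3 * t ≤ L.natDegree) ∨
      (¬ t ∣ L.natDegree ∧ 2 * t - 1 ≤ L.natDegree)) :
    ∃ H : F[X][X], H.Monic ∧ Irreducible H ∧ H ∣ scatteredCurve k L t ∧
      (scatteredCurve k L t).natDegree < 2 * H.natDegree := by
  have ht := lt_of_dvd_and_le_or_not_dvd_and_le ht₀ hn
  obtain ⟨a, hx⟩ := exists_algebraMap_X_mem_rootSpace (k := k) (FractionRing F[X])
    (Ω := AlgebraicClosure (FractionRing F[X])) L t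
  obtain ⟨w, hw, hlt⟩ := exists_natCard_lt_two_mul_orbit hx ht₀ hL₀ hL hn
  obtain ⟨H, hH, hirr, hdvd, hle⟩ := exists_irreducible_dvd_of_mem_rootSpace hx hL ht hw
  refine ⟨H, hH, hirr, hdvd, ?_⟩
  rw [natDegree_scatteredCurve hL ht]
  lia

lemma map_scatteredCurve {σ : F →+* F} (hσ : ∀ j, σ (L.coeff j) = L.coeff j) :
    (scatteredCurve k L t).map (mapRingHom σ) = scatteredCurve k L t := by
  simp [scatteredCurve, qPoly, Polynomial.map_sum, hσ]

lemma map_eq_self_of_dvd_of_natDegree_lt {R : Type*} [CommRing R] [IsDomain R]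
    [UniqueFactorizationMonoid R] {Φ H : R[X]} (e : R ≃+* R) (hΦe : Φ.map (e : R →+* R) = Φ)
    (hΦ : Φ.Monic) (hH : H.Monic) (hirr : Irreducible H) (hdvd : H ∣ Φ)
    (hdeg : Φ.natDegree < 2 * H.natDegree) : H.map (e : R →+* R) = H := by
  have hHe := hH.map (e : R →+* R)
  have hirr' : Irreducible (H.map (e : R →+* R)) :=
    (MulEquiv.irreducible_iff (mapEquiv e)).2 hirr
  obtain ⟨g, rfl⟩ : H.map (e : R →+* R) ∣ Φ := hΦe ▸ Polynomial.map_dvd (e : R →+* R) hdvd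
  rcases hirr.prime.dvd_or_dvd hdvd with h | h
  · exact (eq_of_monic_of_associated hH hHe (hirr.associated_of_dvd hirr' h)).symm
  · have hg := hHe.of_mul_monic_left hΦ
    have hle := natDegree_le_of_dvd h hg.ne_zero
    rw [hHe.natDegree_mul hg, hH.natDegree_map] at hdeg
    lia

lemma map_iterateFrobenius_eq_self [IsAlgClosed F] {p : ℕ} [Fact p.Prime] [CharP F p]
    (hΦ : (scatteredCurve k L t).Monic) {H : F[X][X]} (hH : H.Monic) (hirr : Irreducible H)
    (hdvd : H ∣ scatteredCurve k L t) (hdeg : (scatteredCurve k L t).natDegree < 2 * H.natDegree)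
    {n : ℕ} (hLn : ∀ j, L.coeff j ^ p ^ n = L.coeff j) :
    H.map (mapRingHom (iterateFrobenius F p n)) = H :=
  map_eq_self_of_dvd_of_natDegree_lt (mapEquiv (iterateFrobeniusEquiv F p n))
    (map_scatteredCurve (σ := iterateFrobenius F p n) hLn) hΦ hH hirr hdvd hdeg

lemma finite_setOf_evalEval_eq_zero {H : F[X][X]} (hH : H.Monic) (hirr : Irreducible H)
    (hdeg : H.natDegree ≠ 1) {S : Set F} (hS : S.Finite) :
    {v : F × F | H.evalEval v.1 v.2 = 0 ∧ (v.1 = 0 ∨ ∃ l ∈ S, v.2 = l * v.1 ^ 2)}.Finite := by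
  have hvert : {y | (H.map (evalRingHom 0)).IsRoot y}.Finite :=
    finite_setOfPred_isRoot (hH.map _).ne_zero
  have hconic (l : F) : {z | (H.eval (C l * X ^ 2)).IsRoot z}.Finite :=
    finite_setOfPred_isRoot (hirr.not_isRoot_of_natDegree_ne_one hdeg)
  refine ((hvert.image fun y => (0, y)).union
    (hS.biUnion fun l _ => (hconic l).image fun z => (z, l * z ^ 2))).subset ?_
  rintro ⟨z, y⟩ ⟨hzy, hz | ⟨l, hl, hy⟩⟩
  · obtain rfl : z = 0 := hz
    exact .inl ⟨y, (map_evalRingHom_eval 0 y H).trans hzy, rfl⟩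
  · obtain rfl : y = l * z ^ 2 := hy
    refine .inr (Set.mem_biUnion hl ⟨z, ?_, rfl⟩)
    rw [Set.mem_ofPred_eq, IsRoot, ← coe_evalRingHom, ← eval₂_at_apply, ← eval_map]
    simpa [map_evalRingHom_eval] using hzy

end Curve

section RationalPoints

variable {k F : Type*} [Field k] [Fintype k] [Field F] [Algebra k F] {L : F[X]} {t : ℕ}

local notation "q" => Fintype.card k

lemma qMap_mul_eq_of_evalEval_eq_zero {H : F[X][X]} (hdvd : H ∣ scatteredCurve k L t)
    (ht : t < L.natDegree) {x z : F} (hx : x ≠ 0) (hxz : H.evalEval x z = 0) :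
    qMap k F L x * (z / x) ^ q ^ t = qMap k F L (z / x) * x ^ q ^ t := by
  have hcurve : aevalAeval x (x * (z / x)) (scatteredCurve k L t) = 0 := by
    rw [mul_div_cancel₀ _ hx, coe_aevalAeval_eq_evalEval]
    exact zero_dvd_iff.1 (hxz ▸ evalEval_dvd x z hdvd)
  have h := aevalAeval_scatteredCurve_mul (k := k) (L := L) ht x (z / x)
  rw [hcurve, zero_mul] at h
  exact (sub_eq_zero.1 ((mul_eq_zero_iff_left (pow_ne_zero _ hx)).1 h.symm)).symm

variable [IsAlgClosed F] {p : ℕ} [Fact p.Prime] [CharP F p]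

variable (k p) in
theorem exists_forall_ge_exists_qMap_mul_eq (ht₀ : 0 < t) (hL₀ : L.coeff 0 ≠ 0) (hL : L.Monic)
    (hn : (t ∣ L.natDegree ∧ 3 * t ≤ L.natDegree) ∨
      (¬ t ∣ L.natDegree ∧ 2 * t - 1 ≤ L.natDegree)) :
    ∃ n₀, ∀ n ≥ n₀, (∀ j, L.coeff j ^ p ^ n = L.coeff j) →
      ∃ x y : F, x ≠ 0 ∧ y ≠ 0 ∧ x ^ p ^ n = x ∧ y ^ p ^ n = y ∧
        qMap k F L x * y ^ q ^ t = qMap k F L y * x ^ q ^ t ∧ (y / x) ^ q ≠ y / x := by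
  have ht := lt_of_dvd_and_le_or_not_dvd_and_le ht₀ hn
  obtain ⟨H, hH, hirr, hdvd, hdeg⟩ := exists_irreducible_dvd_scatteredCurve (k := k) ht₀ hL₀ hL hn
  have hH1 : 1 < H.natDegree := by
    have : 1 < q ^ L.natDegree := Nat.one_lt_pow (by lia) Fintype.one_lt_card
    rw [natDegree_scatteredCurve hL ht] at hdeg
    lia
  have hbad := finite_setOf_evalEval_eq_zero hH hirr hH1.ne'
    (finite_setOf_pow_eq_self (F := F) (Fintype.one_lt_card (α := k)))
  have hsep : ∀ x ∉ ({0} : Finset F), (H.map (evalRingHom x)).Separable := fun x hx =>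
    (separable_map_scatteredCurve hL₀ ht₀ (by simpa using hx)).of_dvd (Polynomial.map_dvd _ hdvd)
  obtain ⟨n₀, h⟩ := exists_finset_rational_points (p := p) hH (by lia) hirr hsep
    (hbad.toFinset.card + 1)
  refine ⟨n₀, fun n hn₀ hLn => ?_⟩
  obtain ⟨P, hP, hPmem⟩ := h n hn₀
    (map_iterateFrobenius_eq_self (monic_scatteredCurve hL ht) hH hirr hdvd hdeg hLn)
  obtain ⟨⟨x, z⟩, hxzP, hxz⟩ := Finset.exists_mem_notMem_of_card_lt_card hP
  obtain ⟨hxn, hzn, hroot⟩ := hPmem _ hxzP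
  simp only [Set.Finite.mem_toFinset, Set.mem_ofPred_eq, hroot, true_and, not_or, not_exists,
    not_and] at hxz
  obtain ⟨hx, hline⟩ := hxz
  have hz : z ≠ 0 := by simpa using hline 0 (zero_pow Fintype.card_ne_zero)
  refine ⟨x, z / x, hx, div_ne_zero hz hx, hxn, by rw [div_pow, hxn, hzn],
    qMap_mul_eq_of_evalEval_eq_zero hdvd ht hx hroot, fun h => hline _ h ?_⟩
  field_simp

end RationalPoints

section QAssociate

variable {F : Type*} [Field F] {M : ℕ} (A : Fin (M + 1) → F) (ks : Fin (M + 1) → ℕ)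

/-- The conventional `q`-associate `∑ A_i X ^ k_i` of the `q`-polynomial
`∑ A_i X ^ (q ^ k_i)`. -/
noncomputable def qAssociate : F[X] := ∑ i, monomial (ks i) (A i)

variable {A ks}

lemma coeff_qAssociate (hks : ks.Injective) (i : Fin (M + 1)) :
    (qAssociate A ks).coeff (ks i) = A i := by
  simp [qAssociate, coeff_monomial, hks.eq_iff]

lemma coeff_qAssociate_eq_zero {j : ℕ} (hj : j ∉ Set.range ks) :
    (qAssociate A ks).coeff j = 0 := by
  rw [qAssociate, finsetSum_coeff]
  exact Finset.sum_eq_zero fun i _ => coeff_monomial_of_ne _ fun h => hj ⟨i, h.symm⟩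

lemma coeff_qAssociate_pow (hks : ks.Injective) {Q : ℕ} (hQ : Q ≠ 0) (hA : ∀ i, A i ^ Q = A i)
    (j : ℕ) : (qAssociate A ks).coeff j ^ Q = (qAssociate A ks).coeff j := by
  by_cases hj : j ∈ Set.range ks
  · obtain ⟨i, rfl⟩ := hj
    rw [coeff_qAssociate hks, hA]
  · rw [coeff_qAssociate_eq_zero hj, zero_pow hQ]

lemma natDegree_qAssociate (hks : StrictMono ks) (hA : A (Fin.last M) ≠ 0) :
    (qAssociate A ks).natDegree = ks (Fin.last M) := by
  refine natDegree_eq_of_le_of_coeff_ne_zero (natDegree_sum_le_of_forall_le _ _ fun i _ =>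
    (natDegree_monomial_le _).trans (hks.monotone (Fin.le_last i))) ?_
  rwa [coeff_qAssociate hks.injective]

lemma monic_qAssociate (hks : StrictMono ks) (hA : A (Fin.last M) = 1) :
    (qAssociate A ks).Monic := by
  rw [Monic, leadingCoeff, natDegree_qAssociate hks (hA ▸ one_ne_zero),
    coeff_qAssociate hks.injective, hA]

lemma qMap_qAssociate (k : Type*) [Field k] [Fintype k] [Algebra k F] (hks : ks.Injective) (x : F) :
    qMap k F (qAssociate A ks) x = ∑ i, A i * x ^ Fintype.card k ^ ks i := by
  have hsupp : (qAssociate A ks).support ⊆ Finset.univ.image ks := fun j hj => by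
    by_contra h
    exact mem_support_iff.1 hj (coeff_qAssociate_eq_zero (by simpa using h))
  rw [qMap_apply, Finset.sum_subset hsupp fun j _ hj => by simp [notMem_support_iff.1 hj],
    Finset.sum_image hks.injOn]
  simp [coeff_qAssociate hks]

end QAssociate

theorem exists_forall_ge_not_scattered {k F : Type*} [Field k] [Fintype k] [Field F]
    [IsAlgClosed F] [Algebra k F] {p e r t M : ℕ} [Fact p.Prime] [CharP F p] (he : 0 < e)
    (hcard : Fintype.card k = p ^ e) (hr : 0 < r) (ht : 0 < t) {A : Fin (M + 1) → F}
    {ks : Fin (M + 1) → ℕ} (hks₀ : ks 0 = 0) (hmono : StrictMono ks) (hA : A 0 ≠ 0)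
    (hAM : A (Fin.last M) = 1) (hcoef : ∀ i, A i ^ Fintype.card k ^ r = A i)
    (hyp : (t ∣ ks (Fin.last M) ∧ 3 * t ≤ ks (Fin.last M)) ∨
      (¬ t ∣ ks (Fin.last M) ∧ 2 * t - 1 ≤ ks (Fin.last M))) :
    ∃ m₀, ∀ m ≥ m₀, ∃ x y : F, x ≠ 0 ∧ y ≠ 0 ∧ x ^ Fintype.card k ^ (r * m) = x ∧
      y ^ Fintype.card k ^ (r * m) = y ∧
      (∑ i, A i * x ^ Fintype.card k ^ ks i) * y ^ Fintype.card k ^ t =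
        (∑ i, A i * y ^ Fintype.card k ^ ks i) * x ^ Fintype.card k ^ t ∧
      (y / x) ^ Fintype.card k ≠ y / x := by
  have hinj := hmono.injective
  rw [← natDegree_qAssociate hmono (hAM ▸ one_ne_zero)] at hyp
  obtain ⟨n₀, h⟩ := exists_forall_ge_exists_qMap_mul_eq k p ht
    (by rwa [← hks₀, coeff_qAssociate hinj]) (monic_qAssociate hmono hAM) hyp
  have hpow (m : ℕ) : p ^ (e * (r * m)) = Fintype.card k ^ (r * m) := by rw [hcard, ← pow_mul]
  simp only [qMap_qAssociate k hinj] at h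
  refine ⟨n₀, fun m hm => ?_⟩
  have hfix (i : Fin (M + 1)) : A i ^ Fintype.card k ^ (r * m) = A i := by
    have : (fun a => a ^ Fintype.card k ^ r)^[m] (A i) = A i :=
      Function.IsFixedPt.iterate (hcoef i) m
    rwa [pow_iterate, ← pow_mul] at this
  have hle : n₀ ≤ e * (r * m) :=
    hm.le.trans ((Nat.le_mul_of_pos_left _ hr).trans (Nat.le_mul_of_pos_left _ he))
  specialize h _ hle
  rw [hpow] at h
  exact h (coeff_qAssociate_pow hinj (pow_ne_zero _ Fintype.card_ne_zero) hfix)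

end ScatteredPolynomial


theorem stmt_4_general {F : Type*} [Field F] [IsAlgClosed F] (p e : ℕ) [Fact p.Prime] [CharP F p]
    (he : 0 < e) (q : ℕ) (hq : q = p ^ e) (r : ℕ) (hr : 1 ≤ r) (t : ℕ) (ht : 1 ≤ t)
    (M : ℕ) (A : Fin (M + 1) → F) (ks : Fin (M + 1) → ℕ)
    (hks0 : ks 0 = 0) (hmono : StrictMono ks) (hA : A 0 ≠ 0) (hAM : A (Fin.last M) = 1)
    (hcoef : ∀ i, (A i) ^ q ^ r = A i)
    (hyp : (t ∣ ks (Fin.last M) ∧ 3 * t ≤ ks (Fin.last M)) ∨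
      (¬ t ∣ ks (Fin.last M) ∧ 2 * t - 1 ≤ ks (Fin.last M))) :
    {m : ℕ | 0 < m ∧ ∀ x y : F, x ≠ 0 → y ≠ 0 → x ^ q ^ (r * m) = x → y ^ q ^ (r * m) = y →
      (∑ i, A i * x ^ q ^ ks i) * y ^ q ^ t = (∑ i, A i * y ^ q ^ ks i) * x ^ q ^ t →
      (y / x) ^ q = y / x}.Finite := by
  let := Fintype.ofFinite (GaloisField p e)
  let := ZMod.algebra F p
  let := (IsAlgClosed.lift : GaloisField p e →ₐ[ZMod p] F).toRingHom.toAlgebra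
  have hcard : Fintype.card (GaloisField p e) = p ^ e := by
    rw [← Nat.card_eq_fintype_card, GaloisField.card p e he.ne']
  obtain rfl : q = Fintype.card (GaloisField p e) := hq.trans hcard.symm
  obtain ⟨m₀, h⟩ := ScatteredPolynomial.exists_forall_ge_not_scattered he hcard hr ht hks0 hmono hA
    hAM hcoef hyp
  refine (Set.finite_lt_nat m₀).subset fun m ⟨_, hscat⟩ => ?_
  by_contra hm
  obtain ⟨x, y, hx, hy, hxm, hym, heq, hne⟩ := h m (not_lt.1 hm)
  exact hne (hscat x y hx hy hxm hym heq)

/-- Let `q = p^e` be a prime power, `t ≥ 2`, and let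
`f(X) = ∑_{i=0}^{M} A_i X^{q^{k_i}}` be a `q`-polynomial with coefficients in `F_{q^r}`
(realized inside an algebraic closure `K` of `F_p` as `{c : c^{q^r} = c}`), where
`0 = k_0 < k_1 < ⋯ < k_M`, all `A_i ≠ 0`, `A_M = 1`, `k_i ≠ t` for all `i`, and
`k_i ≥ t` for all `i ≥ 2`.  If either `t ∣ k_M` and `k_M ≥ 3t`, or `t ∤ k_M` and
`k_M ≥ 2t − 1`, then `f` is scattered of index `t` over `F_{q^{rm}}` for only finitely
many `m ≥ 1`, i.e. `f` is not exceptional scattered of index `t`. -/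
theorem stmt_4 (p e : ℕ) [Fact p.Prime] (he : 0 < e) (q : ℕ) (hq : q = p ^ e)
    (r : ℕ) (hr : 1 ≤ r) (t : ℕ) (ht : 2 ≤ t)
    (M : ℕ) (A : Fin (M + 1) → AlgebraicClosure (ZMod p))
    (ks : Fin (M + 1) → ℕ)
    (hks0 : ks 0 = 0) (hmono : StrictMono ks)
    (hA : ∀ i, A i ≠ 0) (hAM : A (Fin.last M) = 1)
    (hcoef : ∀ i, (A i) ^ q ^ r = A i)
    (hkt : ∀ i, ks i ≠ t)
    (hkt2 : ∀ i : Fin (M + 1), 2 ≤ (i : ℕ) → t ≤ ks i)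
    (hyp : (t ∣ ks (Fin.last M) ∧ 3 * t ≤ ks (Fin.last M)) ∨
           (¬ t ∣ ks (Fin.last M) ∧ 2 * t - 1 ≤ ks (Fin.last M))) :
    {m : ℕ | 0 < m ∧ ∀ x y : AlgebraicClosure (ZMod p),
        x ≠ 0 → y ≠ 0 → x ^ q ^ (r * m) = x → y ^ q ^ (r * m) = y →
        (∑ i, A i * x ^ q ^ ks i) * y ^ q ^ t =
          (∑ i, A i * y ^ q ^ ks i) * x ^ q ^ t →
        (y / x) ^ q = y / x}.Finite :=
  stmt_4_general p e he q hq r hr t (one_le_two.trans ht) M A ks hks0 hmono (hA 0) hAM hcoef hyp
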